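/- arXiv:1308.5961 — 5 statements merged into one kernel-verified Lean document; each statement's English description precedes it below -/
import Mathlib

section
/- Let ρ be a density matrix and σ a positive semi-definite matrix on a finite-dimensional complex Hilbert space with supp ρ = supp σ. Then the quantum Rényi divergence D_α(ρ||σ) converges, as α → 0 (through α ∈ (0,1)), to the 0-relative Rényi entropy D̃_0(ρ||σ) = −log tr(Π_ρ σ). -/
/-!
Let `Π` be the projection onto the common support of `ρ` and `σ`. Since `ρ` is positive definite on
its support, `c Π ≤ ρ ≤ C Π` for some `c, C > 0`. Conjugating by `σ ^ s`, `s = (1 - α) / (2α)`, gives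
`c σ ^ (2s) ≤ σ ^ s ρ σ ^ s ≤ C σ ^ (2s)`, and operator monotonicity of `x ↦ x ^ α` on `[0, ∞)` for
`α ∈ (0, 1)` yields, as `2sα = 1 - α`,
`c ^ α tr σ ^ (1 - α) ≤ tr (σ ^ s ρ σ ^ s) ^ α ≤ C ^ α tr σ ^ (1 - α)`.
Both bounds tend to `tr σ = tr (Π σ)` as `α → 0`, and this number is positive because `σ ≠ 0`, so
the logarithm is continuous there.

The comparison `c Π ≤ ρ ≤ C Π` is `exists_smul_suppProj_le`, the equality of the two support
projections is `suppProj_eq_of_msupp_eq`, and the monotonicity of the trace of a power is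
`trace_mpow_mono`.
-/

open Matrix Filter ComplexOrder

/-- Real power with the convention `0 ^ t = 0` for every `t` (powers taken on the support). -/
noncomputable def rpow0 (x t : ℝ) : ℝ := if x = 0 then 0 else Real.rpow x t

/-- Power of a positive semi-definite (more generally, Hermitian) matrix via the functional
calculus, with the convention `0 ^ t = 0` on the kernel (i.e. powers are taken on the support).
Junk value `0` if the matrix is not Hermitian. -/
noncomputable def mpow {m : ℕ} (M : Matrix (Fin m) (Fin m) ℂ) (t : ℝ) :
    Matrix (Fin m) (Fin m) ℂ :=
  if hM : M.IsHermitian then hM.cfc (fun x => rpow0 x t) else 0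

/-- The orthogonal projection onto the support of a positive semi-definite (more generally,
Hermitian) matrix, via the functional calculus. Junk value `0` if the matrix is not Hermitian. -/
noncomputable def suppProj {m : ℕ} (M : Matrix (Fin m) (Fin m) ℂ) :
    Matrix (Fin m) (Fin m) ℂ :=
  if hM : M.IsHermitian then hM.cfc (fun x => if x = 0 then 0 else 1) else 0

/-- The support (column space) of a matrix. -/
noncomputable def msupp {m : ℕ} (M : Matrix (Fin m) (Fin m) ℂ) : Submodule ℂ (Fin m → ℂ) :=
  LinearMap.range M.mulVecLin


/-- The quantum Rényi divergence `D_α(ρ‖σ)` for `α ∈ (0,1)`. -/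
noncomputable def renyiDiv {n : ℕ} (ρ σ : Matrix (Fin n) (Fin n) ℂ) (α : ℝ) : ℝ :=
  (α - 1)⁻¹ * Real.log
    ((mpow (mpow σ ((1 - α) / (2 * α)) * ρ * mpow σ ((1 - α) / (2 * α))) α).trace.re)

/-- The `0`-relative Rényi entropy `D̃₀(ρ‖σ) = - log tr(Π_ρ σ)`. -/
noncomputable def relRenyi0 {n : ℕ} (ρ σ : Matrix (Fin n) (Fin n) ℂ) : ℝ :=
  - Real.log ((suppProj ρ * σ).trace.re)

namespace RenyiLimit

open scoped MatrixOrder Matrix.Norms.L2Operator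

variable {n : ℕ}

lemma mpow_eq_cfc {M : Matrix (Fin n) (Fin n) ℂ} (hM : M.IsHermitian) (t : ℝ) :
    mpow M t = cfc (fun x => rpow0 x t) M := by
  rw [mpow, dif_pos hM, hM.cfc_eq]

lemma suppProj_eq_cfc {M : Matrix (Fin n) (Fin n) ℂ} (hM : M.IsHermitian) :
    suppProj M = cfc (fun x : ℝ => if x = 0 then (0 : ℝ) else 1) M := by
  rw [suppProj, dif_pos hM, hM.cfc_eq]

/-- The spectrum of a matrix is finite, so every function is admissible in the continuous
functional calculus. -/
lemma continuousOn_spectrum (M : Matrix (Fin n) (Fin n) ℂ) (f : ℝ → ℝ) :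
    ContinuousOn f (spectrum ℝ M) :=
  (Matrix.finite_real_spectrum (A := M)).continuousOn f

lemma isHermitian_cfc (M : Matrix (Fin n) (Fin n) ℂ) (f : ℝ → ℝ) : (cfc f M).IsHermitian :=
  cfc_predicate (R := ℝ) (p := IsSelfAdjoint) f M

lemma trace_cfc_re {M : Matrix (Fin n) (Fin n) ℂ} (hM : M.IsHermitian) (f : ℝ → ℝ) :
    (cfc f M).trace.re = ∑ i, f (hM.eigenvalues i) := by
  rw [hM.cfc_eq, IsHermitian.cfc, Unitary.conjStarAlgAut_apply, Matrix.trace_mul_comm, ← mul_assoc]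
  simp [Matrix.trace]

lemma spectrum_nonneg_of_posSemidef {M : Matrix (Fin n) (Fin n) ℂ} (hM : M.PosSemidef) {x : ℝ}
    (hx : x ∈ spectrum ℝ M) : 0 ≤ x := by
  rw [hM.1.spectrum_real_eq_range_eigenvalues] at hx
  obtain ⟨i, rfl⟩ := hx
  exact hM.eigenvalues_nonneg i

lemma mpow_eq_rpow {M : Matrix (Fin n) (Fin n) ℂ} (hM : M.PosSemidef) {t : ℝ} (ht : 0 < t) :
    mpow M t = M ^ t := by
  rw [mpow_eq_cfc hM.1, CFC.rpow_eq_cfc_real (ha := hM.nonneg)]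
  refine cfc_congr fun x _ => ?_
  by_cases h : x = 0
  · simp [rpow0, h, ht.ne']
  · simp [rpow0, h]

/-- Operator monotonicity of `x ↦ x ^ α`, `α ∈ (0, 1)`, after taking traces. -/
lemma trace_mpow_mono {A B : Matrix (Fin n) (Fin n) ℂ} (hA : A.PosSemidef) (hB : B.PosSemidef)
    (hAB : A ≤ B) {α : ℝ} (h0 : 0 < α) (h1 : α < 1) :
    (mpow A α).trace.re ≤ (mpow B α).trace.re := by
  have h : A ^ α ≤ B ^ α := CFC.rpow_le_rpow ⟨h0.le, h1.le⟩ hAB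
  rw [mpow_eq_rpow hA h0, mpow_eq_rpow hB h0]
  have h2 := (Matrix.le_iff.mp h).trace_nonneg
  rw [Matrix.trace_sub, sub_nonneg] at h2
  exact (Complex.le_def.mp h2).1

/-- A positive semi-definite matrix is comparable, in both directions, with its support
projection. -/
lemma exists_smul_suppProj_le {ρ : Matrix (Fin n) (Fin n) ℂ} (hρ : ρ.PosSemidef) :
    ∃ c C : ℝ, 0 < c ∧ 0 < C ∧ c • suppProj ρ ≤ ρ ∧ ρ ≤ C • suppProj ρ := by
  obtain ⟨c, hc, hc0⟩ : ∃ c : ℝ, (∀ i, hρ.1.eigenvalues i ≠ 0 → c ≤ hρ.1.eigenvalues i) ∧ 0 < c := by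
    have h : ∀ᶠ c : ℝ in nhdsWithin 0 (Set.Ioi 0),
        ∀ i, hρ.1.eigenvalues i ≠ 0 → c ≤ hρ.1.eigenvalues i := by
      refine eventually_all.2 fun i => ?_
      by_cases hi : hρ.1.eigenvalues i = 0
      · simp [hi]
      · have hpos := (hρ.eigenvalues_nonneg i).lt_of_ne' hi
        filter_upwards [nhdsWithin_le_nhds (eventually_le_nhds hpos)] with c hc _ using hc
    exact (h.and self_mem_nhdsWithin).exists
  obtain ⟨C, hC, hC0⟩ : ∃ C : ℝ, (∀ i, hρ.1.eigenvalues i ≤ C) ∧ 0 < C :=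
    ((eventually_all.2 fun i => eventually_ge_atTop (hρ.1.eigenvalues i)).and
      (eventually_gt_atTop 0)).exists
  have hsa : IsSelfAdjoint ρ := hρ.1
  have hid : cfc (fun x : ℝ => x) ρ = ρ := cfc_id' ℝ ρ
  refine ⟨c, C, hc0, hC0, ?_, ?_⟩
  · rw [suppProj_eq_cfc hρ.1, ← cfc_smul (S := ℝ) c _ ρ (continuousOn_spectrum _ _)]
    conv_rhs => rw [← hid]
    refine cfc_mono (fun x hx => ?_) (continuousOn_spectrum _ _) (continuousOn_spectrum _ _)
    rw [hρ.1.spectrum_real_eq_range_eigenvalues] at hx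
    obtain ⟨i, rfl⟩ := hx
    by_cases hi : hρ.1.eigenvalues i = 0
    · simp [hi]
    · simpa [hi] using hc i hi
  · rw [suppProj_eq_cfc hρ.1, ← cfc_smul (S := ℝ) C _ ρ (continuousOn_spectrum _ _)]
    conv_lhs => rw [← hid]
    refine cfc_mono (fun x hx => ?_) (continuousOn_spectrum _ _) (continuousOn_spectrum _ _)
    rw [hρ.1.spectrum_real_eq_range_eigenvalues] at hx
    obtain ⟨i, rfl⟩ := hx
    by_cases hi : hρ.1.eigenvalues i = 0
    · simp [hi]
    · simpa [hi] using hC i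

lemma suppProj_mul_self {M : Matrix (Fin n) (Fin n) ℂ} (hM : M.IsHermitian) :
    suppProj M * M = M := by
  have hsa : IsSelfAdjoint M := hM
  have hid : cfc (fun x : ℝ => x) M = M := cfc_id' ℝ M
  rw [suppProj_eq_cfc hM]
  nth_rewrite 2 3 [← hid]
  rw [← cfc_mul _ _ M (continuousOn_spectrum _ _) (continuousOn_spectrum _ _)]
  refine cfc_congr fun x _ => ?_
  by_cases h : x = 0 <;> simp [h]

/-- The support projection is `M` times its pseudo-inverse, so its range lies in that of `M`. -/
lemma suppProj_eq_mul {M : Matrix (Fin n) (Fin n) ℂ} (hM : M.IsHermitian) :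
    suppProj M = M * cfc (fun x : ℝ => x⁻¹) M := by
  have hsa : IsSelfAdjoint M := hM
  have hid : cfc (fun x : ℝ => x) M = M := cfc_id' ℝ M
  rw [suppProj_eq_cfc hM]
  nth_rewrite 2 [← hid]
  rw [← cfc_mul _ _ M (continuousOn_spectrum _ _) (continuousOn_spectrum _ _)]
  refine cfc_congr fun x _ => ?_
  by_cases h : x = 0 <;> simp [h]

lemma exists_eq_mul_of_msupp_le {A B : Matrix (Fin n) (Fin n) ℂ} (h : msupp B ≤ msupp A) :
    ∃ X, B = A * X := by
  have h1 : ∀ j, ∃ x : Fin n → ℂ, A *ᵥ x = B.col j := fun j => by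
    have : B.col j ∈ msupp A := h ⟨Pi.single j 1, by simp⟩
    exact this
  choose x hx using h1
  refine ⟨Matrix.of fun i j => x j i, ?_⟩
  ext i j
  have := congrFun (hx j) i
  simp only [Matrix.col_apply] at this
  rw [← this]
  rfl

lemma suppProj_mul_suppProj {A B : Matrix (Fin n) (Fin n) ℂ} (hA : A.IsHermitian)
    (hB : B.IsHermitian) (h : msupp B ≤ msupp A) : suppProj A * suppProj B = suppProj B := by
  obtain ⟨X, hX⟩ := exists_eq_mul_of_msupp_le h
  rw [suppProj_eq_mul hB]
  conv_lhs => rw [← mul_assoc]; enter [1, 2]; rw [hX]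
  rw [← mul_assoc, suppProj_mul_self hA, ← hX]

lemma suppProj_isHermitian {M : Matrix (Fin n) (Fin n) ℂ} (hM : M.IsHermitian) :
    (suppProj M).IsHermitian := by
  rw [suppProj_eq_cfc hM]
  exact isHermitian_cfc _ _

/-- The support projection depends only on the support: if `P Q = Q` and `Q P = P` for Hermitian
`P`, `Q`, then taking adjoints gives `P = Q`. -/
lemma suppProj_eq_of_msupp_eq {A B : Matrix (Fin n) (Fin n) ℂ} (hA : A.IsHermitian)
    (hB : B.IsHermitian) (h : msupp A = msupp B) : suppProj A = suppProj B := by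
  have h1 := suppProj_mul_suppProj hA hB h.ge
  have h2 := suppProj_mul_suppProj hB hA h.le
  have h3 := congrArg conjTranspose h1
  rw [conjTranspose_mul, (suppProj_isHermitian hA).eq, (suppProj_isHermitian hB).eq, h2] at h3
  exact h3

lemma rpow0_mul_rpow0 {x : ℝ} (hx : 0 ≤ x) (s : ℝ) :
    rpow0 x s * rpow0 x s = rpow0 x (2 * s) := by
  by_cases h : x = 0
  · simp [rpow0, h]
  · have hpos := hx.lt_of_ne' h
    simp only [rpow0, h, if_false, Real.rpow_eq_pow]
    rw [← Real.rpow_add hpos]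
    ring_nf

lemma rpow0_nonneg {x : ℝ} (hx : 0 ≤ x) (s : ℝ) : 0 ≤ rpow0 x s := by
  unfold rpow0
  split_ifs
  · exact le_rfl
  · exact Real.rpow_nonneg hx s

lemma rpow0_const_mul_rpow0 {x c : ℝ} (hx : 0 ≤ x) (hc : 0 < c) (t α : ℝ) :
    rpow0 (c * rpow0 x t) α = c ^ α * rpow0 x (t * α) := by
  by_cases h : x = 0
  · simp [rpow0, h]
  · have hpos := hx.lt_of_ne' h
    have h2 : 0 < x ^ t := Real.rpow_pos_of_pos hpos t
    simp only [rpow0, h, if_false, Real.rpow_eq_pow, (mul_pos hc h2).ne']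
    rw [Real.mul_rpow hc.le h2.le, ← Real.rpow_mul hx]

lemma mpow_conj_suppProj {σ : Matrix (Fin n) (Fin n) ℂ} (hσ : σ.PosSemidef) (s : ℝ) :
    mpow σ s * suppProj σ * mpow σ s = mpow σ (2 * s) := by
  rw [mpow_eq_cfc hσ.1, mpow_eq_cfc hσ.1, suppProj_eq_cfc hσ.1,
    ← cfc_mul _ _ σ (continuousOn_spectrum _ _) (continuousOn_spectrum _ _),
    ← cfc_mul _ _ σ (continuousOn_spectrum _ _) (continuousOn_spectrum _ _)]
  refine cfc_congr fun x hx => ?_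
  change rpow0 x s * (if x = 0 then 0 else 1) * rpow0 x s = rpow0 x (2 * s)
  rw [← rpow0_mul_rpow0 (spectrum_nonneg_of_posSemidef hσ hx)]
  by_cases h : x = 0 <;> simp [h, rpow0]

lemma mpow_posSemidef {σ : Matrix (Fin n) (Fin n) ℂ} (hσ : σ.PosSemidef) (s : ℝ) :
    (mpow σ s).PosSemidef := by
  rw [mpow_eq_cfc hσ.1, ← nonneg_iff_posSemidef]
  exact cfc_nonneg fun x hx => rpow0_nonneg (spectrum_nonneg_of_posSemidef hσ hx) s

lemma trace_mpow_smul_mpow {σ : Matrix (Fin n) (Fin n) ℂ} (hσ : σ.PosSemidef) {c : ℝ} (hc : 0 < c)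
    (t α : ℝ) :
    (mpow (c • mpow σ t) α).trace.re = c ^ α * ∑ i, rpow0 (hσ.1.eigenvalues i) (t * α) := by
  have hsa : IsSelfAdjoint σ := hσ.1
  rw [mpow_eq_cfc hσ.1, ← cfc_smul (S := ℝ) c _ σ (continuousOn_spectrum _ _),
    mpow_eq_cfc (isHermitian_cfc _ _),
    ← cfc_comp' (fun x => rpow0 x α) _ σ
      (((Matrix.finite_real_spectrum (A := σ)).image _).continuousOn _)
      (continuousOn_spectrum _ _), trace_cfc_re hσ.1, Finset.mul_sum]
  refine Finset.sum_congr rfl fun i _ => ?_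
  rw [smul_eq_mul, rpow0_const_mul_rpow0 (hσ.eigenvalues_nonneg i) hc]

lemma tendsto_const_rpow_mul_sum {c : ℝ} (hc : 0 < c) (l : Fin n → ℝ) :
    Tendsto (fun α : ℝ => c ^ α * ∑ i, rpow0 (l i) (1 - α)) (nhds 0) (nhds (∑ i, l i)) := by
  have h1 : Tendsto (fun α : ℝ => c ^ α) (nhds 0) (nhds 1) := by
    have := (Real.continuous_const_rpow hc.ne').tendsto 0
    simpa using this
  have h2 : Tendsto (fun α : ℝ => ∑ i, rpow0 (l i) (1 - α)) (nhds 0) (nhds (∑ i, l i)) := by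
    refine tendsto_finsetSum _ fun i _ => ?_
    by_cases h : l i = 0
    · simp [rpow0, h]
    · simp only [rpow0, h, if_false, Real.rpow_eq_pow]
      have h3 : Continuous fun α : ℝ => l i ^ (1 - α) :=
        (Real.continuous_const_rpow h).comp (by fun_prop)
      simpa using h3.tendsto 0
  simpa using h1.mul h2

lemma tendsto_trace_mpow {ρ σ : Matrix (Fin n) (Fin n) ℂ} (hρ : ρ.PosSemidef) (hσ : σ.PosSemidef)
    (hsupp : msupp ρ = msupp σ) :
    Tendsto (fun α : ℝ =>
      (mpow (mpow σ ((1 - α) / (2 * α)) * ρ * mpow σ ((1 - α) / (2 * α))) α).trace.re)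
      (nhdsWithin (0 : ℝ) (Set.Ioo (0 : ℝ) 1)) (nhds (∑ i, hσ.1.eigenvalues i)) := by
  obtain ⟨c, C, hc, hC, hcρ, hCρ⟩ := exists_smul_suppProj_le hρ
  rw [suppProj_eq_of_msupp_eq hρ.1 hσ.1 hsupp] at hcρ hCρ
  have hlim := fun {c : ℝ} (hc : 0 < c) => (tendsto_const_rpow_mul_sum hc hσ.1.eigenvalues).mono_left
    (nhdsWithin_le_nhds (s := Set.Ioo (0 : ℝ) 1))
  have key : ∀ {c : ℝ}, 0 < c → ∀ s : ℝ, (c • mpow σ (2 * s)).PosSemidef :=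
    fun hc s => (mpow_posSemidef hσ _).smul hc.le
  have hmid : ∀ s : ℝ, (mpow σ s * ρ * mpow σ s).PosSemidef := fun s => by
    have := hρ.conjTranspose_mul_mul_same (mpow σ s)
    rwa [(mpow_posSemidef hσ s).1.eq] at this
  have hexp : ∀ {α : ℝ}, 0 < α → 2 * ((1 - α) / (2 * α)) * α = 1 - α := fun h => by
    field_simp
  have hconj : ∀ {A B : Matrix (Fin n) (Fin n) ℂ} (s : ℝ), A ≤ B →
      mpow σ s * A * mpow σ s ≤ mpow σ s * B * mpow σ s := fun {A B} s h => by
    have := (Matrix.le_iff.mp h).conjTranspose_mul_mul_same (mpow σ s)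
    rwa [(mpow_posSemidef hσ s).1.eq, mul_sub, sub_mul, ← Matrix.le_iff] at this
  refine tendsto_of_tendsto_of_tendsto_of_le_of_le' (hlim hc) (hlim hC) ?_ ?_
  · filter_upwards [self_mem_nhdsWithin] with α ⟨h0, h1⟩
    have h := hconj ((1 - α) / (2 * α)) hcρ
    rw [mul_smul_comm, smul_mul_assoc, mpow_conj_suppProj hσ] at h
    have := trace_mpow_mono (key hc _) (hmid _) h h0 h1
    rwa [trace_mpow_smul_mpow hσ hc, hexp h0] at this
  · filter_upwards [self_mem_nhdsWithin] with α ⟨h0, h1⟩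
    have h := hconj ((1 - α) / (2 * α)) hCρ
    rw [mul_smul_comm, smul_mul_assoc, mpow_conj_suppProj hσ] at h
    have := trace_mpow_mono (hmid _) (key hC _) h h0 h1
    rwa [trace_mpow_smul_mpow hσ hC, hexp h0] at this

end RenyiLimit

/-- If `ρ` is a density matrix and `σ` a positive semi-definite matrix with
`supp ρ = supp σ`, then `D_α(ρ‖σ) → D̃₀(ρ‖σ)` as `α → 0` through `α ∈ (0,1)`. -/
theorem limit_renyiDiv_eq_relRenyi0 {n : ℕ} (ρ σ : Matrix (Fin n) (Fin n) ℂ)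
    (hρ : ρ.PosSemidef) (hρtr : ρ.trace = 1) (hσ : σ.PosSemidef)
    (hsupp : msupp ρ = msupp σ) :
    Filter.Tendsto (fun α : ℝ => renyiDiv ρ σ α) (nhdsWithin (0 : ℝ) (Set.Ioo (0 : ℝ) 1))
      (nhds (relRenyi0 ρ σ)) := by
  have htr : σ.trace.re = ∑ i, hσ.1.eigenvalues i := by
    simp [hσ.1.trace_eq_sum_eigenvalues]
  have hpos : ∑ i, hσ.1.eigenvalues i ≠ 0 := by
    rw [← htr]
    intro h
    have h0 : σ = 0 := by
      refine hσ.trace_eq_zero_iff.mp (Complex.ext h ?_)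
      simpa using (Complex.le_def.mp hσ.trace_nonneg).2.symm
    obtain ⟨X, hX⟩ := RenyiLimit.exists_eq_mul_of_msupp_le hsupp.le
    simp [hX, h0] at hρtr
  have hrel : relRenyi0 ρ σ = ((0 : ℝ) - 1)⁻¹ * Real.log (∑ i, hσ.1.eigenvalues i) := by
    rw [relRenyi0, RenyiLimit.suppProj_eq_of_msupp_eq hρ.1 hσ.1 hsupp,
      RenyiLimit.suppProj_mul_self hσ.1, htr]
    norm_num
  rw [hrel]
  have hinv : Tendsto (fun α : ℝ => (α - 1)⁻¹) (nhdsWithin (0 : ℝ) (Set.Ioo (0 : ℝ) 1))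
      (nhds ((0 : ℝ) - 1)⁻¹) :=
    ((tendsto_id.sub_const (1 : ℝ)).inv₀ (by norm_num)).mono_left nhdsWithin_le_nhds
  exact hinv.mul ((RenyiLimit.tendsto_trace_mpow hρ hσ hsupp).log hpos)
end

section
/- Let A and B be positive semi-definite n×n complex matrices, q ≥ 0, and r ≥ 1. Then tr[(B^{1/2} A B^{1/2})^{rq}] ≤ tr[(B^{r/2} A^r B^{r/2})^{q}] (Araki–Lieb–Thirring inequality, first part). -/
/-!
The eigenvalues `s₁ ≥ s₂ ≥ …` of `B^{1/2} A B^{1/2}` and `t₁ ≥ t₂ ≥ …` of `B^{r/2} A^r B^{r/2}`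
satisfy the weak log-majorization `(s₁ ⋯ s_k)^r ≤ t₁ ⋯ t_k` for every `k` with `s_k > 0`
(`log_majorization`); the trace inequality follows from it, for every `q ≥ 0`, by convexity of
`x ↦ exp (q x)` and an Abel summation (`sum_rpow0_le_of_log_majorization`). Only indices with
`s_i > 0` enter, so the convention `0 ^ 0 = 0` causes no special case at `q = 0`.

The log-majorization is an application of Hadamard's three-lines theorem to the scalar function
`g z = det (Vᴴ A^{rz/2} B^{rz/2} W)`, where `V` and `W` are `n × k` isometries made of the top
singular vectors of `A^{1/2} B^{1/2}`, so that `g (1/r) = √(s₁ ⋯ s_k)`. Imaginary powers are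
contractions, hence can be absorbed into `V` and `W`. The boundary values are then controlled by
the fact that `|det (Vᴴ X W)|` is at most the product of the `k` largest singular values of `X`
for all contractions `V`, `W` (`norm_det_sq_le`): it gives `1` on `re z = 0` (with `X = 1`) and
`√(t₁ ⋯ t_k)` on `re z = 1` (with `X = A^{r/2} B^{r/2}`).
-/

open Matrix Filter ComplexOrder

/-! ### Determinants of compressions by contractions -/

theorem det_one_add_ge_one {k : ℕ} {P : Matrix (Fin k) (Fin k) ℂ} (hP : P.PosSemidef) :
    1 ≤ (1 + P).det := by
  have hU' : star (hP.1.eigenvectorUnitary : Matrix (Fin k) (Fin k) ℂ) *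
      (hP.1.eigenvectorUnitary : Matrix (Fin k) (Fin k) ℂ) = 1 :=
    Unitary.coe_star_mul_self _
  have h := hP.1.spectral_theorem
  rw [Unitary.conjStarAlgAut_apply] at h
  have hd : (1 + P).det = ∏ i, (1 + (hP.1.eigenvalues i : ℂ)) := by
    conv_lhs => rw [h]
    rw [mul_assoc, det_one_add_mul_comm, mul_assoc, hU', mul_one,
      ← diagonal_one, diagonal_add, det_diagonal]
    rfl
  rw [hd]
  have : (1 : ℝ) ≤ ∏ i, (1 + hP.1.eigenvalues i) :=
    Finset.one_le_prod (fun i _ => by simpa using hP.eigenvalues_nonneg i)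
  exact_mod_cast this

open scoped MatrixOrder in
/-- The determinant is monotone for the Loewner order on positive semi-definite matrices: if
`M = Sᴴ S` is invertible then `N = Sᴴ (1 + P) S` with `P` positive semi-definite. -/
theorem det_le_det_of_posSemidef {k : ℕ} {M N : Matrix (Fin k) (Fin k) ℂ} (hM : M.PosSemidef)
    (h : (N - M).PosSemidef) : M.det ≤ N.det := by
  by_cases h0 : M.det = 0
  · rw [h0]
    have : N.PosSemidef := by simpa using h.add hM
    exact this.det_nonneg
  obtain ⟨S, hS⟩ := CStarAlgebra.nonneg_iff_eq_star_mul_self.mp hM.nonneg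
  rw [star_eq_conjTranspose] at hS
  have hSd : IsUnit S.det := by
    rw [isUnit_iff_ne_zero]
    rintro h1
    exact h0 (by rw [hS, det_mul, h1, mul_zero])
  have hSd' : IsUnit (Sᴴ).det := by
    rw [det_conjTranspose]; exact hSd.star
  have hN : N = Sᴴ * (1 + (S⁻¹)ᴴ * (N - M) * S⁻¹) * S := by
    rw [mul_add, add_mul, mul_one, ← hS, conjTranspose_nonsing_inv]
    simp only [← mul_assoc]
    rw [mul_nonsing_inv _ hSd', one_mul, mul_assoc, nonsing_inv_mul _ hSd, mul_one]
    simp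
  have h1 := det_one_add_ge_one (h.conjTranspose_mul_mul_same S⁻¹)
  have h2 := hM.det_nonneg
  rw [hN, det_mul, det_mul, mul_right_comm, ← det_mul, ← hS]
  exact le_mul_of_one_le_right h2 h1

/-- A (possibly rectangular) matrix of operator norm at most one, phrased as `Wᴴ W ≤ 1`. -/
def IsContraction {n k : ℕ} (W : Matrix (Fin n) (Fin k) ℂ) : Prop :=
  (1 - Wᴴ * W).PosSemidef

theorem IsContraction.conjTranspose {n k : ℕ} {W : Matrix (Fin n) (Fin k) ℂ}
    (hW : IsContraction W) : (1 - W * Wᴴ).PosSemidef := by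
  -- Both conditions say that the block matrix `[[1, W], [Wᴴ, 1]]` is positive semi-definite.
  have : Invertible (1 : Matrix (Fin n) (Fin n) ℂ) := invertibleOne
  have : Invertible (1 : Matrix (Fin k) (Fin k) ℂ) := invertibleOne
  have h1 := PosDef.fromBlocks₁₁ W (1 : Matrix (Fin k) (Fin k) ℂ)
    (PosDef.one : (1 : Matrix (Fin n) (Fin n) ℂ).PosDef)
  have h2 := PosDef.fromBlocks₂₂ (1 : Matrix (Fin n) (Fin n) ℂ) W
    (PosDef.one : (1 : Matrix (Fin k) (Fin k) ℂ).PosDef)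
  simp only [inv_one, Matrix.mul_one] at h1 h2
  exact h2.mp (h1.mpr hW)

theorem IsContraction.mul {n k : ℕ} {C : Matrix (Fin n) (Fin n) ℂ} {W : Matrix (Fin n) (Fin k) ℂ}
    (hC : IsContraction C) (hW : IsContraction W) : IsContraction (C * W) := by
  have := hW.add (PosSemidef.conjTranspose_mul_mul_same hC W)
  unfold IsContraction
  convert this using 1
  simp only [conjTranspose_mul, Matrix.mul_sub, Matrix.sub_mul, Matrix.mul_one, Matrix.mul_assoc]
  abel

/-- For a decreasing diagonal matrix `D`, compressing to `k` dimensions gives a determinant at most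
the product of the `k` largest entries. With `c` the `k`-th entry, `D ≤ c (1 + T Tᴴ)` for an
`n × k` matrix `T`, and the Weinstein–Aronszajn identity turns `det (1 + Wᴴ T Tᴴ W)` into
`det (1 + Tᴴ W Wᴴ T) ≤ det (1 + Tᴴ T)`. -/
theorem det_conj_diagonal_le_of_pos {n k : ℕ} (hk : k ≤ n) {W : Matrix (Fin n) (Fin k) ℂ}
    (hW : IsContraction W) {d : Fin n → ℝ} (hd : Antitone d) (hpos : ∀ i, 0 < d i) :
    (Wᴴ * diagonal (fun i => (d i : ℂ)) * W).det ≤ ((∏ j : Fin k, d (Fin.castLE hk j) : ℝ) : ℂ) := by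
  rcases Nat.eq_zero_or_pos k with rfl | hk0
  · simp
  set l : Fin k := ⟨k - 1, by omega⟩ with hl
  set c : ℝ := d (Fin.castLE hk l) with hc
  have hc0 : 0 < c := hpos _
  have hle : ∀ j : Fin k, c ≤ d (Fin.castLE hk j) := fun j => hd (by
    rw [Fin.le_def]; simp [hl]; omega)
  have hge : ∀ i : Fin n, k ≤ i → d i ≤ c := fun i hi => hd (by
    rw [Fin.le_def]; simp [hl]; omega)
  -- `c (1 + T Tᴴ)` keeps the `k` largest entries of `d` and replaces the others by `c`.
  set e : Fin k → ℝ := fun j => (d (Fin.castLE hk j) - c) / c with he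
  have he0 : ∀ j, 0 ≤ e j := fun j => div_nonneg (sub_nonneg.2 (hle j)) hc0.le
  set T : Matrix (Fin n) (Fin k) ℂ :=
    of fun i j => if i = Fin.castLE hk j then ((√(e j) : ℝ) : ℂ) else 0 with hT
  have hTT : Tᴴ * T = diagonal (fun j => (e j : ℂ)) := by
    ext i j
    simp only [mul_apply, conjTranspose_apply, hT, of_apply, diagonal_apply]
    by_cases hij : i = j
    · subst hij
      simp only [↓reduceIte]
      rw [Finset.sum_eq_single (Fin.castLE hk i)]
      · simp only [↓reduceIte, RCLike.star_def, Complex.conj_ofReal, ← Complex.ofReal_mul]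
        rw [Real.mul_self_sqrt (he0 i)]
      · intro b _ hb; simp [hb]
      · simp
    · rw [if_neg hij]
      refine Finset.sum_eq_zero fun x _ => ?_
      by_cases hx : x = Fin.castLE hk i
      · have : x ≠ Fin.castLE hk j := fun h => hij (Fin.castLE_injective hk (hx.symm.trans h))
        simp [this]
      · simp [hx]
  have hTTH : T * Tᴴ = diagonal (fun i : Fin n =>
      if h : (i : ℕ) < k then (e ⟨i, h⟩ : ℂ) else 0) := by
    ext i j
    simp only [mul_apply, conjTranspose_apply, hT, of_apply, diagonal_apply]
    by_cases hij : i = j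
    · subst hij
      simp only [↓reduceIte]
      by_cases hi : (i : ℕ) < k
      · rw [dif_pos hi, Finset.sum_eq_single ⟨i, hi⟩]
        · have : i = Fin.castLE hk ⟨i, hi⟩ := by ext; simp
          rw [if_pos this]
          simp only [RCLike.star_def, Complex.conj_ofReal, ← Complex.ofReal_mul]
          rw [Real.mul_self_sqrt (he0 _)]
        · intro b _ hb
          have : i ≠ Fin.castLE hk b := fun h => hb (by ext; simp [h])
          simp [this]
        · simp
      · rw [dif_neg hi]
        refine Finset.sum_eq_zero fun x _ => ?_
        have : i ≠ Fin.castLE hk x := fun h => hi (by simp [h])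
        simp [this]
    · rw [if_neg hij]
      refine Finset.sum_eq_zero fun x _ => ?_
      by_cases hx : i = Fin.castLE hk x
      · have : j ≠ Fin.castLE hk x := fun h => hij (hx.trans h.symm)
        simp [this]
      · simp [hx]
  have hD : (diagonal (fun i => (d i : ℂ))).PosSemidef :=
    PosSemidef.diagonal fun i => by simpa using (hpos i).le
  have hDD : ((c : ℂ) • (1 + T * Tᴴ) - diagonal (fun i => (d i : ℂ))).PosSemidef := by
    rw [hTTH, ← diagonal_one, diagonal_add, ← diagonal_smul, diagonal_sub]
    refine PosSemidef.diagonal fun i => ?_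
    by_cases hi : (i : ℕ) < k
    · simp only [Pi.zero_apply, Pi.smul_apply, dif_pos hi, he, smul_eq_mul]
      have : Fin.castLE hk ⟨i, hi⟩ = i := by ext; simp
      rw [this, ← Complex.ofReal_one, ← Complex.ofReal_add, ← Complex.ofReal_mul,
        ← Complex.ofReal_sub]
      rw [show c * (1 + (d i - c) / c) - d i = 0 by field_simp; ring]
      simp
    · simp only [Pi.zero_apply, Pi.smul_apply, dif_neg hi, smul_eq_mul, add_zero, mul_one]
      have := hge i (not_lt.1 hi)
      rw [← Complex.ofReal_sub]
      exact_mod_cast sub_nonneg.2 this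
  have s1 : (Wᴴ * diagonal (fun i => (d i : ℂ)) * W).det ≤
      (Wᴴ * ((c : ℂ) • (1 + T * Tᴴ)) * W).det :=
    det_le_det_of_posSemidef (hD.conjTranspose_mul_mul_same W) (by
      rw [← Matrix.sub_mul, ← Matrix.mul_sub]; exact hDD.conjTranspose_mul_mul_same W)
  have hc0' : (0 : ℂ) ≤ (c : ℂ) := by exact_mod_cast hc0.le
  have s2 : (Wᴴ * ((c : ℂ) • (1 + T * Tᴴ)) * W).det ≤
      (c : ℂ) ^ k * (1 + Wᴴ * (T * Tᴴ) * W).det := by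
    rw [Matrix.mul_smul, Matrix.smul_mul, det_smul, Fintype.card_fin]
    refine mul_le_mul_of_nonneg_left ?_ (pow_nonneg hc0' k)
    refine det_le_det_of_posSemidef ?_ ?_
    · exact (PosSemidef.one.add (posSemidef_self_mul_conjTranspose T)).conjTranspose_mul_mul_same W
    · unfold IsContraction at hW
      convert hW using 1
      simp only [Matrix.mul_add, Matrix.add_mul, Matrix.mul_one]
      abel
  have s3 : (1 + Wᴴ * (T * Tᴴ) * W).det ≤ (1 + Tᴴ * T).det := by
    rw [show Wᴴ * (T * Tᴴ) * W = (Wᴴ * T) * (Tᴴ * W) by simp only [Matrix.mul_assoc],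
      det_one_add_mul_comm]
    have hWT : (Tᴴ * W * (Wᴴ * T)).PosSemidef := by
      have := posSemidef_self_mul_conjTranspose (Tᴴ * W)
      simpa using this
    refine det_le_det_of_posSemidef (PosSemidef.one.add hWT) ?_
    convert hW.conjTranspose.conjTranspose_mul_mul_same T using 1
    simp only [Matrix.mul_sub, Matrix.sub_mul, Matrix.mul_one, Matrix.mul_assoc]
    abel
  have s4 : (c : ℂ) ^ k * (1 + Tᴴ * T).det = ((∏ j : Fin k, d (Fin.castLE hk j) : ℝ) : ℂ) := by
    rw [hTT, ← diagonal_one, diagonal_add, det_diagonal]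
    have : (c : ℂ) ^ k = ∏ _j : Fin k, (c : ℂ) := by simp
    rw [this, ← Finset.prod_mul_distrib]
    push_cast
    refine Finset.prod_congr rfl fun j _ => ?_
    rw [← Complex.ofReal_one, ← Complex.ofReal_add, ← Complex.ofReal_mul]
    congr 1
    simp only [he]
    field_simp
    ring
  exact s1.trans (s2.trans ((mul_le_mul_of_nonneg_left s3 (pow_nonneg hc0' k)).trans s4.le))

/-- The positivity assumption of `det_conj_diagonal_le_of_pos` is removed by letting `ε → 0` in
the bound for `d + ε`. -/
theorem det_conj_diagonal_le {n k : ℕ} (hk : k ≤ n) {W : Matrix (Fin n) (Fin k) ℂ}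
    (hW : IsContraction W) {d : Fin n → ℝ} (hd : Antitone d) (hd0 : ∀ i, 0 ≤ d i) :
    (Wᴴ * diagonal (fun i => (d i : ℂ)) * W).det ≤ ((∏ j : Fin k, d (Fin.castLE hk j) : ℝ) : ℂ) := by
  have h : ∀ ε > 0, (Wᴴ * diagonal (fun i => (d i : ℂ)) * W).det ≤
      ((∏ j : Fin k, (d (Fin.castLE hk j) + ε) : ℝ) : ℂ) := by
    intro ε hε
    refine le_trans ?_ (det_conj_diagonal_le_of_pos hk hW (d := fun i => d i + ε)
      (fun i j hij => by simpa using hd hij) (fun i => by have := hd0 i; positivity))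
    refine det_le_det_of_posSemidef (PosSemidef.conjTranspose_mul_mul_same
      (PosSemidef.diagonal fun i => by simpa using hd0 i) W) ?_
    rw [← Matrix.sub_mul, ← Matrix.mul_sub, diagonal_sub]
    refine PosSemidef.conjTranspose_mul_mul_same (PosSemidef.diagonal fun i => ?_) W
    simp only [Pi.zero_apply, Complex.ofReal_add, add_sub_cancel_left]
    exact_mod_cast hε.le
  have ht : Tendsto (fun ε : ℝ => ((∏ j : Fin k, (d (Fin.castLE hk j) + ε) : ℝ) : ℂ))
      (nhdsWithin 0 (Set.Ioi 0)) (nhds ((∏ j : Fin k, (d (Fin.castLE hk j) + 0) : ℝ) : ℂ)) := by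
    have : Continuous (fun ε : ℝ => ((∏ j : Fin k, (d (Fin.castLE hk j) + ε) : ℝ) : ℂ)) := by
      fun_prop
    exact (this.tendsto 0).mono_left nhdsWithin_le_nhds
  simp only [add_zero] at ht
  exact ge_of_tendsto ht (eventually_mem_nhdsWithin.mono fun ε hε => h ε hε)

theorem IsContraction.of_mul_eq_one {n k : ℕ} {W : Matrix (Fin n) (Fin k) ℂ}
    (hW : Wᴴ * W = 1) : IsContraction W := by
  unfold IsContraction
  rw [hW, sub_self]
  exact PosSemidef.zero

/-- The product of the `k` largest singular values of `X` (here `t` lists the eigenvalues of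
`Xᴴ X` in decreasing order) dominates the `k × k` minors of `X` taken along contractions. -/
theorem norm_det_sq_le {n k : ℕ} (hk : k ≤ n) {X Q : Matrix (Fin n) (Fin n) ℂ} {t : Fin n → ℝ}
    (hQ : Q * Qᴴ = 1) (hX : Xᴴ * X = Q * diagonal (fun i => (t i : ℂ)) * Qᴴ)
    (ht : Antitone t) (ht0 : ∀ i, 0 ≤ t i) {V W : Matrix (Fin n) (Fin k) ℂ}
    (hV : IsContraction V) (hW : IsContraction W) :
    ‖(Vᴴ * X * W).det‖ ^ 2 ≤ ∏ j : Fin k, t (Fin.castLE hk j) := by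
  have h1 : ((‖(Vᴴ * X * W).det‖ ^ 2 : ℝ) : ℂ) = ((Vᴴ * X * W)ᴴ * (Vᴴ * X * W)).det := by
    rw [det_mul, det_conjTranspose]
    push_cast
    rw [← Complex.conj_mul']
    rfl
  have h2 : ((Vᴴ * X * W)ᴴ * (Vᴴ * X * W)).det ≤ (Wᴴ * (Xᴴ * X) * W).det := by
    refine det_le_det_of_posSemidef (posSemidef_conjTranspose_mul_self _) ?_
    convert hV.conjTranspose.conjTranspose_mul_mul_same (X * W) using 1
    simp only [conjTranspose_mul, conjTranspose_conjTranspose, Matrix.mul_sub, Matrix.sub_mul, Matrix.mul_one, Matrix.mul_assoc]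
  have hQW : IsContraction (Qᴴ * W) :=
    (IsContraction.of_mul_eq_one (by simpa using hQ)).mul hW
  have h3 := det_conj_diagonal_le hk hQW ht ht0
  have h4 : (Qᴴ * W)ᴴ * diagonal (fun i => (t i : ℂ)) * (Qᴴ * W) = Wᴴ * (Xᴴ * X) * W := by
    rw [hX]; simp only [conjTranspose_mul, conjTranspose_conjTranspose, Matrix.mul_assoc]
  rw [h4] at h3
  have := (h1.le.trans h2).trans h3
  exact_mod_cast this

/-! ### From log-majorization to sums of powers -/

theorem rpow0_of_pos {x : ℝ} (hx : 0 < x) (t : ℝ) : rpow0 x t = Real.exp (t * Real.log x) := by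
  rw [rpow0, if_neg hx.ne']
  exact (Real.rpow_def_of_pos hx t).trans (by rw [mul_comm])

theorem rpow0_nonneg {x : ℝ} (hx : 0 ≤ x) (t : ℝ) : 0 ≤ rpow0 x t := by
  rcases hx.eq_or_lt with rfl | hx
  · simp [rpow0]
  · rw [rpow0_of_pos hx]; positivity

/-- Abel summation: a nonnegative decreasing weight preserves nonnegativity of partial sums. -/
theorem abel_sum_nonneg {c d : ℕ → ℝ} (hc : Antitone c) (hc0 : ∀ i, 0 ≤ c i)
    (hd : ∀ k, 0 ≤ ∑ i ∈ Finset.range k, d i) (k : ℕ) :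
    0 ≤ ∑ i ∈ Finset.range k, c i * d i := by
  have h : ∀ k, c k * ∑ i ∈ Finset.range k, d i ≤ ∑ i ∈ Finset.range k, c i * d i := by
    intro k
    induction k with
    | zero => simp
    | succ k ih =>
      have h1 := mul_le_mul_of_nonneg_right (hc (Nat.le_succ k)) (hd (k + 1))
      rw [Finset.sum_range_succ (fun i => c i * d i)]
      rw [Finset.sum_range_succ] at h1 ⊢
      simp only [Nat.succ_eq_add_one] at h1
      linarith
  exact (mul_nonneg (hc0 k) (hd k)).trans (h k)

/-- Weak log-majorization `∏_{i<k} sᵢ^r ≤ ∏_{i<k} tᵢ` (required only while the `sᵢ` are positive)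
implies `∑ sᵢ^{rq} ≤ ∑ tᵢ^q`: the tangent-line bound
`exp(q y) - exp(q x) ≥ q exp(q x) (y - x)` reduces it to an Abel summation. -/
theorem sum_rpow0_le_of_log_majorization {s t : ℕ → ℝ} (hs : Antitone s) (hs0 : ∀ i, 0 ≤ s i)
    (ht0 : ∀ i, 0 ≤ t i) {q r : ℝ} (hq : 0 ≤ q) (hr : 0 ≤ r)
    (h : ∀ k, (∀ i < k, 0 < s i) →
      (∏ i ∈ Finset.range k, s i) ^ r ≤ ∏ i ∈ Finset.range k, t i) (n : ℕ) :
    ∑ i ∈ Finset.range n, rpow0 (s i) (r * q) ≤ ∑ i ∈ Finset.range n, rpow0 (t i) q := by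
  have hpos : ∀ k, 0 < s k → ∀ i < k + 1, 0 < s i := fun k hk i hi =>
    hk.trans_le (hs (Nat.lt_succ_iff.1 hi))
  have htpos : ∀ i, 0 < s i → 0 < t i := by
    intro i hi
    refine lt_of_le_of_ne (ht0 i) fun h0 => ?_
    have h1 := h (i + 1) (hpos i hi)
    rw [Finset.prod_range_succ t, ← h0, mul_zero] at h1
    have h2 : 0 < (∏ j ∈ Finset.range (i + 1), s j) ^ r :=
      Real.rpow_pos_of_pos (Finset.prod_pos fun j hj => hpos i hi j (Finset.mem_range.1 hj)) r
    exact absurd h1 (not_le.2 h2)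
  set c : ℕ → ℝ := fun i => rpow0 (s i) (r * q) with hc
  set d : ℕ → ℝ := fun i => if s i = 0 then 0 else Real.log (t i) - r * Real.log (s i) with hd
  have hrq : 0 ≤ r * q := mul_nonneg hr hq
  have hcanti : Antitone c := by
    intro i j hij
    rcases (hs0 j).eq_or_lt with h0 | h0
    · have : c j = 0 := by simp [hc, rpow0, ← h0]
      rw [this]; exact rpow0_nonneg (hs0 i) _
    · have hi := h0.trans_le (hs hij)
      simp only [hc, rpow0_of_pos h0, rpow0_of_pos hi]
      have := Real.log_le_log h0 (hs hij)
      gcongr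
  have hdsum : ∀ k, 0 ≤ ∑ i ∈ Finset.range k, d i := by
    intro k
    induction k with
    | zero => simp
    | succ k ih =>
      rcases (hs0 k).eq_or_lt with h0 | h0
      · rw [Finset.sum_range_succ]
        simpa [hd, ← h0] using ih
      · have hp := hpos k h0
        have h1 := h (k + 1) hp
        have hS : 0 < ∏ j ∈ Finset.range (k + 1), s j :=
          Finset.prod_pos fun j hj => hp j (Finset.mem_range.1 hj)
        have h2 := Real.log_le_log (Real.rpow_pos_of_pos hS r) h1
        rw [Real.log_rpow hS, Real.log_prod fun j hj => (hp j (Finset.mem_range.1 hj)).ne',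
          Real.log_prod fun j hj => (htpos j (hp j (Finset.mem_range.1 hj))).ne',
          Finset.mul_sum] at h2
        have h3 : ∑ i ∈ Finset.range (k + 1), d i =
            ∑ i ∈ Finset.range (k + 1), (Real.log (t i) - r * Real.log (s i)) :=
          Finset.sum_congr rfl fun j hj => by
            simp only [hd, if_neg (hp j (Finset.mem_range.1 hj)).ne']
        rw [h3, Finset.sum_sub_distrib]
        linarith
  have hterm : ∀ i, q * (c i * d i) ≤ rpow0 (t i) q - rpow0 (s i) (r * q) := by
    intro i
    rcases (hs0 i).eq_or_lt with h0 | h0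
    · have hi : rpow0 (s i) (r * q) = 0 := by simp [rpow0, ← h0]
      rw [hi, show d i = 0 by simp [hd, ← h0]]
      simpa using rpow0_nonneg (ht0 i) q
    · have h1 := htpos i h0
      simp only [hc, hd, if_neg h0.ne', rpow0_of_pos h0, rpow0_of_pos h1]
      have h2 := Real.add_one_le_exp (q * Real.log (t i) - r * q * Real.log (s i))
      have h3 := mul_le_mul_of_nonneg_left h2 (Real.exp_pos (r * q * Real.log (s i))).le
      rw [← Real.exp_add, add_sub_cancel] at h3
      linarith
  have h1 := abel_sum_nonneg hcanti (fun i => rpow0_nonneg (hs0 i) _) hdsum n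
  have h2 := Finset.sum_le_sum fun i (_ : i ∈ Finset.range n) => hterm i
  rw [← Finset.mul_sum, Finset.sum_sub_distrib] at h2
  have := mul_nonneg hq h1
  linarith

/-! ### Complex powers and sorted diagonalization -/

/-- The entire family `z ↦ U diag(aᵢ^z) Uᴴ`, with `0 ^ z = 0` on the kernel. -/
noncomputable def specPow {n : ℕ} (U : Matrix (Fin n) (Fin n) ℂ) (a : Fin n → ℝ) (z : ℂ) :
    Matrix (Fin n) (Fin n) ℂ :=
  U * diagonal (fun i => if a i = 0 then 0 else Complex.exp (z * Real.log (a i))) * Uᴴ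

theorem specPow_add {n : ℕ} {U : Matrix (Fin n) (Fin n) ℂ} (hU : Uᴴ * U = 1) (a : Fin n → ℝ)
    (z w : ℂ) : specPow U a (z + w) = specPow U a z * specPow U a w := by
  unfold specPow
  rw [show ∀ D E : Matrix (Fin n) (Fin n) ℂ, U * D * Uᴴ * (U * E * Uᴴ) = U * (D * (Uᴴ * U) * E) * Uᴴ
    from fun D E => by simp only [mul_assoc], hU, mul_one, diagonal_mul_diagonal]
  congr 3
  ext i
  by_cases h : a i = 0
  · simp [h]
  · simp [h, add_mul, Complex.exp_add]

theorem specPow_conjTranspose {n : ℕ} (U : Matrix (Fin n) (Fin n) ℂ) (a : Fin n → ℝ)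
    (z : ℂ) : (specPow U a z)ᴴ = specPow U a (star z) := by
  unfold specPow
  rw [conjTranspose_mul, conjTranspose_mul, conjTranspose_conjTranspose, diagonal_conjTranspose,
    mul_assoc]
  congr 4
  ext i
  by_cases h : a i = 0
  · simp [h]
  · simp [h, ← Complex.exp_conj]

/-- Imaginary powers are partial isometries (unitary on the support, zero on the kernel). -/
theorem specPow_isContraction {n : ℕ} {U : Matrix (Fin n) (Fin n) ℂ} (hU : Uᴴ * U = 1)
    (a : Fin n → ℝ) {z : ℂ} (hz : z.re = 0) : IsContraction (specPow U a z) := by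
  unfold IsContraction
  have hz' : star z + z = 0 := by
    apply Complex.ext <;> simp [hz]
  have hU' : U * Uᴴ = 1 := mul_eq_one_comm.1 hU
  rw [specPow_conjTranspose, ← specPow_add hU, hz']
  have : (1 : Matrix (Fin n) (Fin n) ℂ) - specPow U a 0 =
      U * diagonal (fun i => if a i = 0 then 1 else 0) * Uᴴ := by
    conv_lhs => rw [← hU']
    unfold specPow
    rw [← sub_mul]
    congr 1
    conv_lhs => rw [← mul_one U, mul_assoc, one_mul, ← mul_sub, ← diagonal_one, diagonal_sub]
    congr 2
    ext i
    by_cases h : a i = 0 <;> simp [h]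
  rw [this]
  refine PosSemidef.mul_mul_conjTranspose_same (PosSemidef.diagonal fun i => ?_) U
  by_cases h : a i = 0 <;> simp [h]

theorem exists_specPow {n : ℕ} {M : Matrix (Fin n) (Fin n) ℂ} (hM : M.PosSemidef) :
    ∃ (U : Matrix (Fin n) (Fin n) ℂ) (a : Fin n → ℝ), Uᴴ * U = 1 ∧
      (∀ t : ℝ, mpow M t = specPow U a t) ∧ M = specPow U a 1 := by
  refine ⟨hM.1.eigenvectorUnitary, hM.1.eigenvalues, Unitary.coe_star_mul_self _, fun t => ?_, ?_⟩
  · rw [mpow, dif_pos hM.1, IsHermitian.cfc, Unitary.conjStarAlgAut_apply, specPow]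
    congr 3
    ext i
    rcases (hM.eigenvalues_nonneg i).eq_or_lt with h | h
    · simp [rpow0, ← h]
    · simp only [Function.comp_apply, rpow0_of_pos h, if_neg h.ne']
      rw [← Complex.ofReal_mul, ← Complex.ofReal_exp]
      rfl
  · conv_lhs => rw [hM.1.spectral_theorem]
    rw [Unitary.conjStarAlgAut_apply, specPow]
    congr 3
    ext i
    rcases (hM.eigenvalues_nonneg i).eq_or_lt with h | h
    · simp [← h]
    · simp only [Function.comp_apply, if_neg h.ne', one_mul]
      rw [← Complex.ofReal_exp, Real.exp_log h]
      rfl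

theorem exists_sorted_diagonalization {n : ℕ} {M : Matrix (Fin n) (Fin n) ℂ} (hM : M.PosSemidef) :
    ∃ (P : Matrix (Fin n) (Fin n) ℂ) (s : Fin n → ℝ), Pᴴ * P = 1 ∧ Antitone s ∧ (∀ i, 0 ≤ s i) ∧
      M = P * diagonal (fun i => (s i : ℂ)) * Pᴴ ∧
      ∀ t : ℝ, (mpow M t).trace.re = ∑ i, rpow0 (s i) t := by
  set U : Matrix (Fin n) (Fin n) ℂ := hM.1.eigenvectorUnitary.1 with hU
  have hUU : Uᴴ * U = 1 := Unitary.coe_star_mul_self _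
  set σ := Tuple.sort (fun i => - hM.1.eigenvalues i) with hσ
  refine ⟨U.submatrix id σ, hM.1.eigenvalues ∘ σ, ?_, ?_, fun i => hM.eigenvalues_nonneg _, ?_, ?_⟩
  · rw [conjTranspose_submatrix, ← submatrix_mul Uᴴ U σ id σ Function.bijective_id, hUU]
    exact submatrix_one_equiv σ
  · intro i j hij
    have := Tuple.monotone_sort (fun i => - hM.1.eigenvalues i) hij
    simpa using this
  · conv_lhs => rw [hM.1.spectral_theorem]
    rw [Unitary.conjStarAlgAut_apply]
    have h1 : diagonal (fun i => (((hM.1.eigenvalues ∘ σ) i : ℝ) : ℂ)) =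
        (diagonal (fun i => ((hM.1.eigenvalues i : ℝ) : ℂ))).submatrix σ σ := by
      rw [submatrix_diagonal_equiv]; rfl
    rw [h1, submatrix_mul_equiv, conjTranspose_submatrix, submatrix_mul_equiv, submatrix_id_id]
    rfl
  · intro t
    rw [mpow, dif_pos hM.1, IsHermitian.cfc, Unitary.conjStarAlgAut_apply, trace_mul_cycle,
      Unitary.coe_star_mul_self, one_mul, trace_diagonal, Complex.re_sum,
      ← Equiv.sum_comp σ]
    rfl

/-! ### Log-majorization by the three-lines theorem -/

theorem differentiable_det {k : ℕ} {F : ℂ → Matrix (Fin k) (Fin k) ℂ}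
    (hF : ∀ i j, Differentiable ℂ fun z => F z i j) : Differentiable ℂ fun z => (F z).det := by
  simp only [det_apply]
  fun_prop

theorem differentiable_minor {n k : ℕ} (U R : Matrix (Fin n) (Fin n) ℂ) (a b : Fin n → ℝ)
    (V W : Matrix (Fin n) (Fin k) ℂ) (ρ : ℂ) :
    Differentiable ℂ fun z : ℂ => (Vᴴ * (specPow U a (ρ * z) * specPow R b (ρ * z)) * W).det := by
  have h1 : ∀ (U : Matrix (Fin n) (Fin n) ℂ) (a : Fin n → ℝ) i j,
      Differentiable ℂ fun z : ℂ => specPow U a (ρ * z) i j := by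
    intro U a i j
    simp only [specPow, mul_apply, diagonal_apply]
    refine Differentiable.fun_sum fun l _ => Differentiable.mul_const
      (Differentiable.fun_sum fun m _ => Differentiable.const_mul ?_ _) _
    split_ifs <;> fun_prop
  have h2 : ∀ {l m p : ℕ} {F : ℂ → Matrix (Fin l) (Fin m) ℂ} {G : ℂ → Matrix (Fin m) (Fin p) ℂ},
      (∀ i j, Differentiable ℂ fun z => F z i j) → (∀ i j, Differentiable ℂ fun z => G z i j) →
      ∀ i j, Differentiable ℂ fun z => (F z * G z) i j := by
    intro l m p F G hF hG i j
    simp only [mul_apply]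
    exact Differentiable.fun_sum fun x _ => (hF i x).mul (hG x j)
  exact differentiable_det (h2 (h2 (fun _ _ => differentiable_const _) (h2 (h1 U a) (h1 R b)))
    fun _ _ => differentiable_const _)

open Complex.HadamardThreeLines in
theorem bddAbove_minor {n k : ℕ} (U R : Matrix (Fin n) (Fin n) ℂ) (a b : Fin n → ℝ)
    (V W : Matrix (Fin n) (Fin k) ℂ) (ρ : ℝ) :
    BddAbove ((norm ∘ fun z : ℂ =>
      (Vᴴ * (specPow U a (ρ * z) * specPow R b (ρ * z)) * W).det) '' verticalClosedStrip 0 1) := by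
  -- The determinant depends continuously on the two exponential vectors, which stay in a
  -- compact ball while `z` ranges over the strip.
  set G : (Fin n → ℂ) × (Fin n → ℂ) → ℂ := fun p =>
    (Vᴴ * ((U * diagonal p.1 * Uᴴ) * (R * diagonal p.2 * Rᴴ)) * W).det with hG
  have hGc : Continuous G := by
    simp only [hG]
    fun_prop
  set v : (Fin n → ℝ) → ℂ → Fin n → ℂ := fun a z i =>
    if a i = 0 then 0 else Complex.exp (ρ * z * Real.log (a i)) with hv
  have hvb : ∀ a : Fin n → ℝ, ∃ C, ∀ z ∈ verticalClosedStrip 0 1, ‖v a z‖ ≤ C := by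
    intro a
    refine ⟨∑ i, Real.exp |ρ * Real.log (a i)|, fun z hz => ?_⟩
    rw [pi_norm_le_iff_of_nonneg (Finset.sum_nonneg fun i _ => (Real.exp_pos _).le)]
    intro i
    refine le_trans ?_ (Finset.single_le_sum (f := fun i => Real.exp |ρ * Real.log (a i)|)
      (fun i _ => (Real.exp_pos _).le) (Finset.mem_univ i))
    simp only [hv]
    split_ifs
    · simpa using (Real.exp_pos _).le
    · rw [Complex.norm_exp]
      have hz0 : 0 ≤ z.re := hz.1
      have hz1 : z.re ≤ 1 := hz.2
      have : (ρ * z * (Real.log (a i) : ℂ)).re = z.re * (ρ * Real.log (a i)) := by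
        simp; ring
      rw [this]
      refine Real.exp_le_exp.2 ?_
      calc z.re * (ρ * Real.log (a i)) ≤ z.re * |ρ * Real.log (a i)| :=
            mul_le_mul_of_nonneg_left (le_abs_self _) hz0
        _ ≤ 1 * |ρ * Real.log (a i)| := mul_le_mul_of_nonneg_right hz1 (abs_nonneg _)
        _ = _ := one_mul _
  obtain ⟨C, hC⟩ := hvb a
  obtain ⟨D, hD⟩ := hvb b
  obtain ⟨K, hK⟩ := ((isCompact_closedBall (0 : Fin n → ℂ) C).prod
    (isCompact_closedBall (0 : Fin n → ℂ) D)).exists_bound_of_continuousOn hGc.continuousOn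
  refine ⟨K, ?_⟩
  rintro _ ⟨z, hz, rfl⟩
  exact hK (v a z, v b z) ⟨by simpa using hC z hz, by simpa using hD z hz⟩

/-- Log-majorization: the decreasing eigenvalues `s` of `B^{1/2} A B^{1/2}` and `t` of
`B^{r/2} A^r B^{r/2}` satisfy `(∏_{j<k} sⱼ)^r ≤ ∏_{j<k} tⱼ`. The minor
`z ↦ det (Vᴴ A^{rz/2} B^{rz/2} W)`, with `V` and `W` built from the top singular vectors of
`A^{1/2} B^{1/2}`, is bounded by `1` on `re z = 0` and by `√(∏ tⱼ)` on `re z = 1`, and equals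
`√(∏ sⱼ)` at `z = 1 / r`. -/
theorem log_majorization {n : ℕ} {U R P Q : Matrix (Fin n) (Fin n) ℂ} {a b s t : Fin n → ℝ}
    (hU : Uᴴ * U = 1) (hR : Rᴴ * R = 1) (hP : Pᴴ * P = 1) (hQ : Qᴴ * Q = 1)
    (ht : Antitone t) (ht0 : ∀ i, 0 ≤ t i) {r : ℝ} (hr : 1 ≤ r)
    {X Y : Matrix (Fin n) (Fin n) ℂ}
    (hX : X = specPow U a (1 / 2) * specPow R b (1 / 2))
    (hY : Y = specPow U a (r / 2) * specPow R b (r / 2))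
    (hXs : Xᴴ * X = P * diagonal (fun i => (s i : ℂ)) * Pᴴ)
    (hYt : Yᴴ * Y = Q * diagonal (fun i => (t i : ℂ)) * Qᴴ)
    {k : ℕ} (hk : k ≤ n) (hs : ∀ j : Fin k, 0 < s (Fin.castLE hk j)) :
    (∏ j : Fin k, s (Fin.castLE hk j)) ^ r ≤ ∏ j : Fin k, t (Fin.castLE hk j) := by
  have hr0 : 0 < r := by linarith
  set W : Matrix (Fin n) (Fin k) ℂ := P.submatrix id (Fin.castLE hk) with hW
  have hPW : Pᴴ * W = (1 : Matrix (Fin n) (Fin n) ℂ).submatrix id (Fin.castLE hk) := by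
    rw [← hP, hW]; rfl
  have hWP : Wᴴ * P = (1 : Matrix (Fin n) (Fin n) ℂ).submatrix (Fin.castLE hk) id := by
    rw [← hP, hW]; rfl
  have hWW : Wᴴ * W = 1 := by
    have : Wᴴ * W = (Pᴴ * P).submatrix (Fin.castLE hk) (Fin.castLE hk) := rfl
    rw [this, hP, submatrix_one _ (Fin.castLE_injective hk)]
  have hWXW : Wᴴ * (Xᴴ * X) * W = diagonal (fun j => (s (Fin.castLE hk j) : ℂ)) := by
    rw [hXs]
    rw [show Wᴴ * (P * diagonal (fun i => (s i : ℂ)) * Pᴴ) * W =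
      (Wᴴ * P) * diagonal (fun i => (s i : ℂ)) * (Pᴴ * W) by simp only [Matrix.mul_assoc], hPW, hWP]
    ext i j
    simp [mul_apply, diagonal_apply, one_apply, (Fin.castLE_injective hk).eq_iff]
    split_ifs with hij
    · rw [hij]
    · rfl
  set S : Matrix (Fin k) (Fin k) ℂ :=
    diagonal (fun j => (((√(s (Fin.castLE hk j)))⁻¹ : ℝ) : ℂ)) with hS
  have hSH : Sᴴ = S := by
    rw [hS, diagonal_conjTranspose]
    congr 1
    ext j
    simp
  set V : Matrix (Fin n) (Fin k) ℂ := X * W * S with hV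
  have hsq : ∀ j, (√(s (Fin.castLE hk j)))⁻¹ * s (Fin.castLE hk j) = √(s (Fin.castLE hk j)) := by
    intro j
    have h1 := Real.sqrt_pos.2 (hs j)
    rw [inv_mul_eq_div, div_eq_iff h1.ne', Real.mul_self_sqrt (hs j).le]
  have hVXW : Vᴴ * X * W = diagonal (fun j => ((√(s (Fin.castLE hk j)) : ℝ) : ℂ)) := by
    rw [show Vᴴ * X * W = S * (Wᴴ * (Xᴴ * X) * W) by
      simp only [hV, conjTranspose_mul, hSH, Matrix.mul_assoc], hWXW, hS, diagonal_mul_diagonal]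
    congr 1
    ext j
    rw [← Complex.ofReal_mul, hsq]
  have hVV : Vᴴ * V = 1 := by
    rw [show Vᴴ * V = (Vᴴ * X * W) * S by simp only [hV, Matrix.mul_assoc], hVXW, hS,
      diagonal_mul_diagonal, ← diagonal_one]
    congr 1
    ext j
    rw [← Complex.ofReal_mul, mul_inv_cancel₀ (Real.sqrt_pos.2 (hs j)).ne', Complex.ofReal_one]
  have hVc := IsContraction.of_mul_eq_one hVV
  have hWc := IsContraction.of_mul_eq_one hWW
  set g : ℂ → ℂ := fun z =>
    (Vᴴ * (specPow U a ((r / 2 : ℝ) * z) * specPow R b ((r / 2 : ℝ) * z)) * W).det with hg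
  -- On a vertical line the imaginary powers are contractions that can be moved into `V` and `W`.
  have hline : ∀ (w : ℂ), w.re = 0 → ∃ V' W' : Matrix (Fin n) (Fin k) ℂ,
      IsContraction V' ∧ IsContraction W' ∧ V'ᴴ = Vᴴ * specPow U a w ∧ W' = specPow R b w * W := by
    intro w hw
    refine ⟨specPow U a (star w) * V, specPow R b w * W,
      (specPow_isContraction hU a (by simpa using hw)).mul hVc,
      (specPow_isContraction hR b hw).mul hWc, ?_, rfl⟩
    rw [conjTranspose_mul, specPow_conjTranspose, star_star]
  have h0 : ∀ z ∈ Complex.re ⁻¹' {(0 : ℝ)}, ‖g z‖ ≤ 1 := by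
    intro z hz
    have hz' : z.re = 0 := hz
    obtain ⟨V', W', hV', hW', e1, e2⟩ := hline ((r / 2 : ℝ) * z) (by simp [hz'])
    have h1 := norm_det_sq_le hk (X := (1 : Matrix (Fin n) (Fin n) ℂ)) (Q := 1)
      (t := fun _ => 1) (by simp) (by simp) (fun _ _ _ => le_rfl) (fun _ => zero_le_one) hV' hW'
    have h2 : g z = (V'ᴴ * (1 : Matrix (Fin n) (Fin n) ℂ) * W').det := by
      simp only [hg, e1, e2, Matrix.mul_one, Matrix.mul_assoc]
    rw [h2]
    simp only [Finset.prod_const_one] at h1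
    exact (sq_le_one_iff₀ (norm_nonneg _)).1 h1
  have h1 : ∀ z ∈ Complex.re ⁻¹' {(1 : ℝ)}, ‖g z‖ ≤ √(∏ j : Fin k, t (Fin.castLE hk j)) := by
    intro z hz
    have hz' : z.re = 1 := hz
    obtain ⟨V', W', hV', hW', e1, e2⟩ := hline ((r / 2 : ℝ) * (z - 1)) (by simp [hz'])
    have h1 := norm_det_sq_le hk (mul_eq_one_comm.1 hQ) hYt ht ht0 hV' hW'
    have h2 : g z = (V'ᴴ * Y * W').det := by
      have hz1 : ((r / 2 : ℝ) : ℂ) * z = (r / 2 : ℝ) * (z - 1) + r / 2 := by push_cast; ring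
      have hz2 : ((r / 2 : ℝ) : ℂ) * z = r / 2 + (r / 2 : ℝ) * (z - 1) := by push_cast; ring
      have e3 : specPow U a ((r / 2 : ℝ) * z) =
          specPow U a ((r / 2 : ℝ) * (z - 1)) * specPow U a (r / 2) := by
        rw [hz1, specPow_add hU]
      have e4 : specPow R b ((r / 2 : ℝ) * z) =
          specPow R b (r / 2) * specPow R b ((r / 2 : ℝ) * (z - 1)) := by
        rw [hz2, specPow_add hR]
      simp only [hg]
      rw [e1, e2, e3, e4, hY]
      simp only [Matrix.mul_assoc]
    rw [h2]
    exact Real.le_sqrt_of_sq_le h1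
  have hθ : (((1 / r : ℝ) : ℂ)).re = 1 / r := Complex.ofReal_re _
  have hθ1 : 1 / r ≤ 1 := by rw [div_le_one hr0]; exact hr
  have key := Complex.HadamardThreeLines.norm_le_interp_of_mem_verticalClosedStrip₀₁' g
    (z := ((1 / r : ℝ) : ℂ)) ⟨by rw [hθ]; positivity, by rw [hθ]; exact hθ1⟩
    (differentiable_minor U R a b V W _).diffContOnCl
    (bddAbove_minor U R a b V W (r / 2)) h0 h1
  have hgθ : ‖g ((1 / r : ℝ) : ℂ)‖ = √(∏ j : Fin k, s (Fin.castLE hk j)) := by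
    have : (((r / 2 : ℝ) : ℂ)) * ((1 / r : ℝ) : ℂ) = 1 / 2 := by
      rw [← Complex.ofReal_mul, show r / 2 * (1 / r) = 1 / 2 by field_simp]
      push_cast; rfl
    simp only [hg]
    rw [this, ← hX, hVXW, det_diagonal, ← Complex.ofReal_prod, Complex.norm_real,
      Real.norm_of_nonneg (Finset.prod_nonneg fun j _ => Real.sqrt_nonneg _),
      Real.sqrt_prod _ fun j _ => (hs j).le]
  rw [hgθ, hθ, Real.one_rpow, one_mul] at key
  have hs0 : 0 ≤ ∏ j : Fin k, s (Fin.castLE hk j) := Finset.prod_nonneg fun j _ => (hs j).le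
  have htp : 0 ≤ ∏ j : Fin k, t (Fin.castLE hk j) := Finset.prod_nonneg fun j _ => ht0 _
  have h2 := Real.rpow_le_rpow (Real.sqrt_nonneg _) key hr0.le
  rw [← Real.rpow_mul (Real.sqrt_nonneg _), one_div_mul_cancel hr0.ne', Real.rpow_one] at h2
  have h3 := pow_le_pow_left₀ (Real.rpow_nonneg (Real.sqrt_nonneg _) r) h2 2
  rw [Real.sq_sqrt htp, ← Real.rpow_mul_natCast (Real.sqrt_nonneg _), mul_comm r,
    Real.rpow_natCast_mul (Real.sqrt_nonneg _), Real.sq_sqrt hs0] at h3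
  exact h3

/-- **Araki–Lieb–Thirring inequality, first part.** For positive semi-definite matrices
`A, B`, `q ≥ 0` and `r ≥ 1`,
`tr[(B^{1/2} A B^{1/2})^{rq}] ≤ tr[(B^{r/2} A^r B^{r/2})^q]`. -/
theorem araki_lieb_thirring_of_one_le {n : ℕ} (A B : Matrix (Fin n) (Fin n) ℂ)
    (hA : A.PosSemidef) (hB : B.PosSemidef) (q r : ℝ) (hq : 0 ≤ q) (hr : 1 ≤ r) :
    (mpow (mpow B (1 / 2) * A * mpow B (1 / 2)) (r * q)).trace.re ≤
      (mpow (mpow B (r / 2) * mpow A r * mpow B (r / 2)) q).trace.re := by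
  obtain ⟨U, a, hU, hUp, hA1⟩ := exists_specPow hA
  obtain ⟨R, b, hR, hRp, -⟩ := exists_specPow hB
  set X := specPow U a (1 / 2) * specPow R b (1 / 2) with hX
  set Y := specPow U a (r / 2) * specPow R b (r / 2) with hY
  have hXX : mpow B (1 / 2) * A * mpow B (1 / 2) = Xᴴ * X := by
    have h1 : (1 : ℂ) = 1 / 2 + 1 / 2 := by norm_num
    have h2 : star (1 / 2 : ℂ) = 1 / 2 := by simp
    have h3 : ((1 / 2 : ℝ) : ℂ) = 1 / 2 := by push_cast; rfl
    have h4 : A = specPow U a (1 / 2) * specPow U a (1 / 2) := by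
      rw [← specPow_add hU, ← h1]; exact hA1
    rw [hRp, h3, h4, hX, conjTranspose_mul, specPow_conjTranspose, specPow_conjTranspose, h2]
    simp only [mul_assoc]
  have hYY : mpow B (r / 2) * mpow A r * mpow B (r / 2) = Yᴴ * Y := by
    have h1 : (r : ℂ) = r / 2 + r / 2 := by ring
    have h2 : star (r / 2 : ℂ) = r / 2 := by simp
    have h3 : ((r / 2 : ℝ) : ℂ) = r / 2 := by push_cast; rfl
    have h4 : mpow A r = specPow U a (r / 2) * specPow U a (r / 2) := by
      rw [← specPow_add hU, ← h1]; exact hUp r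
    rw [hRp, h3, h4, hY, conjTranspose_mul, specPow_conjTranspose, specPow_conjTranspose, h2]
    simp only [mul_assoc]
  rw [hXX, hYY]
  obtain ⟨P, s, hP, hs, hs0, hXs, hstr⟩ :=
    exists_sorted_diagonalization (posSemidef_conjTranspose_mul_self X)
  obtain ⟨Q, t, hQ, ht, ht0, hYt, httr⟩ :=
    exists_sorted_diagonalization (posSemidef_conjTranspose_mul_self Y)
  rw [hstr, httr]
  -- Extend the eigenvalue lists by zero to sequences on `ℕ`.
  set s' : ℕ → ℝ := fun i => if h : i < n then s ⟨i, h⟩ else 0 with hs'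
  set t' : ℕ → ℝ := fun i => if h : i < n then t ⟨i, h⟩ else 0 with ht'
  have hs'0 : ∀ i, 0 ≤ s' i := fun i => by
    simp only [hs']; split_ifs
    · exact hs0 _
    · exact le_rfl
  have ht'0 : ∀ i, 0 ≤ t' i := fun i => by
    simp only [ht']; split_ifs
    · exact ht0 _
    · exact le_rfl
  have hanti : Antitone s' := by
    intro i j hij
    by_cases hj : j < n
    · simp only [hs', dif_pos hj, dif_pos (hij.trans_lt hj)]
      exact hs (by simpa using hij)
    · rw [show s' j = 0 by simp only [hs', dif_neg hj]]
      exact hs'0 i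
  have hss : ∀ i : Fin n, s i = s' i := fun i => by simp [hs']
  have htt : ∀ i : Fin n, t i = t' i := fun i => by simp [ht']
  simp only [hss, htt]
  rw [Fin.sum_univ_eq_sum_range (fun i => rpow0 (s' i) (r * q)),
    Fin.sum_univ_eq_sum_range (fun i => rpow0 (t' i) q)]
  refine sum_rpow0_le_of_log_majorization hanti hs'0 ht'0 hq (by linarith) ?_ n
  intro k hkpos
  have hk : k ≤ n := by
    by_contra hlt
    have := hkpos n (not_le.1 hlt)
    simp [hs'] at this
  have h := log_majorization hU hR hP hQ ht ht0 hr hX hY hXs hYt hk (fun j => by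
    rw [hss]; exact hkpos j j.2)
  simp only [hss, htt, Fin.val_castLE] at h
  rwa [Fin.prod_univ_eq_prod_range s', Fin.prod_univ_eq_prod_range t'] at h
end

section
/- Let A and B be positive semi-definite n×n complex matrices, q ≥ 0, and 0 ≤ r < 1. Then tr[(B^{1/2} A B^{1/2})^{rq}] ≥ tr[(B^{r/2} A^r B^{r/2})^{q}] (Araki–Lieb–Thirring inequality, second part). -/
/-!
Write `X_r = A^{r/2} B^{r/2}`, so that `B^{r/2} A^r B^{r/2} = X_rᴴ X_r`, with eigenvalues `xᵢ`, and
let `yⱼ` be the eigenvalues of `X_1ᴴ X_1 = B^{1/2} A B^{1/2}`. The heart of the proof is that the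
`xᵢ` are weakly log-majorized by the `yⱼ^r`, stated as
`∑ (log xᵢ - t)₊ ≤ ∑ (r log yⱼ - t)₊` for every real `t` (`hinge_eigenvalues_le`).

Instead of antisymmetric tensor powers, this uses determinants of compressions. Let the columns of
`V` be the eigenvectors of `X_rᴴ X_r` with `xᵢ > c^r`, and those of `W` the matching left singular
vectors, so that `det (Wᴴ X_r V)² = ∏_{xᵢ > c^r} xᵢ`. The function
`z ↦ det (Wᴴ A^{z/2} B^{z/2} V)`, with powers taken on the supports, is entire and bounded on
`0 ≤ re z ≤ 1`. Its modulus is at most `1` on `re z = 0`, and on `re z = 1` its square is at most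
`c^k ∏ max (yⱼ / c) 1`, where `k` is the number of columns (`det_compression_le`). Hadamard's three
lines theorem at `z = r` gives `∏_{xᵢ > c^r} xᵢ ≤ (c^k ∏ max (yⱼ / c) 1)^r` (`norm_det_le_rpow`),
and taking logarithms gives the claim.

For `r, q > 0`, integrating the hinge inequalities against `exp (q t) dt` yields
`∑ xᵢ^q ≤ ∑ yⱼ^{rq}` (`sum_exp_le_of_hinge`). If `r q = 0`, the right-hand side is the rank of
`X_1`, which bounds the rank of `X_r = A^{(r-1)/2} X_1 B^{(r-1)/2}`.
-/

open Matrix Filter ComplexOrder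

/-! ### Determinants of positive semi-definite matrices -/

lemma one_le_det_one_add {k : Type*} [Fintype k] [DecidableEq k] {C : Matrix k k ℂ}
    (hC : C.PosSemidef) : 1 ≤ (1 + C).det := by
  have h : (1 + C).det = ∏ i, (1 + (hC.1.eigenvalues i : ℂ)) := by
    have h1 : 1 + C = Unitary.conjStarAlgAut ℂ _ hC.1.eigenvectorUnitary
        (diagonal (fun i => 1 + (hC.1.eigenvalues i : ℂ))) := by
      conv_lhs => rw [hC.1.spectral_theorem]
      rw [← map_one (Unitary.conjStarAlgAut ℂ _ hC.1.eigenvectorUnitary), ← map_add,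
        ← diagonal_one, diagonal_add]
      rfl
    rw [h1, Unitary.conjStarAlgAut_apply, det_mul_right_comm]
    simp
  rw [h]
  have h2 : (∏ i, (1 + (hC.1.eigenvalues i : ℂ))) =
      ((∏ i, (1 + hC.1.eigenvalues i) : ℝ) : ℂ) := by push_cast; rfl
  rw [h2]
  have h3 : ∏ _i : k, (1 : ℝ) ≤ ∏ i, (1 + hC.1.eigenvalues i) :=
    Finset.prod_le_prod (fun _ _ => zero_le_one)
      fun i _ => by linarith [hC.eigenvalues_nonneg i]
  rw [Finset.prod_const_one] at h3
  exact_mod_cast h3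

open scoped MatrixOrder in
/-- Monotonicity of the determinant for the Loewner order. -/
lemma det_mono_of_posSemidef {k : Type*} [Fintype k] [DecidableEq k] {A B : Matrix k k ℂ}
    (hA : A.PosSemidef) (hAB : (B - A).PosSemidef) : A.det ≤ B.det := by
  have hB : B.PosSemidef := by simpa using hA.add hAB
  by_cases hdet : A.det = 0
  · rw [hdet]; exact hB.det_nonneg
  have hu : IsUnit A.det := isUnit_iff_ne_zero.mpr hdet
  obtain ⟨R, hR⟩ := CStarAlgebra.nonneg_iff_eq_star_mul_self.mp hA.inv.nonneg
  rw [star_eq_conjTranspose] at hR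
  have hBA : B = A * (1 + Rᴴ * (R * (B - A))) := by
    rw [← Matrix.mul_assoc, ← hR, Matrix.mul_add, ← Matrix.mul_assoc, Matrix.mul_nonsing_inv A hu]
    simp
  have h1 : 1 ≤ (1 + Rᴴ * (R * (B - A))).det := by
    rw [Matrix.det_one_add_mul_comm]
    exact one_le_det_one_add (hAB.mul_mul_conjTranspose_same R)
  calc A.det = A.det * 1 := (mul_one _).symm
    _ ≤ A.det * (1 + Rᴴ * (R * (B - A))).det := mul_le_mul_of_nonneg_left h1 hA.det_nonneg
    _ = B.det := by rw [← det_mul, ← hBA]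

/-- The adjoint of a contraction is a contraction: both conditions are Schur complements of the
same block matrix. -/
lemma posSemidef_one_sub_swap {m k : Type*} [Fintype m] [DecidableEq m] [Fintype k] [DecidableEq k]
    {V : Matrix m k ℂ} (h : (1 - Vᴴ * V).PosSemidef) : (1 - V * Vᴴ).PosSemidef := by
  let : Invertible (1 : Matrix m m ℂ) := invertibleOne
  let : Invertible (1 : Matrix k k ℂ) := invertibleOne
  have h1 := (PosDef.fromBlocks₁₁ V (1 : Matrix k k ℂ) (PosDef.one (n := m) (R := ℂ))).mpr
    (by simpa using h)
  have h2 := (PosDef.fromBlocks₂₂ (1 : Matrix m m ℂ) V (PosDef.one (n := k) (R := ℂ))).mp h1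
  simpa using h2

/-- Multiplying `Z` on the left by the adjoint of a contraction does not increase the determinant
of its Gram matrix. -/
lemma norm_det_mul_sq_le {m k : Type*} [Fintype m] [DecidableEq m] [Fintype k] [DecidableEq k]
    {W Z : Matrix m k ℂ} (hW : (1 - Wᴴ * W).PosSemidef) :
    ((‖(Wᴴ * Z).det‖ ^ 2 : ℝ) : ℂ) ≤ (Zᴴ * Z).det := by
  have h1 : ((‖(Wᴴ * Z).det‖ ^ 2 : ℝ) : ℂ) = ((Wᴴ * Z)ᴴ * (Wᴴ * Z)).det := by
    rw [det_mul, det_conjTranspose]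
    push_cast
    exact (Complex.conj_mul' _).symm
  rw [h1]
  refine det_mono_of_posSemidef (posSemidef_conjTranspose_mul_self _) ?_
  have := (posSemidef_one_sub_swap hW).conjTranspose_mul_mul_same Z
  convert this using 1
  simp [Matrix.mul_sub, Matrix.sub_mul, Matrix.mul_assoc]

/-- A compression of `H` to `k` dimensions has determinant at most `c ^ k ∏ max (yᵢ / c) 1`, where
`yᵢ` are the eigenvalues of `H`. This stands in for the bound by the product of the `k` largest
eigenvalues: `H ≤ c (1 + SᴴS)` with `S Sᴴ` diagonal, and `det (1 + (S V)ᴴ (S V))` is estimated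
after swapping the factors. -/
lemma det_compression_le {m k : Type*} [Fintype m] [DecidableEq m] [Fintype k] [DecidableEq k]
    {H : Matrix m m ℂ} (hH : H.PosSemidef) {V : Matrix m k ℂ} (hV : (1 - Vᴴ * V).PosSemidef)
    {c : ℝ} (hc : 0 < c) :
    (Vᴴ * H * V).det ≤ ((c ^ Fintype.card k * ∏ i, max (hH.1.eigenvalues i / c) 1 : ℝ) : ℂ) := by
  set y := hH.1.eigenvalues with hy
  set U : Matrix m m ℂ := hH.1.eigenvectorUnitary.1 with hU
  have hUU : Uᴴ * U = 1 := Unitary.coe_star_mul_self hH.1.eigenvectorUnitary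
  have hUU' : U * Uᴴ = 1 := Unitary.coe_mul_star_self hH.1.eigenvectorUnitary
  have hspec : H = U * diagonal (fun i => (y i : ℂ)) * Uᴴ := by
    conv_lhs => rw [hH.1.spectral_theorem]
    rfl
  set d : m → ℝ := fun i => max (y i / c) 1 - 1 with hd
  have hd0 : ∀ i, 0 ≤ d i := fun i => by simp [hd]
  set S : Matrix m m ℂ := diagonal (fun i => ((√(d i) : ℝ) : ℂ)) * Uᴴ with hS
  have hdd : diagonal (fun i => ((√(d i) : ℝ) : ℂ)) * diagonal (fun i => ((√(d i) : ℝ) : ℂ))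
      = diagonal (fun i => (d i : ℂ)) := by
    rw [diagonal_mul_diagonal]
    congr 1; ext i
    rw [← Complex.ofReal_mul, Real.mul_self_sqrt (hd0 i)]
  have hdc : (diagonal (fun i => ((√(d i) : ℝ) : ℂ)))ᴴ = diagonal (fun i => ((√(d i) : ℝ) : ℂ)) := by
    rw [diagonal_conjTranspose]; congr 1; ext i; simp
  have hSS : S * Sᴴ = diagonal (fun i => (d i : ℂ)) := by
    rw [hS, conjTranspose_mul, conjTranspose_conjTranspose, hdc, Matrix.mul_assoc,
      ← Matrix.mul_assoc Uᴴ, hUU, Matrix.one_mul, hdd]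
  have hSS' : Sᴴ * S = U * diagonal (fun i => (d i : ℂ)) * Uᴴ := by
    rw [hS, conjTranspose_mul, conjTranspose_conjTranspose, hdc, ← hdd]
    simp only [Matrix.mul_assoc]
  have hle : ((c : ℂ) • (1 + Sᴴ * S) - H).PosSemidef := by
    have h1 : (c : ℂ) • (1 + Sᴴ * S) - H =
        U * diagonal (fun i => ((c * (1 + d i) - y i : ℝ) : ℂ)) * Uᴴ := by
      have : diagonal (fun i => ((c * (1 + d i) - y i : ℝ) : ℂ)) =
          (c : ℂ) • (1 + diagonal (fun i => (d i : ℂ))) - diagonal (fun i => (y i : ℂ)) := by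
        ext i j
        by_cases hij : i = j <;> simp [hij, mul_add]
      rw [this, Matrix.mul_sub, Matrix.sub_mul, ← hspec, Matrix.mul_smul, Matrix.smul_mul,
        Matrix.mul_add, Matrix.add_mul, ← hSS', Matrix.mul_one, hUU']
    rw [h1]
    refine PosSemidef.mul_mul_conjTranspose_same (PosSemidef.diagonal fun i => ?_) U
    have : 0 ≤ c * (1 + d i) - y i := by
      have h2 : y i / c ≤ 1 + d i := by simp [hd]
      have := (div_le_iff₀ hc).mp h2
      linarith
    simpa using (Complex.zero_le_real.mpr this)
  have step1 : (Vᴴ * H * V).det ≤ ((c : ℂ) • (1 + (S * V)ᴴ * (S * V))).det := by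
    refine det_mono_of_posSemidef (hH.conjTranspose_mul_mul_same V) ?_
    have h2 := (hle.conjTranspose_mul_mul_same V).add
      (hV.smul (show (0 : ℂ) ≤ (c : ℂ) from Complex.zero_le_real.mpr hc.le))
    convert h2 using 1
    simp only [Matrix.mul_sub, Matrix.sub_mul, Matrix.mul_smul, Matrix.smul_mul, Matrix.mul_add,
      Matrix.add_mul, Matrix.mul_one, conjTranspose_mul, smul_add, smul_sub, Matrix.mul_assoc]
    abel
  have step2 : (1 + (S * V)ᴴ * (S * V)).det ≤ (1 + S * Sᴴ).det := by
    rw [Matrix.det_one_add_mul_comm]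
    refine det_mono_of_posSemidef (PosSemidef.one.add (posSemidef_self_mul_conjTranspose _)) ?_
    have := (posSemidef_one_sub_swap hV).mul_mul_conjTranspose_same S
    convert this using 1
    simp [Matrix.mul_sub, Matrix.sub_mul, Matrix.mul_assoc]
  have step3 : (1 + S * Sᴴ).det = ((∏ i, max (y i / c) 1 : ℝ) : ℂ) := by
    rw [hSS, ← diagonal_one, diagonal_add, det_diagonal]
    push_cast
    exact Finset.prod_congr rfl fun i _ => by simp [hd]
  refine step1.trans ?_
  rw [det_smul, Complex.ofReal_mul, ← step3, Complex.ofReal_pow]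
  refine mul_le_mul_of_nonneg_left step2 ?_
  rw [← Complex.ofReal_pow]
  exact Complex.zero_le_real.mpr (by positivity)

/-! ### Complex powers on the support -/

/-- The power `M ^ z` of a Hermitian matrix with complex exponent, taken on the support of `M`.
It is an entire function of `z`, with no invertibility assumption on `M`. -/
noncomputable def suppPow {m : Type*} [Fintype m] [DecidableEq m] {M : Matrix m m ℂ}
    (hM : M.IsHermitian) (z : ℂ) : Matrix m m ℂ :=
  hM.eigenvectorUnitary.1 *
    diagonal (fun i => if hM.eigenvalues i = 0 then 0
      else Complex.exp (z * (Real.log (hM.eigenvalues i) : ℂ))) * hM.eigenvectorUnitary.1ᴴ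

section suppPow

variable {m : Type*} [Fintype m] [DecidableEq m] {M : Matrix m m ℂ}

lemma suppPow_mul (hM : M.IsHermitian) (z w : ℂ) :
    suppPow hM z * suppPow hM w = suppPow hM (z + w) := by
  have hUU : hM.eigenvectorUnitary.1ᴴ * hM.eigenvectorUnitary.1 = 1 :=
    Unitary.coe_star_mul_self hM.eigenvectorUnitary
  unfold suppPow
  simp only [Matrix.mul_assoc]
  rw [← Matrix.mul_assoc _ᴴ, hUU, Matrix.one_mul, ← Matrix.mul_assoc (diagonal _),
    diagonal_mul_diagonal]
  congr 3
  ext i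
  split_ifs
  · simp
  · rw [← Complex.exp_add, add_mul]

lemma suppPow_conjTranspose (hM : M.IsHermitian) (z : ℂ) :
    (suppPow hM z)ᴴ = suppPow hM (starRingEnd ℂ z) := by
  unfold suppPow
  rw [conjTranspose_mul, conjTranspose_mul, conjTranspose_conjTranspose, diagonal_conjTranspose,
    ← Matrix.mul_assoc]
  congr 3
  ext i
  simp only [Pi.star_apply]
  split_ifs
  · simp
  · rw [RCLike.star_def, ← Complex.exp_conj, map_mul, Complex.conj_ofReal]

lemma suppPow_one (hM : M.PosSemidef) : suppPow hM.1 1 = M := by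
  conv_rhs => rw [hM.1.spectral_theorem]
  rw [Unitary.conjStarAlgAut_apply]
  unfold suppPow
  rw [star_eq_conjTranspose]
  congr 3
  ext i
  split_ifs with h
  · simp [h]
  · have h0 : 0 < hM.1.eigenvalues i := lt_of_le_of_ne (hM.eigenvalues_nonneg i) (Ne.symm h)
    rw [one_mul, ← Complex.ofReal_exp, Real.exp_log h0]
    rfl

lemma mpow_eq_suppPow {n : ℕ} {M : Matrix (Fin n) (Fin n) ℂ} (hM : M.PosSemidef) (t : ℝ) :
    mpow M t = suppPow hM.1 t := by
  unfold mpow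
  rw [dif_pos hM.1, Matrix.IsHermitian.cfc, Unitary.conjStarAlgAut_apply]
  unfold suppPow
  rw [star_eq_conjTranspose]
  congr 3
  ext i
  simp only [Function.comp_apply, rpow0]
  split_ifs with h
  · simp
  · have h0 : 0 < hM.1.eigenvalues i := lt_of_le_of_ne (hM.eigenvalues_nonneg i) (Ne.symm h)
    have : Real.rpow (hM.1.eigenvalues i) t = Real.exp (Real.log (hM.1.eigenvalues i) * t) :=
      Real.rpow_def_of_pos h0 t
    rw [this, mul_comm]
    simp

/-- Purely imaginary powers are partial isometries. -/
lemma suppPow_contraction (hM : M.IsHermitian) {z : ℂ} (hz : z.re = 0) :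
    (1 - (suppPow hM z)ᴴ * suppPow hM z).PosSemidef := by
  have hUU' : hM.eigenvectorUnitary.1 * hM.eigenvectorUnitary.1ᴴ = 1 :=
    Unitary.coe_mul_star_self hM.eigenvectorUnitary
  have h0 : starRingEnd ℂ z + z = 0 := by
    apply Complex.ext <;> simp [hz]
  rw [suppPow_conjTranspose, suppPow_mul, h0]
  have : 1 - suppPow hM 0 = hM.eigenvectorUnitary.1 *
      diagonal (fun i => if hM.eigenvalues i = 0 then 1 else 0) * hM.eigenvectorUnitary.1ᴴ := by
    have hd : diagonal (fun i => if hM.eigenvalues i = 0 then (1 : ℂ) else 0) =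
        1 - diagonal (fun i => if hM.eigenvalues i = 0 then (0 : ℂ) else 1) := by
      rw [← diagonal_one, diagonal_sub]
      congr 1; ext i
      split_ifs <;> simp
    rw [hd, Matrix.mul_sub, Matrix.sub_mul, Matrix.mul_one, hUU']
    simp [suppPow]
  rw [this]
  refine PosSemidef.mul_mul_conjTranspose_same (PosSemidef.diagonal fun i => ?_) _
  simp only [Pi.zero_apply]
  split_ifs <;> simp

end suppPow

lemma contraction_mul {m k : Type*} [Fintype m] [DecidableEq m] [Fintype k] [DecidableEq k]
    {P : Matrix m m ℂ} {V : Matrix m k ℂ} (hP : (1 - Pᴴ * P).PosSemidef)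
    (hV : (1 - Vᴴ * V).PosSemidef) : (1 - (P * V)ᴴ * (P * V)).PosSemidef := by
  have := hV.add (hP.conjTranspose_mul_mul_same V)
  convert this using 1
  simp [Matrix.mul_sub, Matrix.sub_mul, Matrix.mul_assoc]

/-! ### Interpolation on a vertical strip -/

/-- Entire functions that are bounded on the strip `0 ≤ re z ≤ 1`. -/
def StripBounded (f : ℂ → ℂ) : Prop :=
  Differentiable ℂ f ∧ ∃ C : ℝ, ∀ z : ℂ, 0 ≤ z.re → z.re ≤ 1 → ‖f z‖ ≤ C

namespace StripBounded

lemma const (a : ℂ) : StripBounded fun _ => a :=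
  ⟨differentiable_const a, ‖a‖, fun _ _ _ => le_rfl⟩

lemma add {f g : ℂ → ℂ} (hf : StripBounded f) (hg : StripBounded g) :
    StripBounded fun z => f z + g z := by
  obtain ⟨hf, C, hC⟩ := hf
  obtain ⟨hg, D, hD⟩ := hg
  exact ⟨hf.add hg, C + D, fun z h0 h1 =>
    (norm_add_le _ _).trans (add_le_add (hC z h0 h1) (hD z h0 h1))⟩

lemma mul {f g : ℂ → ℂ} (hf : StripBounded f) (hg : StripBounded g) :
    StripBounded fun z => f z * g z := by
  obtain ⟨hf, C, hC⟩ := hf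
  obtain ⟨hg, D, hD⟩ := hg
  refine ⟨hf.mul hg, C * D, fun z h0 h1 => ?_⟩
  rw [norm_mul]
  exact mul_le_mul (hC z h0 h1) (hD z h0 h1) (norm_nonneg _) ((norm_nonneg _).trans (hC z h0 h1))

lemma sum {ι : Type*} (s : Finset ι) {f : ι → ℂ → ℂ} (hf : ∀ i, StripBounded (f i)) :
    StripBounded fun z => ∑ i ∈ s, f i z := by
  classical
  induction s using Finset.induction_on with
  | empty => simpa using const 0
  | insert a s ha ih =>
    simp only [Finset.sum_insert ha]
    exact (hf a).add ih

lemma prod {ι : Type*} (s : Finset ι) {f : ι → ℂ → ℂ} (hf : ∀ i, StripBounded (f i)) :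
    StripBounded fun z => ∏ i ∈ s, f i z := by
  classical
  induction s using Finset.induction_on with
  | empty => simpa using const 1
  | insert a s ha ih =>
    simp only [Finset.prod_insert ha]
    exact (hf a).mul ih

lemma matrix_mul {a b c : Type*} [Fintype b] {X : ℂ → Matrix a b ℂ} {Y : ℂ → Matrix b c ℂ}
    (hX : ∀ i j, StripBounded fun z => X z i j) (hY : ∀ i j, StripBounded fun z => Y z i j)
    (i : a) (j : c) : StripBounded fun z => (X z * Y z) i j := by
  simp only [Matrix.mul_apply]
  exact sum _ fun l => (hX i l).mul (hY l j)

lemma matrix_det {k : Type*} [Fintype k] [DecidableEq k] {X : ℂ → Matrix k k ℂ}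
    (hX : ∀ i j, StripBounded fun z => X z i j) : StripBounded fun z => (X z).det := by
  simp only [Matrix.det_apply']
  exact sum _ fun σ => (const _).mul (prod _ fun i => hX _ _)

lemma suppPow {m : Type*} [Fintype m] [DecidableEq m] {M : Matrix m m ℂ}
    (hM : M.IsHermitian) (i j : m) : StripBounded fun z => suppPow hM (z / 2) i j := by
  unfold _root_.suppPow
  refine matrix_mul (Y := fun _ => hM.eigenvectorUnitary.1ᴴ)
    (matrix_mul (X := fun _ => hM.eigenvectorUnitary.1) (fun _ _ => const _) fun a b => ?_)
    (fun _ _ => const _) i j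
  by_cases hab : a = b
  · subst hab
    simp only [diagonal_apply_eq]
    by_cases h : hM.eigenvalues a = 0
    · simpa [h] using const 0
    · simp only [h, if_false]
      refine ⟨by fun_prop, Real.exp |Real.log (hM.eigenvalues a)|, fun z h0 h1 => ?_⟩
      rw [Complex.norm_exp, Real.exp_le_exp]
      have : (z / 2 * (Real.log (hM.eigenvalues a) : ℂ)).re =
          z.re / 2 * Real.log (hM.eigenvalues a) := by
        rw [Complex.re_mul_ofReal]; simp
      rw [this]
      calc z.re / 2 * Real.log (hM.eigenvalues a)
          ≤ z.re / 2 * |Real.log (hM.eigenvalues a)| :=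
            mul_le_mul_of_nonneg_left (le_abs_self _) (by linarith)
        _ ≤ 1 * |Real.log (hM.eigenvalues a)| :=
            mul_le_mul_of_nonneg_right (by linarith) (abs_nonneg _)
        _ = _ := one_mul _
  · simpa [hab] using const 0

end StripBounded

/-- The three lines theorem applied to `z ↦ det (Wᴴ A^{z/2} B^{z/2} V)`, which is at most `1` in
modulus on `re z = 0` and controlled by `det_compression_le` on `re z = 1`. -/
lemma norm_det_le_rpow {m k : Type*} [Fintype m] [DecidableEq m] [Fintype k] [DecidableEq k]
    {A B : Matrix m m ℂ} (hA : A.IsHermitian) (hB : B.IsHermitian) {W V : Matrix m k ℂ}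
    (hW : (1 - Wᴴ * W).PosSemidef) (hV : (1 - Vᴴ * V).PosSemidef) {c : ℝ} (hc : 0 < c)
    {X : Matrix m m ℂ} (hX : X = suppPow hA (1 / 2) * suppPow hB (1 / 2))
    {r : ℝ} (hr0 : 0 ≤ r) (hr1 : r ≤ 1) :
    ‖(Wᴴ * (suppPow hA (r / 2) * suppPow hB (r / 2) * V)).det‖ ≤
      (√(c ^ Fintype.card k *
        ∏ i, max ((isHermitian_conjTranspose_mul_self X).eigenvalues i / c) 1)) ^ r := by
  set Q : ℝ := c ^ Fintype.card k *
    ∏ i, max ((isHermitian_conjTranspose_mul_self X).eigenvalues i / c) 1 with hQ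
  set F : ℂ → ℂ := fun z => (Wᴴ * (suppPow hA (z / 2) * suppPow hB (z / 2) * V)).det with hF
  have hFb : StripBounded F := StripBounded.matrix_det fun i j =>
    StripBounded.matrix_mul (X := fun _ => Wᴴ) (fun _ _ => StripBounded.const _)
      (StripBounded.matrix_mul (Y := fun _ => V) (StripBounded.matrix_mul
        (StripBounded.suppPow hA) (StripBounded.suppPow hB)) (fun _ _ => StripBounded.const _)) i j
  obtain ⟨hdiff, C, hC⟩ := hFb
  have h0 : ∀ z ∈ Complex.re ⁻¹' {(0 : ℝ)}, ‖F z‖ ≤ 1 := by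
    intro z hz
    have hz' : (z / 2).re = 0 := by simpa using hz
    have hZ := contraction_mul (suppPow_contraction hA hz')
      (contraction_mul (suppPow_contraction hB hz') hV)
    have h1 := (norm_det_mul_sq_le
      (Z := suppPow hA (z / 2) * (suppPow hB (z / 2) * V)) hW).trans
      (det_mono_of_posSemidef (posSemidef_conjTranspose_mul_self _) hZ)
    rw [det_one, ← Matrix.mul_assoc (suppPow hA (z / 2))] at h1
    have h2 : ‖F z‖ ^ 2 ≤ 1 := by exact_mod_cast h1
    nlinarith [norm_nonneg (F z)]
  have h1 : ∀ z ∈ Complex.re ⁻¹' {(1 : ℝ)}, ‖F z‖ ≤ √Q := by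
    intro z hz
    have hz1 : z.re = 1 := hz
    -- Split `z / 2 = w + 1 / 2` with `w` imaginary and absorb the powers `w` into `W` and `V`.
    set w : ℂ := z / 2 - 1 / 2 with hw
    have hwre : w.re = 0 := by simp [hw, hz1]
    have hwre' : (starRingEnd ℂ w).re = 0 := by simpa using hwre
    have hAz : suppPow hA (z / 2) = suppPow hA w * suppPow hA (1 / 2) := by
      rw [suppPow_mul, hw]; congr 1; ring
    have hBz : suppPow hB (z / 2) = suppPow hB (1 / 2) * suppPow hB w := by
      rw [suppPow_mul, hw]; congr 1; ring
    have hW' := contraction_mul (suppPow_contraction hA hwre') hW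
    have hV' := contraction_mul (suppPow_contraction hB hwre) hV
    have hFz : F z = ((suppPow hA (starRingEnd ℂ w) * W)ᴴ * (X * (suppPow hB w * V))).det := by
      simp only [hF]
      rw [hAz, hBz, hX, conjTranspose_mul, suppPow_conjTranspose, Complex.conj_conj]
      simp only [Matrix.mul_assoc]
    have h2 := norm_det_mul_sq_le (Z := X * (suppPow hB w * V)) hW'
    have h3 := det_compression_le (posSemidef_conjTranspose_mul_self X) hV' hc
    rw [← hFz, conjTranspose_mul X, Matrix.mul_assoc, ← Matrix.mul_assoc Xᴴ,
      ← Matrix.mul_assoc _ᴴ] at h2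
    have h4 : ‖F z‖ ^ 2 ≤ Q := by exact_mod_cast h2.trans h3
    exact Real.le_sqrt_of_sq_le h4
  have key := Complex.HadamardThreeLines.norm_le_interp_of_mem_verticalClosedStrip'
    (f := F) (z := (r : ℂ)) (a := 1) (b := √Q) zero_lt_one
    (by simp [Complex.HadamardThreeLines.verticalClosedStrip, hr0, hr1])
    hdiff.diffContOnCl
    ⟨C, by
      rintro _ ⟨z, hz, rfl⟩
      exact hC z hz.1 hz.2⟩ h0 h1
  simpa [hF] using key

/-! ### From hinge functions to exponentials -/

lemma integral_hinge_mul_exp {q a L R : ℝ} (hq : 0 < q) (hL : L ≤ a) (hR : a ≤ R) :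
    ∫ t in L..R, max (a - t) 0 * Real.exp (q * t) =
      (Real.exp (q * a) - Real.exp (q * L) * (1 + q * (a - L))) / q ^ 2 := by
  have hcont : Continuous fun t : ℝ => max (a - t) 0 * Real.exp (q * t) := by fun_prop
  rw [← intervalIntegral.integral_add_adjacent_intervals (hcont.intervalIntegrable L a)
    (hcont.intervalIntegrable a R)]
  have h1 : ∫ t in a..R, max (a - t) 0 * Real.exp (q * t) = 0 := by
    rw [intervalIntegral.integral_congr (g := fun _ => (0 : ℝ))]
    · simp
    · intro t ht
      rw [Set.uIcc_of_le hR] at ht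
      simp [max_eq_right (sub_nonpos.mpr ht.1)]
  have h2 : ∫ t in L..a, max (a - t) 0 * Real.exp (q * t) =
      ∫ t in L..a, (a - t) * Real.exp (q * t) := by
    refine intervalIntegral.integral_congr fun t ht => ?_
    rw [Set.uIcc_of_le hL] at ht
    simp [max_eq_left (sub_nonneg.mpr ht.2)]
  have h3 : ∀ t ∈ Set.uIcc L a, HasDerivAt
      (fun t => ((a - t) / q + 1 / q ^ 2) * Real.exp (q * t)) ((a - t) * Real.exp (q * t)) t := by
    intro t _
    have e1 : HasDerivAt (fun t => (a - t) / q + 1 / q ^ 2) (-1 / q) t :=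
      (((hasDerivAt_id t).const_sub a).div_const q).add_const _
    have e2 : HasDerivAt (fun t => Real.exp (q * t)) (Real.exp (q * t) * (q * 1)) t :=
      ((hasDerivAt_id t).const_mul q).exp
    convert! e1.mul e2 using 1
    field_simp
    ring
  rw [h1, h2, intervalIntegral.integral_eq_sub_of_hasDerivAt h3
    ((by fun_prop : Continuous fun t : ℝ => (a - t) * Real.exp (q * t)).intervalIntegrable _ _)]
  field_simp
  ring

/-- Weak majorization, in the form of an inequality between all sums of hinge functions
`max (· - t) 0`, passes to sums of `exp (q ·)`: integrate against `exp (q t)` over `[L, R]`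
and let `L → -∞`. -/
lemma sum_exp_le_of_hinge {ι κ : Type*} (S : Finset ι) (T : Finset κ) (a : ι → ℝ) (b : κ → ℝ)
    (h : ∀ t : ℝ, ∑ i ∈ S, max (a i - t) 0 ≤ ∑ j ∈ T, max (b j - t) 0) {q : ℝ} (hq : 0 < q) :
    ∑ i ∈ S, Real.exp (q * a i) ≤ ∑ j ∈ T, Real.exp (q * b j) := by
  set R : ℝ := ∑ i ∈ S, |a i| + ∑ j ∈ T, |b j| with hR
  have haR : ∀ i ∈ S, |a i| ≤ R := fun i hi => by
    have h1 := Finset.single_le_sum (f := fun i => |a i|) (fun i _ => abs_nonneg (a i)) hi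
    have h2 : 0 ≤ ∑ j ∈ T, |b j| := Finset.sum_nonneg fun j _ => abs_nonneg _
    linarith
  have hbR : ∀ j ∈ T, |b j| ≤ R := fun j hj => by
    have h1 := Finset.single_le_sum (f := fun i => |b i|) (fun i _ => abs_nonneg (b i)) hj
    have h2 : 0 ≤ ∑ j ∈ S, |a j| := Finset.sum_nonneg fun j _ => abs_nonneg _
    linarith
  have hR0 : 0 ≤ R := by positivity
  have hint : ∀ L ≤ -R, ∑ i ∈ S, (Real.exp (q * a i) - Real.exp (q * L) * (1 + q * (a i - L))) ≤
      ∑ j ∈ T, Real.exp (q * b j) := by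
    intro L hL
    have hLR : L ≤ R := by linarith
    have hcont : ∀ x : ℝ, Continuous fun t : ℝ => max (x - t) 0 * Real.exp (q * t) :=
      fun x => by fun_prop
    have hmono : ∫ t in L..R, ∑ i ∈ S, max (a i - t) 0 * Real.exp (q * t) ≤
        ∫ t in L..R, ∑ j ∈ T, max (b j - t) 0 * Real.exp (q * t) := by
      refine intervalIntegral.integral_mono_on hLR
        ((continuous_finsetSum _ fun i _ => hcont _).intervalIntegrable _ _)
        ((continuous_finsetSum _ fun i _ => hcont _).intervalIntegrable _ _) fun t _ => ?_
      rw [← Finset.sum_mul, ← Finset.sum_mul]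
      exact mul_le_mul_of_nonneg_right (h t) (Real.exp_pos _).le
    rw [intervalIntegral.integral_finsetSum fun i _ => (hcont _).intervalIntegrable _ _,
      intervalIntegral.integral_finsetSum fun i _ => (hcont _).intervalIntegrable _ _,
      Finset.sum_congr rfl fun i hi => integral_hinge_mul_exp hq
        (by linarith [(abs_le.mp (haR i hi)).1]) (abs_le.mp (haR i hi)).2,
      Finset.sum_congr rfl fun i hi => integral_hinge_mul_exp hq
        (by linarith [(abs_le.mp (hbR i hi)).1]) (abs_le.mp (hbR i hi)).2,
      ← Finset.sum_div, ← Finset.sum_div, div_le_div_iff_of_pos_right (by positivity)] at hmono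
    refine hmono.trans (Finset.sum_le_sum fun j hj => ?_)
    have : 0 ≤ b j - L := by linarith [(abs_le.mp (hbR j hj)).1]
    have : 0 ≤ Real.exp (q * L) * (1 + q * (b j - L)) := by positivity
    linarith
  have hlim : Tendsto (fun u : ℝ => ∑ i ∈ S, (Real.exp (q * a i) -
      Real.exp (q * (-u / q)) * (1 + q * (a i - -u / q)))) atTop
      (nhds (∑ i ∈ S, (Real.exp (q * a i) - 0))) := by
    refine tendsto_finsetSum _ fun i _ => tendsto_const_nhds.sub ?_
    have e1 := (Real.tendsto_pow_mul_exp_neg_atTop_nhds_zero 0).const_mul (1 + q * a i)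
    have e2 := Real.tendsto_pow_mul_exp_neg_atTop_nhds_zero 1
    have e3 := e1.add e2
    simp only [mul_zero, add_zero] at e3
    refine e3.congr fun u => ?_
    have : q * (-u / q) = -u := by field_simp
    rw [mul_sub, this]
    ring
  simp only [sub_zero] at hlim
  refine le_of_tendsto hlim ?_
  filter_upwards [eventually_ge_atTop (q * R)] with u hu
  refine hint _ ?_
  rw [neg_div, neg_le_neg_iff, le_div_iff₀ hq]
  linarith

/-! ### Log-majorization and traces -/

/-- Weak log-majorization of the eigenvalues of `(A^{r/2} B^{r/2})ᴴ (A^{r/2} B^{r/2})` by the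
`r`-th powers of those of `(A^{1/2} B^{1/2})ᴴ (A^{1/2} B^{1/2})`, in hinge form. -/
lemma hinge_eigenvalues_le {m : Type*} [Fintype m] [DecidableEq m]
    {A B : Matrix m m ℂ} (hA : A.IsHermitian) (hB : B.IsHermitian)
    {r : ℝ} (hr0 : 0 ≤ r) (hr1 : r ≤ 1) {X Y : Matrix m m ℂ}
    (hX : X = suppPow hA (r / 2) * suppPow hB (r / 2))
    (hY : Y = suppPow hA (1 / 2) * suppPow hB (1 / 2)) {x y : m → ℝ}
    (hx : x = (isHermitian_conjTranspose_mul_self X).eigenvalues)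
    (hy : y = (isHermitian_conjTranspose_mul_self Y).eigenvalues) (s : ℝ) :
    ∑ i with 0 < x i, max (Real.log (x i) - r * s) 0 ≤
      ∑ j with 0 < y j, r * max (Real.log (y j) - s) 0 := by
  classical
  let κ := {i // Real.exp (r * s) < x i}
  have hκ : ∀ i : κ, 0 < x i := fun i => (Real.exp_pos _).trans i.2
  set U : Matrix m m ℂ := (isHermitian_conjTranspose_mul_self X).eigenvectorUnitary.1 with hU
  have hUU : Uᴴ * U = 1 :=
    Unitary.coe_star_mul_self (isHermitian_conjTranspose_mul_self X).eigenvectorUnitary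
  have hspec : Xᴴ * X = U * diagonal (fun i => (x i : ℂ)) * Uᴴ := by
    conv_lhs => rw [(isHermitian_conjTranspose_mul_self X).spectral_theorem]
    rw [hx]
    rfl
  have hUXU : Uᴴ * (Xᴴ * X) * U = diagonal (fun i => (x i : ℂ)) := by
    rw [hspec]
    simp only [Matrix.mul_assoc]
    rw [hUU, Matrix.mul_one, ← Matrix.mul_assoc, hUU, Matrix.one_mul]
  -- `V` collects the eigenvectors with eigenvalue above the threshold, `W` the matching left
  -- singular vectors of `X`, so that `Wᴴ X V` is diagonal with the singular values as entries.
  set V : Matrix m κ ℂ := U.submatrix id Subtype.val with hVdef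
  have hVV : Vᴴ * V = 1 := by
    have : Vᴴ * V = (Uᴴ * U).submatrix Subtype.val Subtype.val := rfl
    rw [this, hUU, submatrix_one _ Subtype.val_injective]
  have hVXV : Vᴴ * (Xᴴ * X) * V = diagonal (fun i : κ => (x i : ℂ)) := by
    have : Vᴴ * (Xᴴ * X) * V =
      (Uᴴ * (Xᴴ * X) * U).submatrix Subtype.val Subtype.val := rfl
    rw [this, hUXU, submatrix_diagonal _ _ Subtype.val_injective]
    rfl
  set D : Matrix κ κ ℂ := diagonal (fun i : κ => (((√(x i))⁻¹ : ℝ) : ℂ)) with hD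
  have hDc : Dᴴ = D := by
    rw [hD, diagonal_conjTranspose]; congr 1; ext i
    simp only [Pi.star_apply, RCLike.star_def, Complex.conj_ofReal]
  set W : Matrix m κ ℂ := X * V * D with hW
  have hWXV : Wᴴ * (X * V) = diagonal (fun i : κ => ((√(x i) : ℝ) : ℂ)) := by
    have : Wᴴ * (X * V) = D * (Vᴴ * (Xᴴ * X) * V) := by
      rw [hW, conjTranspose_mul, conjTranspose_mul, hDc]
      simp only [Matrix.mul_assoc]
    rw [this, hVXV, hD, diagonal_mul_diagonal]
    congr 1; ext i
    rw [← Complex.ofReal_mul]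
    congr 1
    have h1 : √(x i) ≠ 0 := (Real.sqrt_pos.mpr (hκ i)).ne'
    rw [inv_mul_eq_iff_eq_mul₀ h1, Real.mul_self_sqrt (hκ i).le]
  have hWW : Wᴴ * W = 1 := by
    have : Wᴴ * W = Wᴴ * (X * V) * D := by rw [Matrix.mul_assoc]
    rw [this, hWXV, hD, diagonal_mul_diagonal, ← diagonal_one]
    congr 1; ext i
    rw [← Complex.ofReal_mul, mul_inv_cancel₀ (Real.sqrt_pos.mpr (hκ i)).ne', Complex.ofReal_one]
  have hdet : ‖(Wᴴ * (X * V)).det‖ = √(∏ i : κ, x i) := by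
    rw [hWXV, det_diagonal, norm_prod, Real.sqrt_prod _ fun i _ => (hκ i).le]
    refine Finset.prod_congr rfl fun i _ => ?_
    rw [Complex.norm_real, Real.norm_of_nonneg (Real.sqrt_nonneg _)]
  have hy0 : ∀ j, 0 ≤ y j := fun j => by
    rw [hy]; exact (posSemidef_conjTranspose_mul_self Y).eigenvalues_nonneg j
  have key := norm_det_le_rpow hA hB (W := W) (V := V) (by rw [hWW, sub_self]; exact .zero)
    (by rw [hVV, sub_self]; exact .zero) (Real.exp_pos s) hY hr0 hr1
  rw [← hX, hdet, ← hy] at key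
  have hP1 : 0 < ∏ i : κ, x i := Finset.prod_pos fun i _ => hκ i
  have hM : ∀ j, 0 < max (y j / Real.exp s) 1 := fun j => lt_max_of_lt_right one_pos
  have hP2 : 0 < ∏ j, max (y j / Real.exp s) 1 := Finset.prod_pos fun j _ => hM j
  have hlog := Real.log_le_log (Real.sqrt_pos.mpr hP1) key
  rw [Real.log_rpow (Real.sqrt_pos.mpr (by positivity)), Real.log_sqrt hP1.le,
    Real.log_sqrt (by positivity), Real.log_mul (by positivity) hP2.ne', Real.log_pow,
    Real.log_exp, Real.log_prod fun i _ => (hκ i).ne', Real.log_prod fun j _ => (hM j).ne'] at hlog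
  have hleft : ∑ i with 0 < x i, max (Real.log (x i) - r * s) 0 =
      ∑ i : κ, (Real.log (x i) - r * s) := by
    rw [← Finset.sum_subtype (Finset.univ.filter fun i => Real.exp (r * s) < x i) (by simp)
      (fun i => Real.log (x i) - r * s), Finset.sum_filter, Finset.sum_filter]
    refine Finset.sum_congr rfl fun i _ => ?_
    by_cases h : Real.exp (r * s) < x i
    · have hxi : 0 < x i := (Real.exp_pos _).trans h
      rw [if_pos h, if_pos hxi, max_eq_left]
      linarith [(Real.lt_log_iff_exp_lt hxi).mpr h]
    · rw [if_neg h]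
      split_ifs with hxi
      · refine max_eq_right ?_
        linarith [(Real.log_le_iff_le_exp hxi).mpr (not_lt.mp h)]
      · rfl
  have hright : ∑ j with 0 < y j, max (Real.log (y j) - s) 0 =
      ∑ j, Real.log (max (y j / Real.exp s) 1) := by
    rw [Finset.sum_filter]
    refine Finset.sum_congr rfl fun j _ => ?_
    split_ifs with h
    · rw [← Real.log_exp s, ← Real.log_div h.ne' (Real.exp_pos _).ne', Real.log_exp,
        ← Real.log_one]
      have := (Real.strictMonoOn_log.monotoneOn).map_max (a := y j / Real.exp s) (b := 1)
        (by simp; positivity) (by simp)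
      exact this.symm
    · have : y j = 0 := le_antisymm (not_lt.mp h) (hy0 j)
      simp [this]
  rw [hleft, ← Finset.mul_sum, hright, Finset.sum_sub_distrib]
  simp only [Finset.sum_const, Finset.card_univ, nsmul_eq_mul]
  linarith

lemma mpow_trace_re {n : ℕ} {M : Matrix (Fin n) (Fin n) ℂ} (hM : M.IsHermitian) (t : ℝ) :
    (mpow M t).trace.re = ∑ i, rpow0 (hM.eigenvalues i) t := by
  unfold mpow
  rw [dif_pos hM, Matrix.IsHermitian.cfc, Unitary.conjStarAlgAut_apply, Matrix.trace_mul_cycle,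
    Unitary.coe_star_mul_self, Matrix.one_mul, trace_diagonal, Complex.re_sum]
  rfl

lemma sum_rpow0_eq {ι : Type*} [Fintype ι] {x : ι → ℝ} (hx : ∀ i, 0 ≤ x i) (t : ℝ) :
    ∑ i, rpow0 (x i) t = ∑ i with 0 < x i, Real.exp (t * Real.log (x i)) := by
  rw [Finset.sum_filter]
  refine Finset.sum_congr rfl fun i _ => ?_
  unfold rpow0
  rcases (hx i).eq_or_lt with h | h
  · simp [← h]
  · rw [if_neg h.ne', if_pos h, mul_comm]
    exact Real.rpow_def_of_pos h t

lemma sum_rpow0_zero_eq_rank {n : ℕ} {M : Matrix (Fin n) (Fin n) ℂ} (hM : M.IsHermitian) :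
    ∑ i, rpow0 (hM.eigenvalues i) 0 = M.rank := by
  rw [hM.rank_eq_card_non_zero_eigs, Fintype.card_subtype, Finset.card_filter]
  push_cast
  refine Finset.sum_congr rfl fun i _ => ?_
  unfold rpow0
  by_cases h : hM.eigenvalues i = 0
  · simp [h]
  · rw [if_neg h]
    simp only [ne_eq, h, not_false_eq_true, if_true]
    exact Real.rpow_zero _

/-- **Araki–Lieb–Thirring inequality, second part.** For positive semi-definite matrices
`A, B`, `q ≥ 0` and `0 ≤ r < 1`,
`tr[(B^{1/2} A B^{1/2})^{rq}] ≥ tr[(B^{r/2} A^r B^{r/2})^q]`. -/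
theorem araki_lieb_thirring_of_lt_one {n : ℕ} (A B : Matrix (Fin n) (Fin n) ℂ)
    (hA : A.PosSemidef) (hB : B.PosSemidef) (q r : ℝ) (hq : 0 ≤ q)
    (hr0 : 0 ≤ r) (hr1 : r < 1) :
    (mpow (mpow B (r / 2) * mpow A r * mpow B (r / 2)) q).trace.re ≤
      (mpow (mpow B (1 / 2) * A * mpow B (1 / 2)) (r * q)).trace.re := by
  obtain ⟨X, hX⟩ : ∃ X, X = suppPow hA.1 (r / 2) * suppPow hB.1 (r / 2) := ⟨_, rfl⟩
  obtain ⟨Y, hY⟩ : ∃ Y, Y = suppPow hA.1 (1 / 2) * suppPow hB.1 (1 / 2) := ⟨_, rfl⟩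
  have hstar : ∀ {M : Matrix (Fin n) (Fin n) ℂ} (hM : M.IsHermitian) (t : ℝ),
      (suppPow hM t)ᴴ = suppPow hM t := fun hM t => by
    rw [suppPow_conjTranspose, Complex.conj_ofReal]
  have hHr : mpow B (r / 2) * mpow A r * mpow B (r / 2) = Xᴴ * X := by
    have h1 := hstar hA.1 (r / 2)
    have h2 := hstar hB.1 (r / 2)
    have h3 : suppPow hA.1 r = suppPow hA.1 (r / 2) * suppPow hA.1 (r / 2) := by
      rw [suppPow_mul, add_halves]
    push_cast at h1 h2
    rw [mpow_eq_suppPow hA, mpow_eq_suppPow hB, hX, conjTranspose_mul]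
    push_cast
    rw [h1, h2, h3]
    simp only [Matrix.mul_assoc]
  have hH1 : mpow B (1 / 2) * A * mpow B (1 / 2) = Yᴴ * Y := by
    have h1 := hstar hA.1 (1 / 2)
    have h2 := hstar hB.1 (1 / 2)
    have h3 : A = suppPow hA.1 (1 / 2) * suppPow hA.1 (1 / 2) := by
      rw [suppPow_mul, add_halves, suppPow_one hA]
    push_cast at h1 h2
    rw [mpow_eq_suppPow hB, hY, conjTranspose_mul]
    push_cast
    rw [h1, h2]
    conv_lhs => enter [1, 2]; rw [h3]
    simp only [Matrix.mul_assoc]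
  rw [hHr, hH1, mpow_trace_re (isHermitian_conjTranspose_mul_self X),
    mpow_trace_re (isHermitian_conjTranspose_mul_self Y)]
  have hx0 := (posSemidef_conjTranspose_mul_self X).eigenvalues_nonneg
  have hy0 := (posSemidef_conjTranspose_mul_self Y).eigenvalues_nonneg
  have hinge := hinge_eigenvalues_le hA.1 hB.1 hr0 hr1.le hX hY rfl rfl
  -- If `r * q = 0`, both sides are compared with ranks; for `r = 0` the eigenvalues on the left
  -- are at most `1`, by the hinge inequality at `s = 0`.
  by_cases hrq : r * q = 0
  · have hrank : X.rank ≤ Y.rank := by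
      have : X = suppPow hA.1 ((r - 1) / 2) * Y * suppPow hB.1 ((r - 1) / 2) := by
        have e1 : suppPow hA.1 (r / 2) = suppPow hA.1 ((r - 1) / 2) * suppPow hA.1 (1 / 2) := by
          rw [suppPow_mul]; congr 1; ring
        have e2 : suppPow hB.1 (r / 2) = suppPow hB.1 (1 / 2) * suppPow hB.1 ((r - 1) / 2) := by
          rw [suppPow_mul]; congr 1; ring
        rw [hX, hY, e1, e2]
        simp only [Matrix.mul_assoc]
      rw [this]
      exact (rank_mul_le_left _ _).trans (rank_mul_le_right _ _)
    have hle : ∑ i, rpow0 ((isHermitian_conjTranspose_mul_self X).eigenvalues i) q ≤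
        ∑ i, rpow0 ((isHermitian_conjTranspose_mul_self X).eigenvalues i) 0 := by
      rcases mul_eq_zero.mp hrq with h | h
      · rw [sum_rpow0_eq hx0, sum_rpow0_eq hx0]
        refine Finset.sum_le_sum fun i hi => Real.exp_le_exp.mpr ?_
        have h1 := hinge 0
        simp only [h, zero_mul, sub_zero, Finset.sum_const_zero] at h1
        have h2 := (Finset.single_le_sum (f := fun i => max (Real.log
          ((isHermitian_conjTranspose_mul_self X).eigenvalues i)) 0)
          (fun i _ => le_max_right _ _) hi).trans h1
        have h3 := (le_max_left _ _).trans h2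
        rw [zero_mul]
        exact mul_nonpos_of_nonneg_of_nonpos hq h3
      · rw [h]
    rw [hrq, sum_rpow0_zero_eq_rank, rank_conjTranspose_mul_self]
    refine hle.trans ?_
    rw [sum_rpow0_zero_eq_rank, rank_conjTranspose_mul_self]
    exact_mod_cast hrank
  · have hr : 0 < r := lt_of_le_of_ne hr0 fun h => hrq (by simp [← h])
    have hq' : 0 < q := lt_of_le_of_ne hq fun h => hrq (by simp [← h])
    rw [sum_rpow0_eq hx0, sum_rpow0_eq hy0]
    have := sum_exp_le_of_hinge _ _ (fun i => Real.log
        ((isHermitian_conjTranspose_mul_self X).eigenvalues i))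
      (fun j => r * Real.log ((isHermitian_conjTranspose_mul_self Y).eigenvalues j)) (fun t => by
        have h1 := hinge (t / r)
        have h2 : r * (t / r) = t := by field_simp
        simpa only [mul_max_of_nonneg _ _ hr0, mul_sub, h2, mul_zero] using h1) hq'
    refine this.trans_eq (Finset.sum_congr rfl fun j _ => ?_)
    congr 1
    ring
end

section
/- Let ρ be a density matrix and σ a positive semi-definite matrix on a finite-dimensional complex Hilbert space with supp ρ ⊆ supp σ, and let α ∈ (0,1). Then tr[(σ^{(1−α)/(2α)} ρ σ^{(1−α)/(2α)})^α] ≥ tr(ρ^α σ^{1−α}). -/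
/-!
The inequality is the Araki–Lieb–Thirring inequality with exponent `r = α ∈ (0, 1)`,
`tr (B ^ r A ^ r) ≤ tr ((B ^ (1/2) A B ^ (1/2)) ^ r)` for `A, B ≥ 0` (`trace_prod_le`), applied to
`A = ρ` and `B = σ ^ ((1 - α) / α)`. All the exponents are positive, so `mpow` is the usual power
of the functional calculus (`mpow_eq_rpow`).

For positive definite `A` and `B`, truncate `A` at height `τ`: let `S τ = min (A, τ)` in the
functional calculus and `C τ = B ^ (1/2) S τ B ^ (1/2)`. Two facts control the growth of
`tr (C τ) ^ r` as `τ` increases to some `τ'`.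

* The tangent line inequality for the concave function `X ↦ tr X ^ r`, taken at `C τ'`
  (`trace_rpow_le`), bounds the increment below by `r tr ((C τ' - C τ) (C τ') ^ (r - 1))`.
* Since `S τ' ≤ τ'`, one has `C τ' ≤ τ' B`, and `x ↦ x ^ (r - 1)` is operator antitone by the
  Löwner–Heinz theorem (`rpow_neg_antitone`).

Together they bound the increment below by `r τ' ^ (r - 1) tr (B ^ r (S τ' - S τ))`
(`trace_step`). When `τ' = q τ`, a scalar comparison (`cap_scalar`) turns this into
`q ^ (r - 1) tr (B ^ r ((S τ') ^ r - (S τ) ^ r))`, which telescopes along the geometric grid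
`ε (1 + ε) ^ j` (`trace_prod_le_approx`). Letting `ε → 0` gives the positive definite case, and
the perturbations `A + ε`, `B + ε` give the general one.
-/

open Matrix Filter ComplexOrder

section TraceInequality

open scoped MatrixOrder Matrix.Norms.L2Operator NNReal

variable {n : ℕ}

/-! ### Trace inequalities and powers of matrices -/

lemma trace_mul_nonneg_re {X Y : Matrix (Fin n) (Fin n) ℂ} (hX : 0 ≤ X) (hY : 0 ≤ Y) :
    0 ≤ (X * Y).trace.re := by
  obtain ⟨a, rfl⟩ := CStarAlgebra.nonneg_iff_eq_star_mul_self.mp hX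
  have h : 0 ≤ a * Y * star a := by
    simpa using star_left_conjugate_nonneg hY (star a)
  have h2 := h.posSemidef.trace_nonneg
  rw [Matrix.mul_assoc, Matrix.trace_mul_comm]
  exact (Complex.le_def.mp h2).1

lemma trace_mul_le_re {X Y Y' : Matrix (Fin n) (Fin n) ℂ} (hX : 0 ≤ X) (hY : Y ≤ Y') :
    (X * Y).trace.re ≤ (X * Y').trace.re := by
  have := trace_mul_nonneg_re hX (sub_nonneg.mpr hY)
  rw [mul_sub, trace_sub, Complex.sub_re] at this
  linarith

/-- The tangent line at `x` lies above the graph of the concave function `c ↦ c ^ r`. -/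
lemma young_scalar {r x c : ℝ} (hr : r ∈ Set.Ioo (0 : ℝ) 1) (hx : 0 < x) (hc : 0 ≤ c) :
    c ^ r ≤ r * c * x ^ (r - 1) + (1 - r) * x ^ r := by
  have h := Real.geom_mean_le_arith_mean2_weighted hr.1.le (sub_nonneg.mpr hr.2.le)
    (div_nonneg hc hx.le) zero_le_one (by ring)
  rw [Real.one_rpow, mul_one, Real.div_rpow hc hx.le, div_le_iff₀ (Real.rpow_pos_of_pos hx r)] at h
  rw [Real.rpow_sub_one hx.ne']
  refine h.trans (le_of_eq ?_)
  field_simp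

/-- The spectrum of a matrix is finite, so the continuity side conditions of the functional calculus
always hold. -/
lemma continuousOn_spectrum (X : Matrix (Fin n) (Fin n) ℂ) (f : ℝ → ℝ) :
    ContinuousOn f (spectrum ℝ X) :=
  (Matrix.finite_real_spectrum (A := X)).continuousOn f

/-- Tangent line inequality for the concave function `C ↦ tr C ^ r` at the point `Z`. In an
eigenbasis of `C` it reduces to the scalar inequality `young_scalar`, with `c` an eigenvalue of `C` and `x`
replaced by `Z` through the functional calculus. -/
lemma trace_rpow_le {C Z : Matrix (Fin n) (Fin n) ℂ} (hC : 0 ≤ C) (hZ : IsStrictlyPositive Z)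
    {r : ℝ} (hr : r ∈ Set.Ioo (0 : ℝ) 1) :
    (C ^ r).trace.re ≤ r * (C * Z ^ (r - 1)).trace.re + (1 - r) * (Z ^ r).trace.re := by
  have hH : C.IsHermitian := hC.posSemidef.1
  set U : Matrix (Fin n) (Fin n) ℂ := hH.eigenvectorUnitary.1 with hU
  have hUU : U * star U = 1 := Unitary.coe_mul_star_self hH.eigenvectorUnitary
  have hUU' : star U * U = 1 := Unitary.coe_star_mul_self hH.eigenvectorUnitary
  set c := hH.eigenvalues with hc
  -- The trace of `f(C) X`, computed in an eigenbasis of `C`.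
  have key : ∀ f : ℝ → ℝ, ∀ X : Matrix (Fin n) (Fin n) ℂ,
      (cfc f C * X).trace.re = ∑ i, f (c i) * ((star U * X * U) i i).re := by
    intro f X
    rw [hH.cfc_eq, IsHermitian.cfc, Unitary.conjStarAlgAut_apply, Matrix.mul_assoc,
      Matrix.mul_assoc, Matrix.trace_mul_comm, Matrix.mul_assoc]
    simp only [Matrix.trace, Matrix.diag, Matrix.diagonal_mul, Complex.re_sum]
    simp [hU, hc]
  have e1 : (C ^ r).trace.re = ∑ i, (c i) ^ r := by
    have := key (fun x => x ^ r) 1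
    rw [mul_one, mul_one, hUU'] at this
    rw [CFC.rpow_eq_cfc_real hC, this]; simp
  have e2 := key (fun x => x) (Z ^ (r - 1))
  rw [cfc_id' ℝ C] at e2
  have e3 := key (fun _ => 1) (Z ^ r)
  rw [cfc_const_one ℝ C, one_mul] at e3
  rw [e1, e2, e3, Finset.mul_sum, Finset.mul_sum, ← Finset.sum_add_distrib]
  refine Finset.sum_le_sum fun i _ => ?_
  have hop : algebraMap ℝ (Matrix (Fin n) (Fin n) ℂ) ((c i) ^ r) ≤
      (r * c i) • Z ^ (r - 1) + (1 - r) • Z ^ r := by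
    rw [CFC.rpow_eq_cfc_real hZ.nonneg, CFC.rpow_eq_cfc_real hZ.nonneg,
      ← cfc_smul _ _ _ (continuousOn_spectrum _ _), ← cfc_smul _ _ _ (continuousOn_spectrum _ _),
      ← cfc_add Z (fun x : ℝ => (r * c i) • x ^ (r - 1)) (fun x : ℝ => (1 - r) • x ^ r)
        (continuousOn_spectrum _ _) (continuousOn_spectrum _ _),
      ← cfc_const _ Z hZ.nonneg.isSelfAdjoint]
    refine cfc_mono (fun x hx => ?_) continuousOn_const (continuousOn_spectrum _ _)
    have := young_scalar hr (hZ.spectrum_pos (𝕜 := ℝ) hx) (hC.posSemidef.eigenvalues_nonneg i)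
    simpa [mul_assoc] using this
  have h2 := (Matrix.le_iff.mp (star_left_conjugate_le_conjugate hop U)).diag_nonneg (i := i)
  have hconj : star U * algebraMap ℝ (Matrix (Fin n) (Fin n) ℂ) ((c i) ^ r) * U =
      algebraMap ℝ (Matrix (Fin n) (Fin n) ℂ) ((c i) ^ r) := by
    rw [← Algebra.commutes, mul_assoc, hUU', mul_one]
  rw [hconj] at h2
  have h3 := (Complex.le_def.mp h2).1
  simp only [mul_add, add_mul, Matrix.mul_smul, Matrix.smul_mul, Matrix.sub_apply,
    Matrix.add_apply, Matrix.smul_apply, Matrix.algebraMap_eq_diagonal] at h3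
  simp at h3
  nlinarith [h3]

lemma smul_rpow {B : Matrix (Fin n) (Fin n) ℂ} (hB : IsStrictlyPositive B) {τ : ℝ} (hτ : 0 < τ)
    (t : ℝ) : (τ • B) ^ t = τ ^ t • B ^ t := by
  have hB0 := hB.nonneg
  have hsa : IsSelfAdjoint B := hB0.isSelfAdjoint
  have h1 : τ • B = cfc (fun x : ℝ => τ * x) B := by
    rw [cfc_const_mul_id τ B]
  rw [CFC.rpow_eq_cfc_real (smul_nonneg hτ.le hB0), CFC.rpow_eq_cfc_real hB0, h1,
    ← cfc_comp' (fun x : ℝ => x ^ t) (fun x : ℝ => τ * x) B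
      ((Set.Finite.image _ (Matrix.finite_real_spectrum)).continuousOn _),
    ← cfc_smul _ _ _ (continuousOn_spectrum _ _)]
  refine cfc_congr fun x hx => ?_
  simp [Real.mul_rpow hτ.le (hB.spectrum_pos (𝕜 := ℝ) hx).le]

/-- Operator antitonicity of `x ↦ x ^ (r - 1)`: inversion is antitone, and `x ↦ x ^ (1 - r)` is
operator monotone by the Löwner–Heinz theorem. -/
lemma rpow_neg_antitone {X Y : Matrix (Fin n) (Fin n) ℂ} (hX : IsStrictlyPositive X) (h : X ≤ Y)
    {r : ℝ} (hr : r ∈ Set.Ioo (0 : ℝ) 1) : Y ^ (r - 1) ≤ X ^ (r - 1) := by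
  have hY : IsStrictlyPositive Y := IsStrictlyPositive.of_le hX h
  have h1 := CFC.rpow_le_rpow (p := 1 - r) ⟨by linarith [hr.2], by linarith [hr.1]⟩
    (CStarAlgebra.rpow_neg_one_le_rpow_neg_one h hX)
  rw [CFC.rpow_rpow _ _ _ (by norm_num) hX, CFC.rpow_rpow _ _ _ (by norm_num) hY] at h1
  convert h1 using 2 <;> ring

/-! ### Truncation of one factor -/

/-- The growth of `tr ((B ^ (1/2) S B ^ (1/2)) ^ r)` when `S` increases to some `S' ≤ τ`. -/
lemma trace_step {B S S' : Matrix (Fin n) (Fin n) ℂ} (hB : IsStrictlyPositive B) (hS : 0 ≤ S)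
    (hSS' : S ≤ S') (hS' : IsStrictlyPositive S') {τ : ℝ} (hτ : 0 < τ)
    (hS'τ : S' ≤ algebraMap ℝ _ τ) {r : ℝ} (hr : r ∈ Set.Ioo (0 : ℝ) 1) :
    r * τ ^ (r - 1) * (B ^ r * (S' - S)).trace.re ≤
      ((B ^ (1 / 2 : ℝ) * S' * B ^ (1 / 2 : ℝ)) ^ r).trace.re -
        ((B ^ (1 / 2 : ℝ) * S * B ^ (1 / 2 : ℝ)) ^ r).trace.re := by
  set H := B ^ (1 / 2 : ℝ) with hH
  have hHpos : IsStrictlyPositive H := hB.rpow _ _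
  have hHsa : IsSelfAdjoint H := hHpos.nonneg.isSelfAdjoint
  have hHH : H * H = B := by
    rw [hH, ← CFC.rpow_add hB.isUnit]; norm_num [CFC.rpow_one B hB.nonneg]
  have hC : 0 ≤ H * S * H := hHsa.conjugate_nonneg hS
  have hC' : IsStrictlyPositive (H * S' * H) :=
    ((hHpos.isUnit.mul hS'.isUnit).mul hHpos.isUnit).isStrictlyPositive
      (hHsa.conjugate_nonneg hS'.nonneg)
  have hle : H * S' * H ≤ τ • B := by
    have := hHsa.conjugate_le_conjugate hS'τ
    rwa [← Algebra.commutes, mul_assoc (algebraMap ℝ _ τ), hHH, ← Algebra.smul_def] at this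
  have h1 := rpow_neg_antitone hC' hle hr
  rw [smul_rpow hB hτ] at h1
  have h2 : 0 ≤ H * (S' - S) * H := hHsa.conjugate_nonneg (sub_nonneg.mpr hSS')
  have h3 := trace_mul_le_re h2 h1
  have h4 : (H * (S' - S) * H * (τ ^ (r - 1) • B ^ (r - 1))).trace.re =
      τ ^ (r - 1) * (B ^ r * (S' - S)).trace.re := by
    have : H * B ^ (r - 1) * H = B ^ r := by
      rw [hH, ← CFC.rpow_add hB.isUnit, ← CFC.rpow_add hB.isUnit]; congr 1; ring
    rw [Matrix.mul_smul, trace_smul, Complex.smul_re, smul_eq_mul, ← this]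
    congr 2
    rw [mul_assoc, mul_assoc, Matrix.trace_mul_comm, mul_assoc, Matrix.trace_mul_comm]
  have h5 := trace_rpow_le hC hC' hr
  have h6 : (H * S' * H * (H * S' * H) ^ (r - 1)).trace.re = ((H * S' * H) ^ r).trace.re := by
    congr 2
    nth_rewrite 1 [← CFC.rpow_one (H * S' * H) hC'.nonneg]
    rw [← CFC.rpow_add hC'.isUnit]; congr 1; ring
  have h7 : (H * (S' - S) * H * (H * S' * H) ^ (r - 1)).trace.re =
      (H * S' * H * (H * S' * H) ^ (r - 1)).trace.re -
        (H * S * H * (H * S' * H) ^ (r - 1)).trace.re := by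
    rw [← Complex.sub_re, ← trace_sub]
    simp only [mul_sub, sub_mul]
  rw [h4, h7, h6] at h3
  have := mul_le_mul_of_nonneg_left h3 hr.1.le
  linarith

/-- Comparison of the increments of `min x t` and of its `r`-th power as `t` runs from `τ` to `τ q`:
the slope of `y ↦ y ^ r` there is at most its value `r τ ^ (r - 1)` at the left end, and passing
to the right end costs the factor `q ^ (r - 1)`. -/
lemma cap_scalar {r x τ q : ℝ} (hr : r ∈ Set.Ioo (0 : ℝ) 1) (hτ : 0 < τ) (hq : 1 < q) :
    q ^ (r - 1) * ((min x (τ * q)) ^ r - (min x τ) ^ r) ≤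
      r * (τ * q) ^ (r - 1) * (min x (τ * q) - min x τ) := by
  have hττ : τ ≤ τ * q := by nlinarith
  rcases le_total x τ with h | h
  · rw [min_eq_left h, min_eq_left (h.trans hττ)]; simp
  · rw [min_eq_right h]
    have h1 := young_scalar (c := min x (τ * q)) hr hτ (le_min (hτ.le.trans h) (hτ.le.trans hττ))
    have h2 : τ ^ r = τ * τ ^ (r - 1) := by
      rw [Real.rpow_sub_one hτ.ne']; field_simp
    rw [Real.mul_rpow hτ.le (by linarith)]
    have h3 : (min x (τ * q)) ^ r - τ ^ r ≤ r * τ ^ (r - 1) * (min x (τ * q) - τ) := by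
      rw [h2] at h1 ⊢; nlinarith
    have := mul_le_mul_of_nonneg_left h3 (Real.rpow_nonneg (by linarith : (0 : ℝ) ≤ q) (r - 1))
    linarith

/-- Summing `trace_step` for the truncations of `A` at the heights `ε (1 + ε) ^ j`. The part of `A`
below the first height `ε` contributes the error term `ε ^ r tr B ^ r`. -/
lemma trace_prod_le_approx {A B : Matrix (Fin n) (Fin n) ℂ} (hA : IsStrictlyPositive A)
    (hB : IsStrictlyPositive B) {r : ℝ} (hr : r ∈ Set.Ioo (0 : ℝ) 1) {ε : ℝ} (hε : 0 < ε) :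
    (1 + ε) ^ (r - 1) * ((B ^ r * A ^ r).trace.re - ε ^ r * (B ^ r).trace.re) ≤
      ((B ^ (1 / 2 : ℝ) * A * B ^ (1 / 2 : ℝ)) ^ r).trace.re := by
  have hA0 := hA.nonneg
  have hAsa : IsSelfAdjoint A := hA0.isSelfAdjoint
  set S : ℝ → Matrix (Fin n) (Fin n) ℂ := fun τ => cfc (fun x : ℝ => min x τ) A with hSdef
  have hSpos : ∀ τ, 0 < τ → IsStrictlyPositive (S τ) := fun τ hτ => by
    refine IsUnit.isStrictlyPositive ?_ ?_
    · rw [hSdef, isUnit_cfc_iff _ _ (continuousOn_spectrum _ _)]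
      exact fun x hx => (lt_min (hA.spectrum_pos (𝕜 := ℝ) hx) hτ).ne'
    · exact cfc_nonneg fun x hx => (lt_min (hA.spectrum_pos (𝕜 := ℝ) hx) hτ).le
  have hSr : ∀ τ, 0 < τ → (S τ) ^ r = cfc (fun x : ℝ => (min x τ) ^ r) A := fun τ hτ => by
    rw [CFC.rpow_eq_cfc_real (hSpos τ hτ).nonneg, hSdef]
    exact (cfc_comp' (fun x : ℝ => x ^ r) (fun x : ℝ => min x τ) A
      (((Matrix.finite_real_spectrum).image _).continuousOn _) (continuousOn_spectrum _ _)).symm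
  have hSle : ∀ τ, S τ ≤ algebraMap ℝ _ τ := fun τ => by
    rw [← cfc_const τ A hAsa]
    exact cfc_mono (fun x _ => min_le_right _ _) (continuousOn_spectrum _ _)
      (continuousOn_spectrum _ _)
  have hBr : 0 ≤ B ^ r := CFC.rpow_nonneg
  set q := 1 + ε with hqdef
  have hq : 1 < q := by linarith
  have hq0 : 0 < q := by linarith
  have hqr : 0 ≤ q ^ (r - 1) := Real.rpow_nonneg hq0.le _
  have main : ∀ j : ℕ, q ^ (r - 1) * ((B ^ r * (S (ε * q ^ j)) ^ r).trace.re -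
      (B ^ r * (S ε) ^ r).trace.re) ≤
      ((B ^ (1 / 2 : ℝ) * S (ε * q ^ j) * B ^ (1 / 2 : ℝ)) ^ r).trace.re := by
    intro j
    induction j with
    | zero =>
      simp only [pow_zero, mul_one, sub_self, mul_zero]
      have : (0 : Matrix (Fin n) (Fin n) ℂ) ≤
        (B ^ (1 / 2 : ℝ) * S ε * B ^ (1 / 2 : ℝ)) ^ r := CFC.rpow_nonneg
      exact (Complex.le_def.mp this.posSemidef.trace_nonneg).1
    | succ j ih =>
      set τ := ε * q ^ j with hτdef
      have hτ : 0 < τ := by positivity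
      have hττ : τ ≤ τ * q := by nlinarith
      have e : ε * q ^ (j + 1) = τ * q := by rw [hτdef]; ring
      rw [e]
      have h1 := trace_step hB (hSpos τ hτ).nonneg
        (cfc_mono (fun x _ => min_le_min_left x hττ) (continuousOn_spectrum _ _)
          (continuousOn_spectrum _ _) : S τ ≤ S (τ * q))
        (hSpos (τ * q) (by positivity)) (τ := τ * q) (by positivity) (hSle _) hr
      have h2 : q ^ (r - 1) • ((S (τ * q)) ^ r - (S τ) ^ r) ≤
          (r * (τ * q) ^ (r - 1)) • (S (τ * q) - S τ) := by
        rw [hSr _ hτ, hSr _ (by positivity), hSdef]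
        simp only []
        rw [← cfc_sub _ _ A (continuousOn_spectrum _ _) (continuousOn_spectrum _ _),
          ← cfc_sub _ _ A (continuousOn_spectrum _ _) (continuousOn_spectrum _ _),
          ← cfc_smul _ _ A (continuousOn_spectrum _ _),
          ← cfc_smul _ _ A (continuousOn_spectrum _ _)]
        refine cfc_mono (fun x _ => ?_) (continuousOn_spectrum _ _) (continuousOn_spectrum _ _)
        exact cap_scalar hr hτ hq
      have h3 := trace_mul_le_re hBr h2
      rw [Matrix.mul_smul, Matrix.mul_smul, trace_smul, trace_smul, Complex.smul_re,
        Complex.smul_re, smul_eq_mul, smul_eq_mul, mul_sub (B ^ r) (S (τ * q) ^ r), trace_sub,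
        Complex.sub_re] at h3
      linarith
  -- The truncation at a height above the spectrum of `A` is `A` itself.
  obtain ⟨K, hK⟩ := (Matrix.finite_real_spectrum (A := A)).bddAbove
  obtain ⟨N, hN⟩ := pow_unbounded_of_one_lt (K / ε) hq
  have hSN : S (ε * q ^ N) = A := by
    rw [hSdef]
    simp only []
    conv_rhs => rw [← cfc_id' ℝ A]
    refine cfc_congr fun x hx => min_eq_left ?_
    rw [div_lt_iff₀ hε] at hN
    linarith [hK hx]
  have h := main N
  rw [hSN] at h
  refine le_trans (mul_le_mul_of_nonneg_left ?_ hqr) h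
  -- It remains to bound the contribution of the lowest truncation.
  have h0 : (S ε) ^ r ≤ algebraMap ℝ _ (ε ^ r) := by
    rw [hSr _ hε, ← cfc_const (ε ^ r) A hAsa]
    refine cfc_mono (fun x hx => ?_) (continuousOn_spectrum _ _) (continuousOn_spectrum _ _)
    exact Real.rpow_le_rpow (lt_min (hA.spectrum_pos (𝕜 := ℝ) hx) hε).le (min_le_right _ _) hr.1.le
  have h1 := trace_mul_le_re hBr h0
  rw [← Algebra.commutes, ← Algebra.smul_def, trace_smul, Complex.smul_re, smul_eq_mul] at h1
  linarith

lemma trace_prod_le_of_pos {A B : Matrix (Fin n) (Fin n) ℂ} (hA : IsStrictlyPositive A)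
    (hB : IsStrictlyPositive B) {r : ℝ} (hr : r ∈ Set.Ioo (0 : ℝ) 1) :
    (B ^ r * A ^ r).trace.re ≤
      ((B ^ (1 / 2 : ℝ) * A * B ^ (1 / 2 : ℝ)) ^ r).trace.re := by
  have hlim : Tendsto (fun ε : ℝ => (1 + ε) ^ (r - 1) *
      ((B ^ r * A ^ r).trace.re - ε ^ r * (B ^ r).trace.re)) (nhdsWithin 0 (Set.Ioi 0))
      (nhds ((1 + 0) ^ (r - 1) * ((B ^ r * A ^ r).trace.re - 0 ^ r * (B ^ r).trace.re))) := by
    refine Tendsto.mono_left ?_ nhdsWithin_le_nhds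
    have h1 : ContinuousAt (fun ε : ℝ => (1 + ε) ^ (r - 1)) 0 :=
      (continuousAt_const.add continuousAt_id).rpow_const (Or.inl (by norm_num))
    have h2 : ContinuousAt (fun ε : ℝ => ε ^ r) 0 :=
      Real.continuousAt_rpow_const _ _ (Or.inr hr.1.le)
    exact h1.mul (continuousAt_const.sub (h2.mul continuousAt_const))
  rw [Real.zero_rpow hr.1.ne', add_zero, Real.one_rpow, one_mul, zero_mul, sub_zero] at hlim
  refine le_of_tendsto hlim ?_
  filter_upwards [self_mem_nhdsWithin] with ε hε
  exact trace_prod_le_approx hA hB hr hε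

/-! ### Passage to positive semi-definite matrices -/

lemma tendsto_rpow {X : ℝ → Matrix (Fin n) (Fin n) ℂ} {X₀ : Matrix (Fin n) (Fin n) ℂ}
    {l : Filter ℝ} (h : Tendsto X l (nhds X₀)) (hX : ∀ᶠ ε in l, 0 ≤ X ε) (hX₀ : 0 ≤ X₀)
    {r : ℝ} (hr : 0 < r) : Tendsto (fun ε => X ε ^ r) l (nhds (X₀ ^ r)) := by
  lift r to ℝ≥0 using hr.le
  have h1 := CFC.continuousOn_nnrpow (A := Matrix (Fin n) (Fin n) ℂ) r X₀ hX₀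
  have h2 := h1.tendsto.comp (tendsto_nhdsWithin_iff.mpr ⟨h, hX⟩)
  have hr' : 0 < r := by exact_mod_cast hr
  simpa only [Function.comp_def, CFC.nnrpow_eq_rpow hr'] using h2

/-- The Araki–Lieb–Thirring inequality for exponents in `(0, 1)`. -/
lemma trace_prod_le {A B : Matrix (Fin n) (Fin n) ℂ} (hA : 0 ≤ A) (hB : 0 ≤ B)
    {r : ℝ} (hr : r ∈ Set.Ioo (0 : ℝ) 1) :
    (B ^ r * A ^ r).trace.re ≤
      ((B ^ (1 / 2 : ℝ) * A * B ^ (1 / 2 : ℝ)) ^ r).trace.re := by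
  have hpert : ∀ X : Matrix (Fin n) (Fin n) ℂ,
      Tendsto (fun ε : ℝ => X + algebraMap ℝ _ ε) (nhdsWithin 0 (Set.Ioi 0)) (nhds X) := by
    intro X
    refine Tendsto.mono_left ?_ nhdsWithin_le_nhds
    have : Continuous fun ε : ℝ => X + algebraMap ℝ (Matrix (Fin n) (Fin n) ℂ) ε :=
      continuous_const.add (continuous_algebraMap ℝ _)
    simpa using this.tendsto 0
  have hpos : ∀ X : Matrix (Fin n) (Fin n) ℂ, 0 ≤ X → ∀ ε : ℝ, 0 < ε →
      IsStrictlyPositive (X + algebraMap ℝ _ ε) := fun X hX ε hε => by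
    refine IsStrictlyPositive.nonneg_add hX ?_
    exact ((IsUnit.mk0 ε hε.ne').map (algebraMap ℝ _)).isStrictlyPositive
      (algebraMap_nonneg _ hε.le)
  have hnn : ∀ X : Matrix (Fin n) (Fin n) ℂ, 0 ≤ X →
      ∀ᶠ ε : ℝ in nhdsWithin 0 (Set.Ioi 0), 0 ≤ X + algebraMap ℝ _ ε := fun X hX => by
    filter_upwards [self_mem_nhdsWithin] with ε hε using (hpos X hX ε hε).nonneg
  have hre : Continuous fun X : Matrix (Fin n) (Fin n) ℂ => X.trace.re :=
    Complex.continuous_re.comp continuous_id.matrix_trace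
  have hl := (hre.tendsto _).comp
    ((tendsto_rpow (hpert B) (hnn B hB) hB hr.1).mul (tendsto_rpow (hpert A) (hnn A hA) hA hr.1))
  have hH := tendsto_rpow (hpert B) (hnn B hB) hB (r := 1 / 2) (by norm_num)
  have hsand : ∀ X Y : Matrix (Fin n) (Fin n) ℂ, 0 ≤ X →
      0 ≤ Y ^ (1 / 2 : ℝ) * X * Y ^ (1 / 2 : ℝ) := fun X Y hX =>
    (CFC.rpow_nonneg (a := Y) (y := 1 / 2)).isSelfAdjoint.conjugate_nonneg hX
  have hr' := (hre.tendsto _).comp (tendsto_rpow ((hH.mul (hpert A)).mul hH)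
    (by filter_upwards [hnn A hA] with ε h using hsand _ _ h) (hsand A B hA) hr.1)
  refine le_of_tendsto_of_tendsto hl hr' ?_
  filter_upwards [self_mem_nhdsWithin] with ε hε
  exact trace_prod_le_of_pos (hpos A hA ε hε) (hpos B hB ε hε) hr


/-! ### The sandwiched form -/

/-- For positive exponents the convention `0 ^ t = 0` agrees with that of `Real.rpow`. -/
lemma mpow_eq_rpow {M : Matrix (Fin n) (Fin n) ℂ} (hM : 0 ≤ M) {t : ℝ} (ht : 0 < t) :
    mpow M t = M ^ t := by
  have hH : M.IsHermitian := hM.posSemidef.1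
  rw [mpow, dif_pos hH, ← hH.cfc_eq, CFC.rpow_eq_cfc_real hM]
  refine cfc_congr fun x _ => ?_
  by_cases hx : x = 0
  · simp [rpow0, hx, Real.zero_rpow ht.ne']
  · simp [rpow0, hx]

lemma trace_mpow_le {ρ σ : Matrix (Fin n) (Fin n) ℂ} (hρ : ρ.PosSemidef) (hσ : σ.PosSemidef)
    {α : ℝ} (hα : α ∈ Set.Ioo (0 : ℝ) 1) :
    (mpow ρ α * mpow σ (1 - α)).trace.re ≤
      (mpow (mpow σ ((1 - α) / (2 * α)) * ρ * mpow σ ((1 - α) / (2 * α))) α).trace.re := by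
  have h0 : 0 < α := hα.1
  have h1 : 0 < 1 - α := sub_pos.mpr hα.2
  have hs : 0 < (1 - α) / (2 * α) := by positivity
  have hρ0 : 0 ≤ ρ := hρ.nonneg
  have hσ0 : 0 ≤ σ := hσ.nonneg
  have hsand : 0 ≤ σ ^ ((1 - α) / (2 * α)) * ρ * σ ^ ((1 - α) / (2 * α)) :=
    (CFC.rpow_nonneg (a := σ)).isSelfAdjoint.conjugate_nonneg hρ0
  rw [mpow_eq_rpow hσ0 hs, mpow_eq_rpow hsand h0, mpow_eq_rpow hρ0 h0, mpow_eq_rpow hσ0 h1,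
    Matrix.trace_mul_comm]
  -- With `B = σ ^ ((1 - α) / α)`, `B ^ α = σ ^ (1 - α)` and `B ^ (1/2) = σ ^ ((1 - α) / (2 α))`.
  have h := trace_prod_le hρ0 (CFC.rpow_nonneg (a := σ) (y := (1 - α) / α)) hα
  rw [CFC.rpow_rpow_of_exponent_nonneg σ _ _ (by positivity) h0.le hσ0,
    CFC.rpow_rpow_of_exponent_nonneg σ _ _ (by positivity) (by norm_num) hσ0,
    div_mul_cancel₀ _ h0.ne',
    show (1 - α) / α * (1 / 2) = (1 - α) / (2 * α) by field_simp] at h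
  exact h

end TraceInequality

/-- For a density matrix `ρ` and positive semi-definite `σ` with `supp ρ ⊆ supp σ`, and
`α ∈ (0,1)`, `tr[(σ^{(1-α)/(2α)} ρ σ^{(1-α)/(2α)})^α] ≥ tr(ρ^α σ^{1-α})`. -/
theorem trace_sandwich_ge_trace_prod {n : ℕ} (ρ σ : Matrix (Fin n) (Fin n) ℂ)
    (hρ : ρ.PosSemidef) (hρtr : ρ.trace = 1) (hσ : σ.PosSemidef)
    (hsupp : msupp ρ ≤ msupp σ) (α : ℝ) (hα : α ∈ Set.Ioo (0 : ℝ) 1) :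
    (mpow ρ α * mpow σ (1 - α)).trace.re ≤
      (mpow (mpow σ ((1 - α) / (2 * α)) * ρ * mpow σ ((1 - α) / (2 * α))) α).trace.re := by
  exact trace_mpow_le hρ hσ hα
end

section
/- Let ρ be a density matrix and σ a positive semi-definite matrix on a finite-dimensional complex Hilbert space with supp ρ ⊆ supp σ. Then for every α ∈ (0,1), the quantum Rényi divergence is bounded above by the α-relative Rényi entropy: D_α(ρ||σ) ≤ D̃_α(ρ||σ). -/
/-!
Since `α - 1 < 0`, the claim is `tr (ρ^α σ^{1-α}) ≤ tr (σ^β ρ σ^β)^α` with `β = (1-α)/(2α)`,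
together with positivity of the left side, which comes from `supp ρ ⊆ supp σ`. The trace inequality
is the Araki–Lieb–Thirring inequality for an exponent below one. In an eigenbasis of `σ` it reads
`tr (A^α D^{2α}) ≤ tr (D A D)^α` with `D` diagonal and nonnegative.

First a weaker bound: partition the coordinates into `N` blocks on which `D` is scalar, with
coordinate projections `P_t` and scalars `g_t`. Jensen's trace inequality (`sum_diag_rpow_le`) gives
`g_t^{2α} tr (P_t A^α P_t) ≤ tr (P_t D A D P_t)^α`, and compression decreases the trace of the
`α`-th power (`trace_rpow_compress_le`, from Löwner–Heinz). Summing over `t`,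
`tr (A^α D^{2α}) ≤ N tr (D A D)^α` (`pinched_bound`).

The factor `N` is removed by the tensor power trick (`araki_lieb_thirring_diagonal`): for the
`m`-fold tensor powers both traces are raised to the power `m`, while the entries of `D^{⊗m}` depend
only on the multiplicities of the indices in a tuple, so that `N` is polynomial in `m`.
-/

open Matrix Filter ComplexOrder

/-- The `α`-relative Rényi entropy `D̃_α(ρ‖σ)`. -/
noncomputable def relRenyi {n : ℕ} (ρ σ : Matrix (Fin n) (Fin n) ℂ) (α : ℝ) : ℝ :=
  (α - 1)⁻¹ * Real.log ((mpow ρ α * mpow σ (1 - α)).trace.re)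

set_option linter.unusedSectionVars false

section
variable {ι : Type*} [Fintype ι] [DecidableEq ι]

/-! ### Functional calculus in a diagonalizing basis -/

/-- On the finite set of points involved, `f` agrees with an interpolating polynomial, for which
the formula is algebraic. -/
theorem cfc_conj_diagonal (f : ℝ → ℝ) (U : Matrix ι ι ℂ) (hU : Uᴴ * U = 1) (d : ι → ℝ) :
    cfc f (U * diagonal (fun i => (d i : ℂ)) * Uᴴ) =
      U * diagonal (fun i => (f (d i) : ℂ)) * Uᴴ := by
  classical
  have hU' : U * Uᴴ = 1 := mul_eq_one_comm.mp hU
  set M := U * diagonal (fun i => (d i : ℂ)) * Uᴴ with hM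
  have hMh : IsSelfAdjoint M := by
    have : (diagonal (fun i => (d i : ℂ))).IsHermitian := by
      rw [isHermitian_diagonal_iff]; intro i; simp [isSelfAdjoint_iff]
    exact isHermitian_mul_mul_conjTranspose U this
  let s : Finset ℝ := (finite_real_spectrum (A := M)).toFinset ∪ Finset.univ.image d
  let p : Polynomial ℝ := Lagrange.interpolate s id f
  have hp : ∀ x ∈ s, p.eval x = f x := fun x hx =>
    Lagrange.eval_interpolate_at_node (v := id) f (Set.injOn_id _) hx
  have key : ∀ q : Polynomial ℝ, Polynomial.aeval M q =
      U * diagonal (fun i => ((q.eval (d i) : ℝ) : ℂ)) * Uᴴ := by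
    intro q
    induction q using Polynomial.induction_on' with
    | add q r hq hr =>
      rw [map_add, hq, hr, ← add_mul, ← mul_add, diagonal_add]
      simp
    | monomial k a =>
      have hpow : M ^ k = U * diagonal (fun i => ((d i ^ k : ℝ) : ℂ)) * Uᴴ := by
        induction k with
        | zero => simp [hU']
        | succ k ih =>
          rw [pow_succ, ih, hM]
          calc _ = U * diagonal (fun i => ((d i ^ k : ℝ) : ℂ)) * (Uᴴ * U) *
                diagonal (fun i => (d i : ℂ)) * Uᴴ := by simp only [mul_assoc]
            _ = _ := by
              rw [hU, mul_one, mul_assoc U, diagonal_mul_diagonal]; simp [pow_succ]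
      rw [Polynomial.aeval_monomial, hpow]
      simp only [Polynomial.eval_monomial, Complex.ofReal_mul]
      rw [← diagonal_mul_diagonal (fun _ => (a : ℂ)), ← Algebra.smul_def]
      have : diagonal (fun _ : ι => (a : ℂ)) = (a : ℂ) • (1 : Matrix ι ι ℂ) := by
        rw [← diagonal_one, ← diagonal_smul]; congr 1; ext; simp
      rw [this]
      simp
  have h1 : cfc f M = cfc p.eval M :=
    cfc_congr (fun x hx => (hp x (by simp [s]; left; exact hx)).symm)
  rw [h1, cfc_polynomial p M hMh, key]
  congr 3
  ext i
  rw [hp (d i) (by simp [s])]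

theorem exists_diag {M : Matrix ι ι ℂ} (hM : M.IsHermitian) :
    ∃ V : Matrix ι ι ℂ, Vᴴ * V = 1 ∧ M = V * diagonal (fun i => (hM.eigenvalues i : ℂ)) * Vᴴ := by
  refine ⟨hM.eigenvectorUnitary, Unitary.coe_star_mul_self _, ?_⟩
  conv_lhs => rw [hM.spectral_theorem]
  rfl

theorem trace_cfc_eq_sum {M : Matrix ι ι ℂ} (hM : M.IsHermitian) (f : ℝ → ℝ) :
    (cfc f M).trace.re = ∑ i, f (hM.eigenvalues i) := by
  obtain ⟨V, hV, h⟩ := exists_diag hM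
  conv_lhs => rw [h]
  rw [cfc_conj_diagonal _ _ hV, trace_mul_comm, ← mul_assoc, hV, one_mul, trace_diagonal]
  simp

/-- `Xᴴ * X` and `X * Xᴴ` have the same characteristic polynomial, hence the same eigenvalues. -/
theorem trace_cfc_conjTranspose_mul (f : ℝ → ℝ) (X : Matrix ι ι ℂ) :
    (cfc f (Xᴴ * X)).trace.re = (cfc f (X * Xᴴ)).trace.re := by
  have h1 := isHermitian_conjTranspose_mul_self X
  have h2 := isHermitian_mul_conjTranspose_self X
  rw [trace_cfc_eq_sum h1, trace_cfc_eq_sum h2,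
    (IsHermitian.eigenvalues_eq_eigenvalues_iff h1 h2).2 (charpoly_mul_comm _ _)]

section
open scoped MatrixOrder Matrix.Norms.L2Operator

theorem exists_eq_conjTranspose_mul_self {A : Matrix ι ι ℂ} (hA : A.PosSemidef) :
    ∃ S : Matrix ι ι ℂ, A = Sᴴ * S :=
  CStarAlgebra.nonneg_iff_eq_star_mul_self.1 (Matrix.nonneg_iff_posSemidef.2 hA)

/-- A consequence of the Löwner–Heinz theorem (operator monotonicity of `x ↦ x ^ α`). -/
theorem trace_rpow_mono {α : ℝ} (hα : α ∈ Set.Ioo (0 : ℝ) 1) {A B : Matrix ι ι ℂ}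
    (hA : A.PosSemidef) (hAB : (B - A).PosSemidef) :
    (cfc (fun x : ℝ => x ^ α) A).trace.re ≤ (cfc (fun x : ℝ => x ^ α) B).trace.re := by
  have hle : A ≤ B := Matrix.le_iff.2 hAB
  have h0 : 0 ≤ A := Matrix.nonneg_iff_posSemidef.2 hA
  have := CFC.rpow_le_rpow (p := α) ⟨hα.1.le, hα.2.le⟩ hle
  rw [CFC.rpow_eq_cfc_real h0, CFC.rpow_eq_cfc_real (h0.trans hle)] at this
  have h3 := (Matrix.le_iff.1 this).trace_nonneg
  rw [trace_sub, sub_nonneg] at h3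
  exact (Complex.le_def.1 h3).1
end

/-! ### Compression to a set of coordinates -/

theorem star_dotProduct_conj_diagonal (V : Matrix ι ι ℂ) (d : ι → ℝ) (w : ι → ℂ) :
    star w ⬝ᵥ (V * diagonal (fun i => (d i : ℂ)) * Vᴴ) *ᵥ w =
      ((∑ i, d i * Complex.normSq ((Vᴴ *ᵥ w) i) : ℝ) : ℂ) := by
  have h : star w ᵥ* V = star (Vᴴ *ᵥ w) := by rw [star_mulVec, conjTranspose_conjTranspose]
  rw [← mulVec_mulVec, ← mulVec_mulVec, dotProduct_mulVec, h, dotProduct]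
  push_cast
  refine Finset.sum_congr rfl fun i _ => ?_
  rw [mulVec_diagonal, Complex.normSq_eq_conj_mul_self, Pi.star_apply]
  simp only [RCLike.star_def]
  ring

/-- Hölder's inequality with exponents `1/α` and `1/(1-α)`, for a subprobability weight `p`. -/
theorem sum_rpow_mul_le {α : ℝ} (hα : α ∈ Set.Ioo (0 : ℝ) 1) (d p : ι → ℝ)
    (hd : ∀ i, 0 ≤ d i) (hp : ∀ i, 0 ≤ p i) (hp1 : ∑ i, p i ≤ 1) :
    ∑ i, d i ^ α * p i ≤ (∑ i, d i * p i) ^ α := by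
  obtain ⟨h0, h1⟩ := hα
  have h1' : 0 < 1 - α := by linarith
  have hc : Real.HolderConjugate α⁻¹ (1 - α)⁻¹ :=
    Real.holderConjugate_iff.2 ⟨(one_lt_inv₀ h0).2 h1, by simp⟩
  have H := Real.inner_le_Lp_mul_Lq_of_nonneg Finset.univ
    (f := fun i => (d i * p i) ^ α) (g := fun i => p i ^ (1 - α)) hc
    (fun i _ => Real.rpow_nonneg (mul_nonneg (hd i) (hp i)) _)
    (fun i _ => Real.rpow_nonneg (hp i) _)
  have e1 : ∀ i, (d i * p i) ^ α * p i ^ (1 - α) = d i ^ α * p i := fun i => by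
    rw [Real.mul_rpow (hd i) (hp i), mul_assoc, ← Real.rpow_add_of_nonneg (hp i) h0.le h1'.le]
    simp
  have e2 : ∀ i, ((d i * p i) ^ α) ^ α⁻¹ = d i * p i := fun i =>
    Real.rpow_rpow_inv (mul_nonneg (hd i) (hp i)) h0.ne'
  have e3 : ∀ i, (p i ^ (1 - α)) ^ (1 - α)⁻¹ = p i := fun i =>
    Real.rpow_rpow_inv (hp i) h1'.ne'
  simp only [e1, e2, e3, one_div, inv_inv] at H
  refine H.trans ?_
  exact mul_le_of_le_one_right
    (Real.rpow_nonneg (Finset.sum_nonneg fun i _ => mul_nonneg (hd i) (hp i)) _)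
    (Real.rpow_le_one (Finset.sum_nonneg fun i _ => hp i) hp1 h1'.le)

/-- Jensen's inequality for the spectral measure of `A` at a vector of norm at most one. -/
theorem expectation_rpow_le {α : ℝ} (hα : α ∈ Set.Ioo (0 : ℝ) 1) {A : Matrix ι ι ℂ}
    (hA : A.PosSemidef) (w : ι → ℂ) (hw : (star w ⬝ᵥ w).re ≤ 1) :
    (star w ⬝ᵥ (cfc (fun x : ℝ => x ^ α) A) *ᵥ w).re ≤ (star w ⬝ᵥ A *ᵥ w).re ^ α := by
  obtain ⟨V, hV, h⟩ := exists_diag hA.isHermitian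
  have hV' : V * Vᴴ = 1 := mul_eq_one_comm.mp hV
  have h2 : cfc (fun x : ℝ => x ^ α) A = _ :=
    (congrArg _ h).trans (cfc_conj_diagonal (fun x : ℝ => x ^ α) V hV _)
  have h3 : (star w ⬝ᵥ A *ᵥ w) = _ :=
    (congrArg (fun M => star w ⬝ᵥ M *ᵥ w) h).trans (star_dotProduct_conj_diagonal V _ w)
  rw [h2, h3, star_dotProduct_conj_diagonal, Complex.ofReal_re, Complex.ofReal_re]
  refine sum_rpow_mul_le hα _ _ hA.eigenvalues_nonneg (fun i => Complex.normSq_nonneg _) ?_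
  have h4 := star_dotProduct_conj_diagonal V (fun _ => 1) w
  simp only [Complex.ofReal_one, diagonal_one, mul_one, hV', one_mulVec, one_mul] at h4
  rw [h4, Complex.ofReal_re] at hw
  exact hw

/-- The orthogonal projection onto the span of the basis vectors `e_i` with `s i`. -/
def coordProj (s : ι → Prop) [DecidablePred s] : Matrix ι ι ℂ :=
  diagonal (fun i => if s i then 1 else 0)

theorem coordProj_conjTranspose (s : ι → Prop) [DecidablePred s] :
    (coordProj s)ᴴ = coordProj s := by
  rw [coordProj, diagonal_conjTranspose]
  congr 1; ext i; simp [apply_ite]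

theorem coordProj_mul_self (s : ι → Prop) [DecidablePred s] :
    coordProj s * coordProj s = coordProj s := by
  simp [coordProj, diagonal_mul_diagonal]

/-- Jensen's trace inequality `tr (P A^α P) ≤ tr (P A P)^α` for a coordinate projection `P`:
evaluate the left side in an eigenbasis of `P A P`. -/
theorem sum_diag_rpow_le {α : ℝ} (hα : α ∈ Set.Ioo (0 : ℝ) 1) {A : Matrix ι ι ℂ}
    (hA : A.PosSemidef) (s : ι → Prop) [DecidablePred s] :
    (∑ i, if s i then (cfc (fun x : ℝ => x ^ α) A i i).re else 0) ≤
      (cfc (fun x : ℝ => x ^ α) (coordProj s * A * coordProj s)).trace.re := by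
  set P : Matrix ι ι ℂ := coordProj s with hP
  set F := cfc (fun x : ℝ => x ^ α) A with hF
  have hN : (P * A * P).PosSemidef := by
    have := hA.mul_mul_conjTranspose_same P
    rwa [coordProj_conjTranspose] at this
  obtain ⟨V, hV, h⟩ := exists_diag hN.isHermitian
  have hV' : V * Vᴴ = 1 := mul_eq_one_comm.mp hV
  rw [trace_cfc_eq_sum hN.isHermitian]
  have e1 : (∑ i, if s i then (F i i).re else 0) = (Vᴴ * (P * F * P) * V).trace.re := by
    rw [trace_mul_comm, ← mul_assoc, hV', one_mul, trace, Complex.re_sum]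
    refine Finset.sum_congr rfl fun i _ => ?_
    simp only [hP, coordProj, diag_apply, mul_diagonal, diagonal_mul]
    split_ifs <;> simp
  have e2 : ∀ (X : Matrix ι ι ℂ) k, (Vᴴ * (P * X * P) * V) k k =
      star ((P * V).col k) ⬝ᵥ X *ᵥ (P * V).col k := by
    intro X k
    have : Vᴴ * (P * X * P) * V = (P * V)ᴴ * (X * (P * V)) := by
      rw [conjTranspose_mul, hP, coordProj_conjTranspose]; simp only [mul_assoc]
    rw [this]
    rfl
  rw [e1, trace, Complex.re_sum]
  refine Finset.sum_le_sum fun k _ => ?_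
  rw [diag_apply, e2]
  have e3 : hN.isHermitian.eigenvalues k = (star ((P * V).col k) ⬝ᵥ A *ᵥ (P * V).col k).re := by
    rw [← e2]
    have : Vᴴ * (V * diagonal (fun i => (hN.isHermitian.eigenvalues i : ℂ)) * Vᴴ) * V
        = diagonal (fun i => (hN.isHermitian.eigenvalues i : ℂ)) := by
      simp only [mul_assoc, hV, mul_one]
      rw [← mul_assoc, hV, one_mul]
    rw [← h] at this
    rw [this]; simp
  rw [e3]
  refine expectation_rpow_le hα hA _ ?_
  have e4 : star ((P * V).col k) ⬝ᵥ (P * V).col k = ∑ i, if s i then star (V i k) * V i k else 0 := by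
    refine Finset.sum_congr rfl fun i _ => ?_
    simp only [hP, coordProj, col_apply, Pi.star_apply, diagonal_mul]
    split_ifs <;> simp
  have e5 : (∑ i, star (V i k) * V i k) = 1 := by
    have := congrFun (congrFun hV k) k
    simpa [mul_apply] using this
  rw [e4, ← Complex.one_re, ← e5, Complex.re_sum, Complex.re_sum]
  refine Finset.sum_le_sum fun i _ => ?_
  split_ifs
  · exact le_rfl
  · simp only [RCLike.star_def, ← Complex.normSq_eq_conj_mul_self, Complex.ofReal_re, Complex.zero_re]
    exact Complex.normSq_nonneg _

/-- Compression decreases `tr A^α`: with `A = Sᴴ S`, the matrix `P A P` has the same eigenvalues as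
`S P Sᴴ ≤ S Sᴴ`, and `S Sᴴ` has those of `A`. -/
theorem trace_rpow_compress_le {α : ℝ} (hα : α ∈ Set.Ioo (0 : ℝ) 1) {A : Matrix ι ι ℂ}
    (hA : A.PosSemidef) (s : ι → Prop) [DecidablePred s] :
    (cfc (fun x : ℝ => x ^ α) (coordProj s * A * coordProj s)).trace.re ≤
      (cfc (fun x : ℝ => x ^ α) A).trace.re := by
  obtain ⟨S, rfl⟩ : ∃ S : Matrix ι ι ℂ, A = Sᴴ * S := exists_eq_conjTranspose_mul_self hA
  have h1 : coordProj s * (Sᴴ * S) * coordProj s = (S * coordProj s)ᴴ * (S * coordProj s) := by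
    rw [conjTranspose_mul, coordProj_conjTranspose]; simp only [mul_assoc]
  rw [h1, trace_cfc_conjTranspose_mul, trace_cfc_conjTranspose_mul]
  refine trace_rpow_mono hα (posSemidef_self_mul_conjTranspose _) ?_
  have h2 : S * Sᴴ - S * coordProj s * (S * coordProj s)ᴴ =
      S * coordProj (fun i => ¬ s i) * Sᴴ := by
    have h3 : coordProj (fun i => ¬ s i) = 1 - coordProj s := by
      rw [coordProj, coordProj, ← diagonal_one, diagonal_sub]
      congr 1; ext i; by_cases h : s i <;> simp [h]
    rw [conjTranspose_mul, coordProj_conjTranspose, h3, mul_assoc, ← mul_assoc (coordProj s),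
      coordProj_mul_self]
    simp [mul_sub, sub_mul, mul_assoc]
  rw [h2]
  refine PosSemidef.mul_mul_conjTranspose_same ?_ S
  rw [coordProj, posSemidef_diagonal_iff]
  intro i; split_ifs <;> simp

theorem cfc_rpow_smul {α : ℝ} {A : Matrix ι ι ℂ}
    (hA : A.PosSemidef) {r : ℝ} (hr : 0 ≤ r) :
    cfc (fun x : ℝ => x ^ α) ((r : ℂ) • A) = ((r ^ α : ℝ) : ℂ) • cfc (fun x : ℝ => x ^ α) A := by
  obtain ⟨V, hV, h⟩ := exists_diag hA.isHermitian
  have h1 : (r : ℂ) • A = V * diagonal (fun i => ((r * hA.isHermitian.eigenvalues i : ℝ) : ℂ)) * Vᴴ := by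
    conv_lhs => rw [h]
    rw [← Matrix.smul_mul, ← Matrix.mul_smul, ← diagonal_smul]
    congr 3; ext i; simp
  have h2 : cfc (fun x : ℝ => x ^ α) A = _ :=
    (congrArg _ h).trans (cfc_conj_diagonal (fun x : ℝ => x ^ α) V hV _)
  rw [h1, h2, cfc_conj_diagonal _ _ hV, ← Matrix.smul_mul, ← Matrix.mul_smul, ← diagonal_smul]
  congr 3; ext i
  simp [Real.mul_rpow hr (hA.eigenvalues_nonneg i)]

/-- The Araki–Lieb–Thirring inequality for a diagonal matrix `D = diag c`, up to a factor counting
the blocks of a partition `τ` on which `D` is scalar. On each block `P`, one has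
`P D A D P = g² P A P`, so Jensen's inequality applies to the block, and the compression of
`D A D` to the block has a smaller trace power. -/
theorem pinched_bound {α : ℝ} (hα : α ∈ Set.Ioo (0 : ℝ) 1) {A : Matrix ι ι ℂ}
    (hA : A.PosSemidef) {T : Type*} [Fintype T] [DecidableEq T] (τ : ι → T) (c : ι → ℝ)
    (hc : ∀ i, 0 ≤ c i) (hτ : ∀ i j, τ i = τ j → c i = c j) :
    ∑ i, (cfc (fun x : ℝ => x ^ α) A i i).re * (c i ^ 2) ^ α ≤
      Fintype.card T * (cfc (fun x : ℝ => x ^ α)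
        (diagonal (fun i => (c i : ℂ)) * A * diagonal (fun i => (c i : ℂ)))).trace.re := by
  set D : Matrix ι ι ℂ := diagonal (fun i => (c i : ℂ)) with hD
  have hDh : Dᴴ = D := by
    rw [hD, diagonal_conjTranspose]; congr 1; ext i; simp
  have hC : (D * A * D).PosSemidef := by
    have := hA.mul_mul_conjTranspose_same D
    rwa [hDh] at this
  have e1 : ∑ i, (cfc (fun x : ℝ => x ^ α) A i i).re * (c i ^ 2) ^ α =
      ∑ t : T, ∑ i, if τ i = t then (cfc (fun x : ℝ => x ^ α) A i i).re * (c i ^ 2) ^ α else 0 := by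
    rw [Finset.sum_comm]
    simp
  rw [e1, ← nsmul_eq_mul, ← Finset.card_univ, ← Finset.sum_const]
  refine Finset.sum_le_sum fun t _ => ?_
  refine le_trans ?_ (trace_rpow_compress_le hα hC (fun i => τ i = t))
  obtain ⟨g, hg0, hg⟩ : ∃ g : ℝ, 0 ≤ g ∧ ∀ i, τ i = t → c i = g := by
    by_cases h : ∃ i, τ i = t
    · obtain ⟨i, hi⟩ := h
      exact ⟨c i, hc i, fun j hj => hτ j i (hj.trans hi.symm)⟩
    · exact ⟨0, le_rfl, fun i hi => (h ⟨i, hi⟩).elim⟩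
  have hPD : coordProj (fun i => τ i = t) * (D * A * D) * coordProj (fun i => τ i = t) =
      ((g ^ 2 : ℝ) : ℂ) • (coordProj (fun i => τ i = t) * A * coordProj (fun i => τ i = t)) := by
    ext i j
    simp only [coordProj, hD, mul_diagonal, diagonal_mul, Matrix.smul_apply, smul_eq_mul]
    by_cases hi : τ i = t <;> by_cases hj : τ j = t <;> simp [hi, hj]
    rw [hg i hi, hg j hj]; ring
  have hN : (coordProj (fun i => τ i = t) * A * coordProj (fun i => τ i = t)).PosSemidef := by
    have := hA.mul_mul_conjTranspose_same (coordProj (fun i => τ i = t))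
    rwa [coordProj_conjTranspose] at this
  rw [hPD, cfc_rpow_smul hN (sq_nonneg g), trace_smul, smul_eq_mul, Complex.re_ofReal_mul]
  refine le_trans (le_of_eq ?_) (mul_le_mul_of_nonneg_left
    (sum_diag_rpow_le hα hA (fun i => τ i = t)) (Real.rpow_nonneg (sq_nonneg g) _))
  rw [Finset.mul_sum]
  refine Finset.sum_congr rfl fun i _ => ?_
  split_ifs with h
  · rw [hg i h, mul_comm]
  · simp

/-! ### Tensor powers -/

/-- The `m`-fold Kronecker power of a matrix, indexed by `m`-tuples. -/
def tensorPow (m : ℕ) (M : Matrix ι ι ℂ) : Matrix (Fin m → ι) (Fin m → ι) ℂ :=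
  Matrix.of fun f g => ∏ k, M (f k) (g k)

theorem tensorPow_apply (m : ℕ) (M : Matrix ι ι ℂ) (f g : Fin m → ι) :
    tensorPow m M f g = ∏ k, M (f k) (g k) := rfl

theorem tensorPow_mul (m : ℕ) (M N : Matrix ι ι ℂ) :
    tensorPow m (M * N) = tensorPow m M * tensorPow m N := by
  ext f g
  simp only [tensorPow_apply, mul_apply, ← Finset.prod_mul_distrib]
  rw [Finset.prod_univ_sum, Fintype.piFinset_univ]

theorem tensorPow_conjTranspose (m : ℕ) (M : Matrix ι ι ℂ) :
    tensorPow m Mᴴ = (tensorPow m M)ᴴ := by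
  ext f g
  simp [tensorPow_apply, conjTranspose_apply]

theorem tensorPow_diagonal (m : ℕ) (d : ι → ℂ) :
    tensorPow m (diagonal d) = diagonal (fun f : Fin m → ι => ∏ k, d (f k)) := by
  ext f g
  rw [tensorPow_apply]
  by_cases h : f = g
  · subst h; simp
  · rw [diagonal_apply_ne _ h]
    obtain ⟨k, hk⟩ := Function.ne_iff.1 h
    exact Finset.prod_eq_zero (Finset.mem_univ k) (diagonal_apply_ne _ hk)

theorem tensorPow_one (m : ℕ) : tensorPow m (1 : Matrix ι ι ℂ) = 1 := by
  rw [← diagonal_one, tensorPow_diagonal]; simp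

theorem trace_tensorPow (m : ℕ) (M : Matrix ι ι ℂ) :
    (tensorPow m M).trace = M.trace ^ m := by
  rw [trace, trace, Fintype.sum_pow]
  rfl

theorem tensorPow_posSemidef (m : ℕ) {M : Matrix ι ι ℂ} (hM : M.PosSemidef) :
    (tensorPow m M).PosSemidef := by
  obtain ⟨S, rfl⟩ : ∃ S : Matrix ι ι ℂ, M = Sᴴ * S := exists_eq_conjTranspose_mul_self hM
  rw [tensorPow_mul, tensorPow_conjTranspose]
  exact posSemidef_conjTranspose_mul_self _

theorem cfc_rpow_tensorPow (m : ℕ) {M : Matrix ι ι ℂ} (hM : M.PosSemidef) (α : ℝ) :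
    cfc (fun x : ℝ => x ^ α) (tensorPow m M) = tensorPow m (cfc (fun x : ℝ => x ^ α) M) := by
  obtain ⟨V, hV, h⟩ := exists_diag hM.isHermitian
  have h2 : cfc (fun x : ℝ => x ^ α) M = _ :=
    (congrArg _ h).trans (cfc_conj_diagonal (fun x : ℝ => x ^ α) V hV _)
  have h1 : tensorPow m M = _ := congrArg (tensorPow m) h
  rw [h1, h2]
  simp only [tensorPow_mul, tensorPow_conjTranspose, tensorPow_diagonal, ← Complex.ofReal_prod]
  rw [cfc_conj_diagonal _ _ (by rw [← tensorPow_conjTranspose, ← tensorPow_mul, hV, tensorPow_one])]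
  congr 4; ext f
  rw [Real.finsetProd_rpow _ _ fun k _ => hM.eigenvalues_nonneg _]

theorem isHermitian_cfc (f : ℝ → ℝ) (M : Matrix ι ι ℂ) : (cfc f M).IsHermitian :=
  cfc_predicate f M

theorem trace_ofReal_re {M : Matrix ι ι ℂ} (hM : M.IsHermitian) :
    ((M.trace.re : ℝ) : ℂ) = M.trace := by
  rw [trace, Complex.re_sum, Complex.ofReal_sum]
  exact Finset.sum_congr rfl fun i _ => hM.coe_re_apply_self i

/-- The tensor power trick: polynomial factors in `m` disappear in the limit `m → ∞`. -/
theorem le_of_forall_pow_le {S T : ℝ} (hS : 0 ≤ S) (n : ℕ)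
    (h : ∀ m : ℕ, T ^ m ≤ ((m : ℝ) + 1) ^ n * S ^ m) : T ≤ S := by
  by_contra! hlt
  have hT : 0 < T := hS.trans_lt hlt
  have hr0 : 0 ≤ S / T := div_nonneg hS hT.le
  have hr : |S / T| < 1 := by rw [abs_of_nonneg hr0]; exact (div_lt_one hT).2 hlt
  have hr' : S / T < 1 := (div_lt_one hT).2 hlt
  have h1 : ∀ m : ℕ, 1 ≤ ((m : ℝ) + 1) ^ n * (S / T) ^ m := fun m => by
    rw [div_pow, ← mul_div_assoc, le_div_iff₀ (pow_pos hT m), one_mul]; exact h m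
  have h2 : ∀ m : ℕ, 1 ≤ m → 1 ≤ 2 ^ n * ((m : ℝ) ^ n * (S / T) ^ m) := fun m hm => by
    refine (h1 m).trans ?_
    rw [← mul_assoc, ← mul_pow]
    have : (1 : ℝ) ≤ m := by exact_mod_cast hm
    gcongr
    linarith
  have h3 := (tendsto_pow_const_mul_const_pow_of_abs_lt_one n hr).const_mul ((2 : ℝ) ^ n)
  rw [mul_zero] at h3
  have := ge_of_tendsto h3 (eventually_atTop.2 ⟨1, h2⟩)
  linarith

/-- The Araki–Lieb–Thirring inequality `tr (A^α D^{2α}) ≤ tr (D A D)^α` for `D = diag c`. -/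
theorem araki_lieb_thirring_diagonal {α : ℝ} (hα : α ∈ Set.Ioo (0 : ℝ) 1) {A : Matrix ι ι ℂ}
    (hA : A.PosSemidef) (c : ι → ℝ) (hc : ∀ i, 0 ≤ c i) :
    ∑ i, (cfc (fun x : ℝ => x ^ α) A i i).re * (c i ^ 2) ^ α ≤
      (cfc (fun x : ℝ => x ^ α)
        (diagonal (fun i => (c i : ℂ)) * A * diagonal (fun i => (c i : ℂ)))).trace.re := by
  set D : Matrix ι ι ℂ := diagonal (fun i => (c i : ℂ)) with hD
  have hDh : Dᴴ = D := by
    rw [hD, diagonal_conjTranspose]; congr 1; ext i; simp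
  have hC : (D * A * D).PosSemidef := by
    have := hA.mul_mul_conjTranspose_same D
    rwa [hDh] at this
  have hS : 0 ≤ (cfc (fun x : ℝ => x ^ α) (D * A * D)).trace.re := by
    rw [trace_cfc_eq_sum hC.isHermitian]
    exact Finset.sum_nonneg fun i _ => Real.rpow_nonneg (hC.eigenvalues_nonneg i) _
  refine le_of_forall_pow_le hS (Fintype.card ι) fun m => ?_
  -- The diagonal entry of `D^{⊗m}` at a tuple depends only on how often each index occurs in it,
  -- which leaves at most `(m + 1) ^ card ι` blocks.
  let τ : (Fin m → ι) → (ι → Fin (m + 1)) := fun f j =>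
    ⟨(Finset.univ.filter fun k => f k = j).card,
      Nat.lt_succ_of_le ((Finset.card_le_univ _).trans (by simp))⟩
  have key := pinched_bound hα (tensorPow_posSemidef m hA) τ (fun f => ∏ k, c (f k))
    (fun f => Finset.prod_nonneg fun k _ => hc _) (fun f g hfg => by
      have hprod : ∀ f : Fin m → ι, ∏ k, c (f k) = ∏ j, c j ^ ((τ f j : ℕ)) := fun f => by
        rw [← Finset.prod_fiberwise' Finset.univ f c]
        simp [τ]
      rw [hprod, hprod, hfg])
  have e1 : tensorPow m D = diagonal (fun f : Fin m → ι => ((∏ k, c (f k) : ℝ) : ℂ)) := by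
    rw [hD, tensorPow_diagonal]; simp
  rw [← e1, ← tensorPow_mul, ← tensorPow_mul, cfc_rpow_tensorPow m hA,
    cfc_rpow_tensorPow m hC, trace_tensorPow, ← trace_ofReal_re (isHermitian_cfc _ _),
    ← Complex.ofReal_pow, Complex.ofReal_re] at key
  rw [Fintype.sum_pow]
  refine (le_of_eq ?_).trans (key.trans (le_of_eq ?_))
  · refine Finset.sum_congr rfl fun f _ => ?_
    have e2 : tensorPow m (cfc (fun x : ℝ => x ^ α) A) f f =
        ((∏ k, (cfc (fun x : ℝ => x ^ α) A (f k) (f k)).re : ℝ) : ℂ) := by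
      rw [tensorPow_apply, Complex.ofReal_prod]
      exact Finset.prod_congr rfl fun k _ =>
        ((isHermitian_cfc (fun x : ℝ => x ^ α) A).coe_re_apply_self (f k)).symm
    rw [e2, Complex.ofReal_re, Finset.prod_mul_distrib, ← Finset.prod_pow,
      Real.finsetProd_rpow _ _ fun k _ => sq_nonneg _]
  · simp

/-! ### Comparison of the two divergences -/

theorem cfc_unitary_conj (f : ℝ → ℝ) (U : Matrix ι ι ℂ) (hU : Uᴴ * U = 1) {M : Matrix ι ι ℂ}
    (hM : M.IsHermitian) : cfc f (U * M * Uᴴ) = U * cfc f M * Uᴴ := by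
  obtain ⟨V, hV, h⟩ := exists_diag hM
  have h2 : cfc f M = _ := (congrArg _ h).trans (cfc_conj_diagonal f V hV _)
  have h1 : U * M * Uᴴ = _ := congrArg (fun M => U * M * Uᴴ) h
  have hUV : (U * V)ᴴ * (U * V) = 1 := by
    rw [conjTranspose_mul, mul_assoc, ← mul_assoc Uᴴ, hU, one_mul, hV]
  have h3 : ∀ X : Matrix ι ι ℂ, U * (V * X * Vᴴ) * Uᴴ = (U * V) * X * (U * V)ᴴ := fun X => by
    rw [conjTranspose_mul]; simp only [mul_assoc]
  rw [h1, h2, h3, h3, cfc_conj_diagonal f _ hUV]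

theorem diag_rpow_nonneg {A : Matrix ι ι ℂ} (hA : A.PosSemidef) (α : ℝ) (j : ι) :
    0 ≤ (cfc (fun x : ℝ => x ^ α) A j j).re ∧
      ((cfc (fun x : ℝ => x ^ α) A j j).re = 0 → A j j = 0) := by
  obtain ⟨V, hV, h⟩ := exists_diag hA.isHermitian
  have h2 : cfc (fun x : ℝ => x ^ α) A = _ :=
    (congrArg _ h).trans (cfc_conj_diagonal (fun x : ℝ => x ^ α) V hV _)
  have e : ∀ d : ι → ℝ, (V * diagonal (fun i => (d i : ℂ)) * Vᴴ) j j =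
      ((∑ i, d i * Complex.normSq (V j i) : ℝ) : ℂ) := fun d => by
    rw [mul_apply, Complex.ofReal_sum]
    refine Finset.sum_congr rfl fun i _ => ?_
    rw [mul_diagonal, conjTranspose_apply, Complex.ofReal_mul, Complex.normSq_eq_conj_mul_self]
    simp only [RCLike.star_def]
    ring
  have h3 : A j j = _ := (congrFun (congrFun h j) j).trans (e _)
  rw [h2, e, Complex.ofReal_re, h3]
  have hnn : ∀ i, 0 ≤ hA.isHermitian.eigenvalues i ^ α * Complex.normSq (V j i) := fun i =>
    mul_nonneg (Real.rpow_nonneg (hA.eigenvalues_nonneg i) _) (Complex.normSq_nonneg _)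
  refine ⟨Finset.sum_nonneg fun i _ => hnn i, fun h0 => ?_⟩
  rw [Finset.sum_eq_zero_iff_of_nonneg fun i _ => hnn i] at h0
  rw [Finset.sum_eq_zero, Complex.ofReal_zero]
  intro i hi
  rcases mul_eq_zero.1 (h0 i hi) with h | h
  · rw [((Real.rpow_eq_zero_iff_of_nonneg (hA.eigenvalues_nonneg i)).1 h).1, zero_mul]
  · rw [h, mul_zero]

end

theorem mpow_eq_cfc {n : ℕ} {M : Matrix (Fin n) (Fin n) ℂ} (hM : M.IsHermitian) {t : ℝ}
    (ht : 0 < t) : mpow M t = cfc (fun x : ℝ => x ^ t) M := by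
  rw [mpow, dif_pos hM, hM.cfc_eq]
  congr 1
  ext x
  rw [rpow0]
  split_ifs with h
  · rw [h, Real.zero_rpow ht.ne']
  · rfl

/-- For a density matrix `ρ` and positive semi-definite `σ` with `supp ρ ⊆ supp σ`, and any
`α ∈ (0,1)`, the quantum Rényi divergence is bounded above by the `α`-relative Rényi entropy:
`D_α(ρ‖σ) ≤ D̃_α(ρ‖σ)`. -/
theorem renyiDiv_le_relRenyi {n : ℕ} (ρ σ : Matrix (Fin n) (Fin n) ℂ)
    (hρ : ρ.PosSemidef) (hρtr : ρ.trace = 1) (hσ : σ.PosSemidef)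
    (hsupp : msupp ρ ≤ msupp σ) (α : ℝ) (hα : α ∈ Set.Ioo (0 : ℝ) 1) :
    renyiDiv ρ σ α ≤ relRenyi ρ σ α := by
  have h0 := hα.1
  have h1 : 0 < 1 - α := by linarith [hα.2]
  have hβ : 0 < (1 - α) / (2 * α) := by positivity
  obtain ⟨U, hU, h⟩ := exists_diag hσ.isHermitian
  have hU' : U * Uᴴ = 1 := mul_eq_one_comm.mp hU
  have hs := hσ.eigenvalues_nonneg
  set s := hσ.isHermitian.eigenvalues
  have hpow : ∀ t : ℝ, 0 < t → mpow σ t = U * diagonal (fun i => ((s i ^ t : ℝ) : ℂ)) * Uᴴ :=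
    fun t ht => (mpow_eq_cfc hσ.isHermitian ht).trans
      ((congrArg _ h).trans (cfc_conj_diagonal (fun x : ℝ => x ^ t) U hU s))
  set A := Uᴴ * ρ * U with hAdef
  have hA : A.PosSemidef := hρ.conjTranspose_mul_mul_same U
  have hρA : ρ = U * A * Uᴴ := by
    rw [hAdef]
    calc ρ = (U * Uᴴ) * ρ * (U * Uᴴ) := by rw [hU', one_mul, mul_one]
      _ = _ := by simp only [mul_assoc]
  set D : Matrix (Fin n) (Fin n) ℂ :=
    diagonal (fun i => ((s i ^ ((1 - α) / (2 * α)) : ℝ) : ℂ)) with hD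
  have hDh : Dᴴ = D := by
    rw [hD, diagonal_conjTranspose]; congr 1; ext i; simp
  have hC : (D * A * D).PosSemidef := by
    have := hA.mul_mul_conjTranspose_same D
    rwa [hDh] at this
  have hconj : ∀ X Y : Matrix (Fin n) (Fin n) ℂ,
      (U * X * Uᴴ) * (U * Y * Uᴴ) = U * (X * Y) * Uᴴ := fun X Y => by
    calc _ = U * X * (Uᴴ * U) * Y * Uᴴ := by simp only [mul_assoc]
      _ = _ := by rw [hU, mul_one]; simp only [mul_assoc]
  have htr : ∀ X : Matrix (Fin n) (Fin n) ℂ, (U * X * Uᴴ).trace = X.trace := fun X => by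
    rw [trace_mul_comm, ← mul_assoc, hU, one_mul]
  have hQ : (mpow (mpow σ ((1 - α) / (2 * α)) * ρ * mpow σ ((1 - α) / (2 * α))) α).trace.re =
      (cfc (fun x : ℝ => x ^ α) (D * A * D)).trace.re := by
    have e : mpow σ ((1 - α) / (2 * α)) * ρ * mpow σ ((1 - α) / (2 * α)) =
        U * (D * A * D) * Uᴴ := by
      rw [hpow _ hβ, hρA, hconj, hconj]
    rw [e, mpow_eq_cfc (isHermitian_mul_mul_conjTranspose U hC.isHermitian) h0,
      cfc_unitary_conj _ U hU hC.isHermitian, htr]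
  have hT : (mpow ρ α * mpow σ (1 - α)).trace.re =
      ∑ i, (cfc (fun x : ℝ => x ^ α) A i i).re * s i ^ (1 - α) := by
    rw [mpow_eq_cfc hρ.isHermitian h0, hpow _ h1, hρA, cfc_unitary_conj _ U hU hA.isHermitian,
      hconj, htr, trace, Complex.re_sum]
    refine Finset.sum_congr rfl fun i _ => ?_
    rw [diag_apply, mul_diagonal, Complex.re_mul_ofReal]
  have hle := araki_lieb_thirring_diagonal hα hA (fun i => s i ^ ((1 - α) / (2 * α)))
    (fun i => Real.rpow_nonneg (hs i) _)
  have hexp : ∀ i, ((s i ^ ((1 - α) / (2 * α))) ^ 2) ^ α = s i ^ (1 - α) := fun i => by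
    rw [← Real.rpow_natCast, ← Real.rpow_mul (hs i), ← Real.rpow_mul (hs i)]
    congr 1
    push_cast
    field_simp
  simp only [hexp] at hle
  have hnn : ∀ i, 0 ≤ (cfc (fun x : ℝ => x ^ α) A i i).re * s i ^ (1 - α) := fun i =>
    mul_nonneg (diag_rpow_nonneg hA α i).1 (Real.rpow_nonneg (hs i) _)
  -- If this sum vanished, every diagonal entry of `A` would vanish: those with `s i = 0` because
  -- `supp ρ ⊆ supp σ`, the others because `(A^α) i i = 0` forces `A i i = 0`. But `tr A = 1`.
  have hpos : 0 < ∑ i, (cfc (fun x : ℝ => x ^ α) A i i).re * s i ^ (1 - α) := by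
    refine lt_of_le_of_ne (Finset.sum_nonneg fun i _ => hnn i) fun hz => ?_
    have hz' := (Finset.sum_eq_zero_iff_of_nonneg fun i _ => hnn i).1 hz.symm
    have hker : ∀ i, s i = 0 → A i i = 0 := fun i hi => by
      obtain ⟨v, hv⟩ : ρ *ᵥ U.col i ∈ msupp σ := hsupp ⟨U.col i, rfl⟩
      have e1 : A *ᵥ Pi.single i 1 = diagonal (fun i => (s i : ℂ)) *ᵥ (Uᴴ *ᵥ v) := by
        have e2 : A *ᵥ Pi.single i 1 = Uᴴ *ᵥ (ρ *ᵥ U.col i) := by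
          rw [hAdef, ← mulVec_mulVec, ← mulVec_mulVec, mulVec_single_one]
        rw [e2, ← hv, mulVecLin_apply]
        have e3 : σ *ᵥ v = _ := congrArg (fun M => M *ᵥ v) h
        rw [e3, ← mulVec_mulVec, ← mulVec_mulVec, mulVec_mulVec (M := Uᴴ) (N := U), hU, one_mulVec]
      have e4 := congrFun e1 i
      rw [mulVec_single_one, mulVec_diagonal, hi] at e4
      simpa using e4
    have htrA : A.trace = 1 := by rw [← htr, ← hρA, hρtr]
    have : A.trace = 0 := Finset.sum_eq_zero fun i hi => by
      rcases mul_eq_zero.1 (hz' i hi) with hh | hh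
      · exact (diag_rpow_nonneg hA α i).2 hh
      · exact hker i ((Real.rpow_eq_zero_iff_of_nonneg (hs i)).1 hh).1
    rw [htrA] at this
    exact one_ne_zero this
  rw [renyiDiv, relRenyi, hQ, hT]
  exact mul_le_mul_of_nonpos_left (Real.log_le_log hpos hle)
    (inv_nonpos.2 (by linarith))
end
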